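/- arXiv:1404.4648 — 3 statements merged into one kernel-verified Lean document; each statement's English description precedes it below -/
import Mathlib

section
/- Let K be a number field that is Galois over ℚ with cyclic Galois group generated by σ, with ring of integers 𝓞. Every nonzero γ ∈ 𝓞 can be written as γ = n·α where n is a positive rational integer and α ∈ 𝓞 is a visible point for π(γ) = γ/σ(γ); moreover this representation is unique: if n·α = m·α′ with n, m positive integers and α, α′ both visible points for γ/σ(γ), then n = m and α = α′. -/
open NumberField

/-- A nonzero algebraic integer `α` is a *visible point* for `β` (of norm `1`) if
`α / σ α = β` and `|N(α)|` is minimal among nonzero algebraic integers mapping to `β`. -/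
def IsVisiblePoint (K : Type*) [Field K] [NumberField K]
    (σ : K ≃ₐ[ℚ] K) (β : K) (α : 𝓞 K) : Prop :=
  α ≠ 0 ∧ (α : K) / σ (α : K) = β ∧
    ∀ γ : 𝓞 K, γ ≠ 0 → (γ : K) / σ (γ : K) = β →
      (Algebra.norm ℤ α).natAbs ≤ (Algebra.norm ℤ γ).natAbs

theorem aux_div (K : Type*) [Field K] [NumberField K] (σ : K ≃ₐ[ℚ] K) (q : ℤ) (hq : q ≠ 0)
    (δ : 𝓞 K) :
    (((q : 𝓞 K) * δ : 𝓞 K) : K) / σ (((q : 𝓞 K) * δ : 𝓞 K) : K) = (δ : K) / σ (δ : K) := by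
  have hq' : (q : K) ≠ 0 := by exact_mod_cast hq
  simp only [map_mul, map_intCast]
  exact mul_div_mul_left _ _ hq'

theorem aux_norm (K : Type*) [Field K] [NumberField K] (q : ℤ) (δ : 𝓞 K) :
    (Algebra.norm ℤ ((q : 𝓞 K) * δ)).natAbs
      = q.natAbs ^ (Module.finrank ℤ (𝓞 K)) * (Algebra.norm ℤ δ).natAbs := by
  have h : Algebra.norm ℤ (q : 𝓞 K) = q ^ (Module.finrank ℤ (𝓞 K)) := by
    simpa using Algebra.norm_algebraMap (S := 𝓞 K) q
  rw [map_mul, Int.natAbs_mul, h, Int.natAbs_pow]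

theorem aux_fd (K : Type*) [Field K] [NumberField K] : Module.finrank ℤ (𝓞 K) ≠ 0 := by
  rw [RingOfIntegers.rank]
  exact Module.finrank_pos.ne'

theorem aux_fixed (K : Type*) [Field K] [NumberField K] [IsGalois ℚ K]
    (σ : K ≃ₐ[ℚ] K) (hσ : ∀ τ : K ≃ₐ[ℚ] K, τ ∈ Subgroup.zpowers σ)
    (x : K) (hx : σ x = x) : ∃ r : ℚ, (r : K) = x := by
  have h : ∀ τ : K ≃ₐ[ℚ] K, τ x = x := by
    intro τ
    have h1 : Subgroup.zpowers σ ≤ MulAction.stabilizer (K ≃ₐ[ℚ] K) x := by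
      rw [Subgroup.zpowers_le]
      exact hx
    exact h1 (hσ τ)
  obtain ⟨r, hr⟩ := (IsGalois.mem_range_algebraMap_iff_fixed x).2 h
  exact ⟨r, by simpa using hr⟩

theorem aux_exists (K : Type*) [Field K] [NumberField K] (σ : K ≃ₐ[ℚ] K)
    (γ : 𝓞 K) (hγ : γ ≠ 0) : ∃ α, IsVisiblePoint K σ ((γ : K) / σ (γ : K)) α := by
  let S : Set (𝓞 K) := {α | α ≠ 0 ∧ (α : K) / σ (α : K) = (γ : K) / σ (γ : K)}
  have hS : S.Nonempty := ⟨γ, hγ, rfl⟩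
  let f : 𝓞 K → ℕ := fun α => (Algebra.norm ℤ α).natAbs
  have hm := Function.argminOn_mem f S hS
  exact ⟨Function.argminOn f S hS, hm.1, hm.2, fun g h1 h2 =>
    Function.argminOn_le f S (a := g) ⟨h1, h2⟩⟩

theorem aux_int (K : Type*) [Field K] [NumberField K] [IsGalois ℚ K]
    (σ : K ≃ₐ[ℚ] K) (hσ : ∀ τ : K ≃ₐ[ℚ] K, τ ∈ Subgroup.zpowers σ)
    (γ : 𝓞 K) (hγ : γ ≠ 0) (α : 𝓞 K) (h : IsVisiblePoint K σ ((γ : K) / σ (γ : K)) α) :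
    ∃ a : ℤ, a ≠ 0 ∧ γ = (a : 𝓞 K) * α := by
  obtain ⟨h0, h1, h2⟩ := h
  have hγK : (γ : K) ≠ 0 := by simpa using hγ
  have hαK : (α : K) ≠ 0 := by simpa using h0
  have hσγ : σ (γ : K) ≠ 0 := by simpa using hγ
  have hσα : σ (α : K) ≠ 0 := by simpa using h0
  obtain ⟨r, hr⟩ := aux_fixed K σ hσ ((γ : K) / (α : K)) (by
    rw [map_div₀]
    rw [div_eq_div_iff hσα hσγ] at h1
    rw [div_eq_div_iff hσα hαK]
    linear_combination h1)
  have hden : (r.den : K) ≠ 0 := by exact_mod_cast r.den_ne_zero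
  have e : ((r.den : ℤ) : 𝓞 K) * γ = (r.num : 𝓞 K) * α := by
    apply RingOfIntegers.ext
    simp only [map_mul, map_intCast]
    rw [Rat.cast_def, div_eq_div_iff hden hαK] at hr
    push_cast
    linear_combination -hr
  have hcop : IsCoprime r.num (r.den : ℤ) := by
    rw [Int.isCoprime_iff_nat_coprime]
    simpa using r.reduced
  obtain ⟨u, v, huv⟩ := hcop
  have huv' : (u : 𝓞 K) * (r.num : 𝓞 K) + (v : 𝓞 K) * ((r.den : ℤ) : 𝓞 K) = 1 := by
    exact_mod_cast congrArg (Int.cast : ℤ → 𝓞 K) huv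
  have hα : α = ((r.den : ℤ) : 𝓞 K) * ((u : 𝓞 K) * γ + (v : 𝓞 K) * α) := by
    linear_combination (-α) * huv' - (u : 𝓞 K) * e
  generalize (u : 𝓞 K) * γ + (v : 𝓞 K) * α = δ at hα
  have hd0 : (r.den : ℤ) ≠ 0 := by exact_mod_cast r.den_ne_zero
  have hδ0 : δ ≠ 0 := by
    rintro rfl
    exact h0 (by simpa using hα)
  have hle := h2 δ hδ0 (by rw [← h1, hα, aux_div K σ _ hd0])
  rw [hα, aux_norm] at hle
  have hpos : 0 < (Algebra.norm ℤ δ).natAbs := by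
    rw [Int.natAbs_pos]
    exact (Algebra.norm_ne_zero_iff).2 hδ0
  have h1le : r.den ^ (Module.finrank ℤ (𝓞 K)) ≤ 1 := by
    by_contra hc
    push Not at hc
    rw [Int.natAbs_natCast] at hle
    nlinarith
  have hden1 : r.den = 1 := by
    by_contra hc
    have : 1 < r.den := by have := r.den_pos; omega
    exact absurd (Nat.one_lt_pow (aux_fd K) this) (by omega)
  refine ⟨r.num, ?_, ?_⟩
  · intro hn
    rw [hn, hden1] at e
    exact hγ (by simpa using e)
  · simpa [hden1] using e

theorem aux_neg (K : Type*) [Field K] [NumberField K] (σ : K ≃ₐ[ℚ] K) (β : K) (α : 𝓞 K)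
    (h : IsVisiblePoint K σ β α) : IsVisiblePoint K σ β (-α) := by
  have e : -α = ((-1 : ℤ) : 𝓞 K) * α := by simp
  refine ⟨neg_ne_zero.2 h.1, ?_, ?_⟩
  · rw [e, aux_div K σ _ (by norm_num)]; exact h.2.1
  · rw [e, aux_norm]; simpa using h.2.2

theorem aux_pos (K : Type*) [Field K] [NumberField K] [IsGalois ℚ K]
    (σ : K ≃ₐ[ℚ] K) (hσ : ∀ τ : K ≃ₐ[ℚ] K, τ ∈ Subgroup.zpowers σ)
    (γ : 𝓞 K) (hγ : γ ≠ 0) :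
    ∃ (n : ℕ) (α : 𝓞 K), 0 < n ∧ IsVisiblePoint K σ ((γ : K) / σ (γ : K)) α ∧
      γ = (n : 𝓞 K) * α := by
  obtain ⟨α, hα⟩ := aux_exists K σ γ hγ
  obtain ⟨a, ha, e⟩ := aux_int K σ hσ γ hγ α hα
  obtain ⟨n, rfl | rfl⟩ := a.eq_nat_or_neg
  · exact ⟨n, α, by omega, hα, by simpa using e⟩
  · exact ⟨n, -α, by omega, aux_neg K σ _ α hα, by simpa using e⟩

/-- Every nonzero algebraic integer `γ` is uniquely `γ = n • α` with `n` a
positive rational integer and `α` a visible point for `γ / σ γ`. -/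
theorem exists_unique_visible_decomposition
    (K : Type*) [Field K] [NumberField K] [IsGalois ℚ K]
    (σ : K ≃ₐ[ℚ] K) (hσ : ∀ τ : K ≃ₐ[ℚ] K, τ ∈ Subgroup.zpowers σ)
    (γ : 𝓞 K) (hγ : γ ≠ 0) :
    ∃ (n : ℕ) (α : 𝓞 K), 0 < n ∧ IsVisiblePoint K σ ((γ : K) / σ (γ : K)) α ∧
      γ = (n : 𝓞 K) * α ∧
      ∀ (m : ℕ) (α' : 𝓞 K), 0 < m → IsVisiblePoint K σ ((γ : K) / σ (γ : K)) α' →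
        γ = (m : 𝓞 K) * α' → n = m ∧ α = α' := by
  obtain ⟨n, α, hn, hα, e⟩ := aux_pos K σ hσ γ hγ
  refine ⟨n, α, hn, hα, e, ?_⟩
  intro m α' hm hα' e'
  have hN : (Algebra.norm ℤ α).natAbs = (Algebra.norm ℤ α').natAbs :=
    le_antisymm (hα.2.2 α' hα'.1 hα'.2.1) (hα'.2.2 α hα.1 hα.2.1)
  have hpos : 0 < (Algebra.norm ℤ α').natAbs := by
    rw [Int.natAbs_pos]
    exact (Algebra.norm_ne_zero_iff).2 hα'.1
  have h1 := aux_norm K n α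
  have h2 := aux_norm K m α'
  rw [Int.cast_natCast, ← e, Int.natAbs_natCast, hN] at h1
  rw [Int.cast_natCast, ← e', h1, Int.natAbs_natCast] at h2
  have h3 := Nat.eq_of_mul_eq_mul_right hpos h2
  have hnm : n = m := Nat.pow_left_injective (aux_fd K) h3
  subst hnm
  refine ⟨rfl, ?_⟩
  have hn0 : (n : 𝓞 K) ≠ 0 := by exact_mod_cast hn.ne'
  exact mul_left_cancel₀ hn0 (e.symm.trans e')
end

section
/- Let K be a number field that is Galois over ℚ with cyclic Galois group generated by σ, with ring of integers 𝓞 and unit group U. For every real r > 0, the set Ñ(r) of classes β̃ ∈ Ñ with h(β̃) < r is finite, where Ñ = log 𝒩 / log U and h(β̃) = min{|N_{K/ℚ}(α)| : α ∈ 𝓞 nonzero, the class of log π(α) modulo log U equals β̃}. -/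
open NumberField

/-- The logarithmic embedding `β ↦ (log ‖β‖_v)_{v | ∞}`, where `‖·‖_v` is the usual absolute
value at a real place and its square at a complex place. -/
noncomputable def logMap (K : Type*) [Field K] [NumberField K] (β : K) :
    InfinitePlace K → ℝ :=
  fun w => Real.log ((w β) ^ w.mult)

/-- The kernel of the coordinate-sum map `Σ : ℝ^{r₁+r₂} → ℝ`. -/
noncomputable def sumKer (K : Type*) [Field K] [NumberField K] :
    AddSubgroup (InfinitePlace K → ℝ) where
  carrier := {x | ∑ w, x w = 0}
  add_mem' := by
    intro a b ha hb
    simp only [Set.mem_setOf_eq, Pi.add_apply] at *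
    rw [Finset.sum_add_distrib, ha, hb, add_zero]
  zero_mem' := by simp
  neg_mem' := by
    intro a ha
    simp only [Set.mem_setOf_eq, Pi.neg_apply] at *
    rw [Finset.sum_neg_distrib, ha, neg_zero]

/-- The image `log U` of the unit group under the logarithmic embedding, as a subgroup of
`ker Σ` (a lattice therein, by Dirichlet's unit theorem). -/
noncomputable def logUnits (K : Type*) [Field K] [NumberField K] :
    AddSubgroup (sumKer K) :=
  AddSubgroup.closure
    {x : sumKer K | ∃ u : (𝓞 K)ˣ, (x : InfinitePlace K → ℝ) = logMap K ((u : 𝓞 K) : K)}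

/-- The torus `T = ker Σ / log U`. -/
noncomputable abbrev Torus (K : Type*) [Field K] [NumberField K] :=
  sumKer K ⧸ logUnits K

/-- `Ñ = log 𝒩 / log U ⊆ T`, the image of the norm-one elements of `K` in `T`. -/
noncomputable def Ntilde (K : Type*) [Field K] [NumberField K] : Set (Torus K) :=
  {t | ∃ β : K, Algebra.norm ℚ β = 1 ∧ ∃ hb : logMap K β ∈ sumKer K,
    t = QuotientAddGroup.mk (⟨logMap K β, hb⟩ : sumKer K)}

/-- The height `h(β̃)` of a class `t ∈ T`: the least value of `|N(α)|` over nonzero algebraic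
integers `α` with `log π(α) ≡ t (mod log U)`, where `π(α) = α / σ(α)`. -/
noncomputable def hclass (K : Type*) [Field K] [NumberField K]
    (σ : K ≃ₐ[ℚ] K) (t : Torus K) : ℕ :=
  sInf {m : ℕ | ∃ γ : 𝓞 K, γ ≠ 0 ∧ m = (Algebra.norm ℤ γ).natAbs ∧
    ∃ hg : logMap K ((γ : K) / σ (γ : K)) ∈ sumKer K,
      QuotientAddGroup.mk (⟨logMap K ((γ : K) / σ (γ : K)), hg⟩ : sumKer K) = t}

theorem logMap_mul_aux (K : Type*) [Field K] [NumberField K] {a b : K} (ha : a ≠ 0) (hb : b ≠ 0) :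
    logMap K (a * b) = logMap K a + logMap K b := by
  funext w
  simp only [logMap, map_mul, mul_pow, Pi.add_apply]
  exact Real.log_mul (pow_ne_zero _ ((map_ne_zero _).mpr ha))
    (pow_ne_zero _ ((map_ne_zero _).mpr hb))

theorem hilbert90_aux
    (K : Type*) [Field K] [NumberField K] [IsGalois ℚ K]
    (σ : K ≃ₐ[ℚ] K) (hσ : ∀ τ : K ≃ₐ[ℚ] K, τ ∈ Subgroup.zpowers σ)
    (β : K) (hβ : Algebra.norm ℚ β = 1) : ∃ y : Kˣ, (y : K) / σ y = β := by
  let φ : K →ₐ[ℚ] ℂ := IsAlgClosed.lift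
  let e : K ≃ₐ[ℚ] φ.fieldRange := AlgEquiv.ofInjectiveField φ
  have : IsGalois ℚ φ.fieldRange := IsGalois.of_algEquiv e
  have : FiniteDimensional ℚ φ.fieldRange := e.toLinearEquiv.finiteDimensional
  have hg : ∀ x, x ∈ Subgroup.zpowers (AlgEquiv.autCongr e σ) := by
    intro x
    obtain ⟨n, hn⟩ := hσ ((AlgEquiv.autCongr e).symm x)
    refine ⟨n, ?_⟩
    change _ ^ n = x
    change σ ^ n = _ at hn
    rw [← map_zpow, hn, MulEquiv.apply_symm_apply]
  have : IsCyclic (φ.fieldRange ≃ₐ[ℚ] φ.fieldRange) := ⟨_, hg⟩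
  obtain ⟨y, hy⟩ := groupCohomology.exists_div_of_norm_eq_one hg (x := e β)
    (by rw [Algebra.norm_eq_of_algEquiv, hβ])
  refine ⟨Units.mk0 (e.symm y) (by simp), ?_⟩
  apply e.injective
  rw [← hy]
  simp [AlgEquiv.autCongr]
  rfl

theorem hclass_attained_aux
    (K : Type*) [Field K] [NumberField K] [IsGalois ℚ K]
    (σ : K ≃ₐ[ℚ] K) (hσ : ∀ τ : K ≃ₐ[ℚ] K, τ ∈ Subgroup.zpowers σ)
    (t : Torus K) (ht : t ∈ Ntilde K) :
    ∃ γ : 𝓞 K, γ ≠ 0 ∧ hclass K σ t = (Algebra.norm ℤ γ).natAbs ∧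
    ∃ hg : logMap K ((γ : K) / σ (γ : K)) ∈ sumKer K,
      QuotientAddGroup.mk (⟨logMap K ((γ : K) / σ (γ : K)), hg⟩ : sumKer K) = t := by
  unfold hclass
  refine Nat.sInf_mem (s := {m : ℕ | ∃ γ : 𝓞 K, γ ≠ 0 ∧ m = (Algebra.norm ℤ γ).natAbs ∧
    ∃ hg : logMap K ((γ : K) / σ (γ : K)) ∈ sumKer K,
      QuotientAddGroup.mk (⟨logMap K ((γ : K) / σ (γ : K)), hg⟩ : sumKer K) = t}) ?_
  obtain ⟨β, hβ, hb, rfl⟩ := ht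
  obtain ⟨y, hy⟩ := hilbert90_aux K σ hσ β hβ
  have hal : IsAlgebraic ℤ (y : K) :=
    (IsFractionRing.isAlgebraic_iff ℤ ℚ K).mpr (Algebra.IsAlgebraic.isAlgebraic _)
  obtain ⟨d, hd, hint⟩ := hal.exists_integral_multiple
  have hd' : (d : K) ≠ 0 := by exact_mod_cast hd
  have key : (d • (y : K)) / σ (d • (y : K)) = β := by
    rw [← hy, zsmul_eq_mul, map_mul, map_intCast, mul_div_mul_left _ _ hd']
  refine ⟨_, ⟨d • (y : K), hint⟩, ?_, rfl, ?_⟩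
  · intro h
    have := congrArg (algebraMap (𝓞 K) K) h
    rw [map_zero] at this
    change d • (y : K) = 0 at this
    simp [hd] at this
  · change ∃ hg : logMap K ((d • (y : K)) / σ (d • (y : K))) ∈ sumKer K,
      QuotientAddGroup.mk (⟨logMap K ((d • (y : K)) / σ (d • (y : K))), hg⟩ : sumKer K) = _
    simp only [key]
    exact ⟨hb, trivial⟩

/-- For every `r > 0`, the set `Ñ(r)` of classes `β̃ ∈ Ñ` with `h(β̃) < r`
is finite. -/
theorem ntilde_lt_finite
    (K : Type*) [Field K] [NumberField K] [IsGalois ℚ K]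
    (σ : K ≃ₐ[ℚ] K) (hσ : ∀ τ : K ≃ₐ[ℚ] K, τ ∈ Subgroup.zpowers σ)
    (r : ℝ) (hr : 0 < r) :
    {t : Torus K | t ∈ Ntilde K ∧ (hclass K σ t : ℝ) < r}.Finite := by
  have H := fun t : {t : Torus K // t ∈ Ntilde K} => hclass_attained_aux K σ hσ t.1 t.2
  choose g hg0 hgn hgm hgt using H
  let f : Torus K → Ideal (𝓞 K) := by
    classical
    exact fun t => if h : t ∈ Ntilde K then Ideal.span {g ⟨t, h⟩} else ⊥
  have hf : ∀ t (h : t ∈ Ntilde K), f t = Ideal.span {g ⟨t, h⟩} := fun t h => by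
    simp only [f, dif_pos h]
  refine Set.Finite.of_finite_image (f := f) ?_ ?_
  · refine (Ideal.finite_setOfPred_absNorm_le (S := 𝓞 K) ⌈r⌉₊).subset ?_
    rintro _ ⟨t, ⟨ht, hlt⟩, rfl⟩
    change Ideal.absNorm (f t) ≤ _
    rw [hf t ht, Ideal.absNorm_span_singleton, ← hgn ⟨t, ht⟩]
    exact_mod_cast hlt.le.trans (Nat.le_ceil r)
  · rintro t ⟨ht, -⟩ s ⟨hs, -⟩ hts
    rw [hf t ht, hf s hs, Ideal.span_singleton_eq_span_singleton] at hts
    obtain ⟨u, hu⟩ := hts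
    refine (hgt ⟨t, ht⟩).symm.trans (Eq.trans ?_ (hgt ⟨s, hs⟩))
    rw [QuotientAddGroup.eq]
    apply AddSubgroup.subset_closure
    let σ' : (𝓞 K)ˣ →* (𝓞 K)ˣ :=
      Units.map (RingOfIntegers.mapRingEquiv σ.toRingEquiv : 𝓞 K →* 𝓞 K)
    refine ⟨u * (σ' u)⁻¹, ?_⟩
    have h0 : ((g ⟨t, ht⟩ : 𝓞 K) : K) ≠ 0 := by
      simpa using hg0 ⟨t, ht⟩
    have hu0 : ((u : 𝓞 K) : K) ≠ 0 := by simp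
    have hs' : ((g ⟨s, hs⟩ : 𝓞 K) : K) = (g ⟨t, ht⟩ : K) * (u : 𝓞 K) := by
      rw [← hu]; simp
    have hσu : (((u * (σ' u)⁻¹ : (𝓞 K)ˣ) : 𝓞 K) : K) = ((u : 𝓞 K) : K) / σ ((u : 𝓞 K) : K) := by
      have h1 : ((σ' u : 𝓞 K) : K) = σ ((u : 𝓞 K) : K) := rfl
      have h2 : (((σ' u)⁻¹ : (𝓞 K)ˣ) : 𝓞 K) * (σ' u : 𝓞 K) = 1 := by simp
      have h3 : ((((σ' u)⁻¹ : (𝓞 K)ˣ) : 𝓞 K) : K) * σ ((u : 𝓞 K) : K) = 1 := by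
        rw [← h1]
        exact (map_mul (algebraMap (𝓞 K) K) _ _).symm.trans (by rw [h2, map_one])
      have h6 : (((u * (σ' u)⁻¹ : (𝓞 K)ˣ) : 𝓞 K) : K) =
          ((u : 𝓞 K) : K) * ((((σ' u)⁻¹ : (𝓞 K)ˣ) : 𝓞 K) : K) :=
        map_mul (algebraMap (𝓞 K) K) _ _
      rw [h6, eq_div_iff (by simp), mul_assoc, h3, mul_one]
    rw [hσu]
    have h4 : (g ⟨s, hs⟩ : K) / σ (g ⟨s, hs⟩ : K) = ((g ⟨t, ht⟩ : K) / σ (g ⟨t, ht⟩ : K)) *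
        (((u : 𝓞 K) : K) / σ ((u : 𝓞 K) : K)) := by
      rw [hs', map_mul, mul_div_mul_comm]
    have h5 := logMap_mul_aux K (a := (g ⟨t, ht⟩ : K) / σ (g ⟨t, ht⟩ : K))
      (b := ((u : 𝓞 K) : K) / σ ((u : 𝓞 K) : K))
      (div_ne_zero h0 (by simpa using h0)) (div_ne_zero hu0 (by simpa using hu0))
    rw [← h4] at h5
    change -logMap K _ + logMap K _ = _
    rw [h5, neg_add_cancel_left]
end

section
/- Let K be a number field that is Galois over ℚ with cyclic Galois group generated by σ, and let T = ker Σ / log U, a compact abelian topological group. For every nontrivial continuous character χ : T → 𝕋 (the unit circle), the Weyl sum over classes of bounded height satisfies Σ_{β̃ ∈ Ñ(r)} χ(β̃) = o(r) as r → ∞. -/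
open NumberField

namespace WS
open NumberField InfinitePlace

variable {K : Type*} [Field K] [NumberField K]

lemma coe_mul' (a b : 𝓞 K) : ((a * b : 𝓞 K) : K) = (a : K) * (b : K) := rfl

/-- places permutation -/
noncomputable def placeEquiv (σ : K ≃ₐ[ℚ] K) : InfinitePlace K ≃ InfinitePlace K where
  toFun w := w.comap (σ : K →+* K)
  invFun w := w.comap (σ.symm : K →+* K)
  left_inv w := by
    ext x; simp [InfinitePlace.comap_apply]
  right_inv w := by
    ext x; simp [InfinitePlace.comap_apply]

lemma placeEquiv_apply (σ : K ≃ₐ[ℚ] K) (w : InfinitePlace K) (x : K) :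
    placeEquiv σ w x = w (σ x) := rfl

lemma mult_placeEquiv (σ : K ≃ₐ[ℚ] K) (w : InfinitePlace K) :
    (placeEquiv σ w).mult = w.mult := by
  have : (placeEquiv σ w).IsReal ↔ w.IsReal :=
    InfinitePlace.isReal_comap_iff (σ : K ≃+* K)
  unfold InfinitePlace.mult
  by_cases h : w.IsReal
  · rw [if_pos h, if_pos (this.mpr h)]
  · rw [if_neg h, if_neg (fun h' => h (this.mp h'))]

/-- `y ↦ y - σ y` into `ker Σ`. -/
noncomputable def dmap (σ : K ≃ₐ[ℚ] K) (y : InfinitePlace K → ℝ) : sumKer K :=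
  ⟨fun w => y w - y (placeEquiv σ w), by
    change ∑ w, (y w - y (placeEquiv σ w)) = 0
    rw [Finset.sum_sub_distrib, Equiv.sum_comp (placeEquiv σ) y, sub_self]⟩

lemma dmap_coe (σ : K ≃ₐ[ℚ] K) (y : InfinitePlace K → ℝ) (w) :
    (dmap σ y : InfinitePlace K → ℝ) w = y w - y (placeEquiv σ w) := rfl

lemma dmap_add (σ : K ≃ₐ[ℚ] K) (y z : InfinitePlace K → ℝ) :
    dmap σ (y + z) = dmap σ y + dmap σ z := by
  apply Subtype.ext; funext w
  simp [dmap_coe]; ring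

lemma continuous_dmap (σ : K ≃ₐ[ℚ] K) : Continuous (dmap σ) := by
  unfold dmap
  fun_prop

lemma logMap_mul {a b : K} (ha : a ≠ 0) (hb : b ≠ 0) :
    logMap K (a * b) = logMap K a + logMap K b := by
  funext w
  simp only [logMap, Pi.add_apply, map_mul, mul_pow]
  rw [Real.log_mul] <;> simp [ha, hb]

lemma logMap_div {a b : K} (ha : a ≠ 0) (hb : b ≠ 0) :
    logMap K (a / b) = logMap K a - logMap K b := by
  rw [eq_sub_iff_add_eq, ← logMap_mul (div_ne_zero ha hb) hb, div_mul_cancel₀ _ hb]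

lemma logMap_conj (σ : K ≃ₐ[ℚ] K) (a : K) (w) :
    logMap K (σ a) w = logMap K a (placeEquiv σ w) := by
  simp only [logMap, placeEquiv_apply, mult_placeEquiv]

lemma dmap_logMap (σ : K ≃ₐ[ℚ] K) {a : K} (ha : a ≠ 0) :
    (dmap σ (logMap K a) : InfinitePlace K → ℝ) = logMap K (a / σ a) := by
  rw [logMap_div ha (by simpa using ha)]
  funext w
  simp [dmap_coe, logMap_conj]

/-- class of `log π(a)` in the torus -/
noncomputable def tcl (σ : K ≃ₐ[ℚ] K) (a : K) : Torus K :=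
  QuotientAddGroup.mk (dmap σ (logMap K a))

lemma tcl_mul (σ : K ≃ₐ[ℚ] K) {a b : K} (ha : a ≠ 0) (hb : b ≠ 0) :
    tcl σ (a * b) = tcl σ a + tcl σ b := by
  unfold tcl
  rw [logMap_mul ha hb, dmap_add, QuotientAddGroup.mk_add]

lemma tcl_eq_mk (σ : K ≃ₐ[ℚ] K) {a : K} (ha : a ≠ 0)
    (h : logMap K (a / σ a) ∈ sumKer K) :
    (QuotientAddGroup.mk (⟨logMap K (a / σ a), h⟩ : sumKer K) : Torus K) = tcl σ a := by
  unfold tcl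
  congr 1
  apply Subtype.ext
  exact (dmap_logMap σ ha).symm

lemma logMap_div_mem (σ : K ≃ₐ[ℚ] K) {a : K} (ha : a ≠ 0) :
    logMap K (a / σ a) ∈ sumKer K := by
  rw [← dmap_logMap σ ha]; exact (dmap σ _).2

lemma mem_logUnits_iff (x : sumKer K) : x ∈ logUnits K ↔
    ∃ u : (𝓞 K)ˣ, (x : InfinitePlace K → ℝ) = logMap K ((u : 𝓞 K) : K) := by
  have hne : ∀ u : (𝓞 K)ˣ, ((u : 𝓞 K) : K) ≠ 0 := fun u => by simp
  constructor
  · intro h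
    unfold logUnits at h
    induction h using AddSubgroup.closure_induction with
    | mem x hx => exact hx
    | zero => exact ⟨1, by funext w; simp [logMap]⟩
    | add x y _ _ hx hy =>
      obtain ⟨u, hu⟩ := hx
      obtain ⟨v, hv⟩ := hy
      refine ⟨u * v, ?_⟩
      have : (((u * v : (𝓞 K)ˣ) : 𝓞 K) : K) = ((u : 𝓞 K) : K) * ((v : 𝓞 K) : K) := by simp
      rw [this, logMap_mul (hne _) (hne _), ← hu, ← hv]; rfl
    | neg x _ hx =>
      obtain ⟨u, hu⟩ := hx
      refine ⟨u⁻¹, ?_⟩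
      have h1 : ((u : 𝓞 K) : K) * (((u⁻¹ : (𝓞 K)ˣ) : 𝓞 K) : K) = 1 := by
        rw [← map_mul]; simp
      have h2 := logMap_mul (hne u) (hne u⁻¹)
      rw [h1] at h2
      have h3 : logMap K (1 : K) = 0 := by funext w; simp [logMap]
      rw [h3, ← hu] at h2
      exact (neg_eq_of_add_eq_zero_right h2.symm)
  · rintro ⟨u, hu⟩
    exact AddSubgroup.subset_closure ⟨u, hu⟩

lemma tcl_unit (σ : K ≃ₐ[ℚ] K) (u : (𝓞 K)ˣ) : tcl σ ((u : 𝓞 K) : K) = 0 := by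
  unfold tcl
  rw [QuotientAddGroup.eq_zero_iff, mem_logUnits_iff]
  have hne : ((u : 𝓞 K) : K) ≠ 0 := by simp
  rw [dmap_logMap σ hne]
  refine ⟨u * (Units.map (RingOfIntegers.mapRingEquiv (σ : K ≃+* K) : 𝓞 K →* 𝓞 K) u)⁻¹, ?_⟩
  congr 1
  rw [div_eq_iff (by simp), Units.val_mul, coe_mul', mul_assoc]
  have : ((Units.map (RingOfIntegers.mapRingEquiv (σ : K ≃+* K) : 𝓞 K →* 𝓞 K) u : (𝓞 K)ˣ) : K)
      = σ ((u : 𝓞 K) : K) := rfl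
  rw [← this, ← coe_mul']
  simp

lemma tcl_assoc (σ : K ≃ₐ[ℚ] K) {a b : 𝓞 K} (ha : a ≠ 0) (h : Associated a b) :
    tcl σ (b : K) = tcl σ (a : K) := by
  obtain ⟨u, rfl⟩ := h
  rw [coe_mul', tcl_mul σ (by simpa using ha) (by simp), tcl_unit, add_zero]

open Classical in
/-- torus class of a principal ideal -/
noncomputable def tI (σ : K ≃ₐ[ℚ] K) (I : Ideal (𝓞 K)) : Torus K :=
  if h : I.IsPrincipal then tcl σ ((h.generator I : 𝓞 K) : K) else 0

lemma tI_span (σ : K ≃ₐ[ℚ] K) {a : 𝓞 K} (ha : a ≠ 0) :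
    tI σ (Ideal.span {a}) = tcl σ (a : K) := by
  unfold tI
  have h : (Ideal.span {a}).IsPrincipal := ⟨⟨a, rfl⟩⟩
  rw [dif_pos h]
  refine tcl_assoc σ ha ?_
  rw [← Ideal.span_singleton_eq_span_singleton]
  exact (Submodule.IsPrincipal.span_singleton_generator (Ideal.span {a})).symm

end WS

namespace WS
open NumberField InfinitePlace MeasureTheory Filter Topology Module
open scoped Pointwise

section lattice
open ZLattice Bornology

theorem tendsto_lattice_sum {E : Type*} [NormedAddCommGroup E]
    [InnerProductSpace ℝ E] [FiniteDimensional ℝ E] [MeasurableSpace E] [BorelSpace E]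
    (L : Submodule ℤ E) [DiscreteTopology L] [IsZLattice ℝ L]
    {s : Set E} (hs₁ : IsBounded s) (hs₂ : MeasurableSet s)
    (hs₃ : volume (frontier s) = 0) {F : E → ℝ} (hF : Continuous F) :
    Tendsto (fun n : ℕ ↦ (∑' x : ↑(s ∩ (n : ℝ)⁻¹ • (L : Set E)), F x) / (n : ℝ) ^ finrank ℝ E)
      atTop (𝓝 ((∫ x in s, F x) / covolume L)) := by
  classical
  let b := Module.Free.chooseBasis ℤ L
  have hcard : Fintype.card (Module.Free.ChooseBasisIndex ℤ L) = finrank ℝ E := by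
    rw [← Module.finrank_eq_card_chooseBasisIndex, ZLattice.rank ℝ L]
  let e := (b.ofZLatticeBasis ℝ L).equivFun
  let eL := (b.ofZLatticeBasis ℝ L).equivFunL
  let eM := eL.toHomeomorph.toMeasurableEquiv
  have heM : ∀ x, eM x = e x := fun x => rfl
  have h3 : volume (frontier (e '' s)) = 0 := by
    have h := volume_image_eq_volume_div_covolume' L b (s := frontier s)
      measurableSet_frontier.nullMeasurableSet
    rw [hs₃, ENNReal.zero_div] at h
    have h' : frontier (e '' s) = e '' frontier s :=
      (eL.toHomeomorph.image_frontier s).symm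
    rw [h']; exact h
  have hmap : Measure.map eM.symm volume
      = (ENNReal.ofReal (covolume L))⁻¹ • (volume : Measure E) := by
    ext t ht
    rw [MeasurableEquiv.map_apply, Measure.smul_apply, smul_eq_mul]
    have h := volume_image_eq_volume_div_covolume' L b (s := t) ht.nullMeasurableSet
    rw [← MeasurableEquiv.image_eq_preimage_symm]
    rw [mul_comm, ← div_eq_mul_inv, ← h]
    rfl
  have hint : ∫ y in e '' s, F (e.symm y) = (∫ x in s, F x) / covolume L := by
    have h1 : e '' s = eM.symm ⁻¹' s := by
      rw [← MeasurableEquiv.image_eq_preimage_symm]; rfl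
    have h2 := eM.symm.measurableEmbedding.setIntegral_map (μ := volume) F s
    rw [h1]
    refine Eq.trans h2.symm ?_
    rw [hmap, Measure.restrict_smul, integral_smul_measure, ENNReal.toReal_inv,
      ENNReal.toReal_ofReal (covolume_pos L volume).le, smul_eq_mul]
    ring
  rw [← hint, ← hcard]
  refine Tendsto.congr' ?_ (tendsto_tsum_div_pow_atTop_integral (e '' s) (fun y => F (e.symm y))
    (hF.comp eL.symm.continuous) ?_ ?_ h3)
  · filter_upwards [eventually_gt_atTop 0] with n hn
    congr 1
    refine ((e.toEquiv.subtypeEquiv fun x ↦ ?_).tsum_eq _).symm.trans (tsum_congr fun x => ?_)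
    · simp_rw [Set.mem_inter_iff, ← b.ofZLatticeBasis_span ℝ, LinearEquiv.coe_toEquiv, e,
        Basis.equivFun_apply, Set.mem_image, DFunLike.coe_fn_eq, EmbeddingLike.apply_eq_iff_eq,
        exists_eq_right, and_congr_right_iff, Set.mem_inv_smul_set_iff₀
        (mod_cast hn.ne' : (n : ℝ) ≠ 0), ← Finsupp.coe_smul, ← map_smul, SetLike.mem_coe,
        Basis.mem_span_iff_repr_mem, Pi.basisFun_repr, implies_true]
    · simp
  · rw [← NormedSpace.isVonNBounded_iff ℝ] at hs₁ ⊢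
    exact Bornology.IsVonNBounded.image hs₁ (eL : E →L[ℝ] (Module.Free.ChooseBasisIndex ℤ L → ℝ))
  · exact eM.measurableSet_image.mpr hs₂
end lattice

section nf
variable (K : Type*) [Field K] [NumberField K]
open mixedEmbedding euclidean fundamentalCone
open scoped nonZeroDivisors Classical

theorem tendsto_ideal_sum (J : (Ideal (𝓞 K))⁰) {F : mixedEmbedding.mixedSpace K → ℝ}
    (hF : Continuous F) :
    Tendsto (fun n : ℕ ↦ (∑' x : ↑(normLeOne K ∩ (n : ℝ)⁻¹ •
        (mixedEmbedding.idealLattice K (FractionalIdeal.mk0 K J) : Set (mixedEmbedding.mixedSpace K))), F x)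
          / (n : ℝ) ^ finrank ℚ K)
      atTop (𝓝 ((∫ x in normLeOne K, F x) /
        (ZLattice.covolume (mixedEmbedding.idealLattice K (FractionalIdeal.mk0 K 1))
          * Ideal.absNorm (J : Ideal (𝓞 K))))) := by
  have h := tendsto_lattice_sum (ZLattice.comap ℝ
    (mixedEmbedding.idealLattice K (FractionalIdeal.mk0 K J)) (toMixed K).toLinearMap)
    (s := toMixed K ⁻¹' (normLeOne K)) 
    ((toMixed K).antilipschitz.isBounded_preimage (isBounded_normLeOne K))
    ((toMixed K).continuous.measurable (measurableSet_normLeOne K))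
    (by 
      rw [← (toMixed K).coe_toHomeomorph, ← Homeomorph.preimage_frontier,
      (toMixed K).coe_toHomeomorph, (volumePreserving_toMixed K).measure_preimage
      measurableSet_frontier.nullMeasurableSet, volume_frontier_normLeOne])
    (F := fun x => F (toMixed K x)) (hF.comp (toMixed K).continuous)
  have hcov : ZLattice.covolume (mixedEmbedding.idealLattice K (FractionalIdeal.mk0 K J))
      = ZLattice.covolume (mixedEmbedding.idealLattice K (FractionalIdeal.mk0 K 1))
          * Ideal.absNorm (J : Ideal (𝓞 K)) := by
    rw [covolume_idealLattice, covolume_idealLattice]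
    simp [FractionalIdeal.coeIdeal_absNorm]
    try ring
  rw [ZLattice.covolume_comap _ _ _ (volumePreserving_toMixed K), hcov] at h
  have hint : ∫ x in toMixed K ⁻¹' (normLeOne K), F (toMixed K x) = ∫ x in normLeOne K, F x :=
    (volumePreserving_toMixed K).setIntegral_preimage_emb
      (toMixed K).toHomeomorph.measurableEmbedding F _
  rw [hint, euclidean.finrank] at h
  refine h.congr fun n => ?_
  congr 1
  refine (((toMixed K).toEquiv.subtypeEquiv fun x => ?_).tsum_eq (fun x => F x.1)).symm.symm
  rw [ZLattice.coe_comap]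
  simp only [Set.mem_inter_iff, Set.mem_preimage]
  refine and_congr Iff.rfl ?_
  rcases Nat.eq_zero_or_pos n with rfl | hn
  · simp only [Nat.cast_zero, inv_zero]
    rw [Set.zero_smul_set ⟨0, by simp⟩, Set.zero_smul_set ⟨0, by simp⟩]
    simp
  · have hn' : (n : ℝ) ≠ 0 := by exact_mod_cast hn.ne'
    rw [Set.mem_inv_smul_set_iff₀ hn', Set.mem_inv_smul_set_iff₀ hn']
    simp
end nf
end WS

namespace WS
open NumberField InfinitePlace MeasureTheory Filter Topology Module
open scoped nonZeroDivisors Classical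

section counting
variable (K : Type*) [Field K] [NumberField K]

/-- nonzero ideals of norm at most `N` -/
noncomputable def BB (N : ℕ) : Finset (Ideal (𝓞 K)) :=
  ((Ideal.finite_setOfPred_absNorm_le (S := 𝓞 K) N).subset
    (t := {I : Ideal (𝓞 K) | I ≠ ⊥ ∧ Ideal.absNorm I ≤ N}) (fun _ h => h.2)).toFinset

variable {K}
lemma mem_BB {N : ℕ} {I : Ideal (𝓞 K)} : I ∈ BB K N ↔ I ≠ ⊥ ∧ Ideal.absNorm I ≤ N := by
  simp [BB]

lemma absNorm_pos' {I : Ideal (𝓞 K)} (h : I ≠ ⊥) : 0 < Ideal.absNorm I :=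
  Nat.pos_of_ne_zero (by rwa [Ne, Ideal.absNorm_eq_zero_iff])

lemma BB_mono {M N : ℕ} (h : M ≤ N) : BB K M ⊆ BB K N := fun I hI => by
  rw [mem_BB] at *; exact ⟨hI.1, hI.2.trans h⟩

lemma card_BB (N : ℕ) : (BB K N).card =
    Nat.card {I : (Ideal (𝓞 K))⁰ // Ideal.absNorm (I : Ideal (𝓞 K)) ≤ (N : ℝ)} := by
  rw [← Nat.card_eq_finsetCard]
  refine Nat.card_congr ⟨fun I => ⟨⟨I.1, ?_⟩, ?_⟩, fun I => ⟨I.1.1, ?_⟩, fun _ => rfl, fun _ => rfl⟩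
  · exact mem_nonZeroDivisors_of_ne_zero (mem_BB.mp I.2).1
  · exact_mod_cast (mem_BB.mp I.2).2
  · exact mem_BB.mpr ⟨nonZeroDivisors.coe_ne_zero I.1, by exact_mod_cast I.2⟩

variable (K) in
lemma tendsto_card_BB : Tendsto (fun N : ℕ => ((BB K N).card : ℝ) / N) atTop
    (𝓝 (dedekindZeta_residue K)) := by
  refine ((NumberField.Ideal.tendsto_norm_le_div_atTop₀ K).comp
    tendsto_natCast_atTop_atTop).congr fun n => ?_
  simp only [Function.comp_apply, card_BB]

variable (K) in
lemma exists_card_BB_le : ∃ C : ℝ, 0 < C ∧ ∀ N : ℕ, ((BB K N).card : ℝ) ≤ C * N := by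
  obtain ⟨C, hC⟩ := (tendsto_card_BB K).bddAbove_range
  refine ⟨max C 1, by positivity, fun N => ?_⟩
  rcases Nat.eq_zero_or_pos N with rfl | hN
  · have : BB K 0 = ∅ := by
      ext I; simp only [mem_BB, Finset.notMem_empty, iff_false, not_and]
      intro h; have := absNorm_pos' h; omega
    simp [this]
  · have h1 : ((BB K N).card : ℝ) / N ≤ C := hC ⟨N, rfl⟩
    have hN' : (0 : ℝ) < N := by exact_mod_cast hN
    rw [div_le_iff₀ hN'] at h1
    exact h1.trans (mul_le_mul_of_nonneg_right (le_max_left _ _) hN'.le)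

lemma filter_dvd_BB {J : Ideal (𝓞 K)} (hJ : J ≠ ⊥) (N : ℕ) :
    (BB K N).filter (J ∣ ·) = (BB K (N / Ideal.absNorm J)).image (J * ·) := by
  ext I
  simp only [Finset.mem_filter, Finset.mem_image, mem_BB]
  constructor
  · rintro ⟨⟨h0, hN⟩, ⟨I', rfl⟩⟩
    refine ⟨I', ⟨fun h => h0 (by simp [h]), ?_⟩, rfl⟩
    rw [Nat.le_div_iff_mul_le (absNorm_pos' hJ), mul_comm, ← map_mul]; exact hN
  · rintro ⟨I', ⟨h0, hN⟩, rfl⟩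
    refine ⟨⟨mul_ne_zero hJ h0, ?_⟩, dvd_mul_right _ _⟩
    rw [Nat.le_div_iff_mul_le (absNorm_pos' hJ), mul_comm, ← map_mul] at hN; exact hN

lemma sum_dvd_BB {M : Type*} [AddCommMonoid M] {J : Ideal (𝓞 K)} (hJ : J ≠ ⊥) (N : ℕ)
    (f : Ideal (𝓞 K) → M) :
    ∑ I ∈ (BB K N).filter (J ∣ ·), f I = ∑ I ∈ BB K (N / Ideal.absNorm J), f (J * I) := by
  rw [filter_dvd_BB hJ, Finset.sum_image]
  intro a _ b _ h
  exact mul_left_cancel₀ (a := J) hJ h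

lemma card_dvd_BB {J : Ideal (𝓞 K)} (hJ : J ≠ ⊥) (N : ℕ) :
    ((BB K N).filter (J ∣ ·)).card = (BB K (N / Ideal.absNorm J)).card := by
  rw [Finset.card_eq_sum_ones, sum_dvd_BB hJ, Finset.card_eq_sum_ones]

lemma card_dvd_BB_le {C : ℝ} (hC0 : 0 < C) (hC : ∀ N : ℕ, ((BB K N).card : ℝ) ≤ C * N)
    {J : Ideal (𝓞 K)} (hJ : J ≠ ⊥) (N : ℕ) :
    (((BB K N).filter (J ∣ ·)).card : ℝ) ≤ C * N * (1 / Ideal.absNorm J) := by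
  rw [card_dvd_BB hJ]
  refine (hC _).trans ?_
  rw [mul_assoc, mul_one_div]
  exact mul_le_mul_of_nonneg_left Nat.cast_div_le hC0.le

end counting
end WS

namespace WS
open NumberField InfinitePlace MeasureTheory Filter Topology Module
open scoped nonZeroDivisors Classical

section dens
variable {K : Type*} [Field K] [NumberField K]

lemma placeEquiv_zpow_const {σ : K ≃ₐ[ℚ] K} {X : Type*} {y : InfinitePlace K → X}
    (h : ∀ w, y (placeEquiv σ w) = y w) (n : ℤ) (w : InfinitePlace K) :
    y (placeEquiv (σ ^ n) w) = y w := by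
  induction n with
  | zero => rfl
  | succ n ih =>
    have : placeEquiv (σ ^ ((n : ℤ) + 1)) w = placeEquiv σ (placeEquiv (σ ^ (n:ℤ)) w) := by
      ext x; simp only [placeEquiv_apply, zpow_add_one]; rfl
    rw [this, h, ih]
  | pred n ih =>
    have : placeEquiv σ (placeEquiv (σ ^ (-(n : ℤ) - 1)) w) = placeEquiv (σ ^ (-(n:ℤ))) w := by
      ext x; simp only [placeEquiv_apply]
      rw [← AlgEquiv.mul_apply, ← zpow_add_one]; simp
    rw [← h, this, ih]

lemma const_of_inv [IsGalois ℚ K] {σ : K ≃ₐ[ℚ] K} (hσ : ∀ τ : K ≃ₐ[ℚ] K, τ ∈ Subgroup.zpowers σ)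
    {X : Type*} {y : InfinitePlace K → X} (h : ∀ w, y (placeEquiv σ w) = y w)
    (w w' : InfinitePlace K) : y w' = y w := by
  obtain ⟨τ, hτ⟩ := exists_smul_eq_of_comap_eq (k := ℚ) (w := w) (w' := w') (Subsingleton.elim _ _)
  obtain ⟨n, hn⟩ := hσ τ⁻¹
  have : w' = placeEquiv (σ ^ n) w := by
    rw [← hτ]; simp only at hn; rw [hn]; rfl
  rw [this, placeEquiv_zpow_const h]

lemma dmap_surjective [IsGalois ℚ K] {σ : K ≃ₐ[ℚ] K}
    (hσ : ∀ τ : K ≃ₐ[ℚ] K, τ ∈ Subgroup.zpowers σ) : Function.Surjective (dmap σ) := by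
  let D : (InfinitePlace K → ℝ) →ₗ[ℝ] (InfinitePlace K → ℝ) :=
    { toFun := fun y w => y w - y (placeEquiv σ w)
      map_add' := fun y z => by funext w; simp; ring
      map_smul' := fun c y => by funext w; simp; ring }
  let S : (InfinitePlace K → ℝ) →ₗ[ℝ] ℝ :=
    { toFun := fun y => ∑ w, y w
      map_add' := fun y z => by simp [Finset.sum_add_distrib]
      map_smul' := fun c y => by simp [Finset.mul_sum] }
  have hle : LinearMap.range D ≤ LinearMap.ker S := by
    rintro _ ⟨y, rfl⟩
    exact (dmap σ y).2
  have w0 : InfinitePlace K := Classical.arbitrary _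
  have hker : finrank ℝ (LinearMap.ker D) ≤ 1 := by
    refine finrank_le_one (⟨fun _ => 1, by ext; simp [D]⟩ : LinearMap.ker D) fun ⟨y, hy⟩ => ⟨y w0, ?_⟩
    apply Subtype.ext
    funext w
    have : ∀ w, y (placeEquiv σ w) = y w := fun w => by
      have := congrFun hy w
      simp only [D, LinearMap.coe_mk, AddHom.coe_mk, Pi.zero_apply] at this
      linarith
    simp [const_of_inv hσ this w0 w]
  have hS : 1 ≤ finrank ℝ (LinearMap.range S) := by
    have : LinearMap.range S = ⊤ := by
      rw [LinearMap.range_eq_top]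
      intro c
      refine ⟨Pi.single w0 c, ?_⟩
      simp [S]
    rw [this]; simp
  have h1 := LinearMap.finrank_range_add_finrank_ker D
  have h2 := LinearMap.finrank_range_add_finrank_ker S
  have heq := Submodule.eq_of_le_of_finrank_le hle (by omega)
  intro x
  have hx : (x : InfinitePlace K → ℝ) ∈ LinearMap.ker S := x.2
  rw [← heq] at hx
  obtain ⟨y, hy⟩ := hx
  exact ⟨y, Subtype.ext hy⟩

lemma tcl_ratCast (σ : K ≃ₐ[ℚ] K) {q : K} (hq : q ≠ 0) (h : σ q = q) : tcl σ q = 0 := by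
  unfold tcl
  have : dmap σ (logMap K q) = 0 := by
    apply Subtype.ext
    rw [dmap_logMap σ hq, h, div_self hq]
    funext w; simp [logMap]
  rw [this]; rfl

lemma tcl_natCast_mul (σ : K ≃ₐ[ℚ] K) {m : ℤ} (hm : m ≠ 0) {a : K} (ha : a ≠ 0) :
    tcl σ ((m : K) * a) = tcl σ a := by
  rw [tcl_mul σ (by exact_mod_cast hm) ha, tcl_ratCast σ (by exact_mod_cast hm) (by simp), zero_add]

lemma exists_int_mul_integral (a : K) (ha : a ≠ 0) : ∃ (m : ℤ) (b : 𝓞 K), m ≠ 0 ∧ b ≠ 0 ∧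
    (b : K) = (m : K) * a := by
  obtain ⟨m, hm, hm'⟩ := ((IsFractionRing.isAlgebraic_iff ℤ ℚ K).mpr
    (Algebra.IsAlgebraic.isAlgebraic (R := ℚ) a)).exists_integral_multiple
  refine ⟨m, ⟨m • a, hm'⟩, hm, ?_, by simp⟩
  intro h
  have := congrArg (fun x : 𝓞 K => (x : K)) h
  simp at this
  tauto

lemma exists_char_ne_one [IsGalois ℚ K] {σ : K ≃ₐ[ℚ] K}
    (hσ : ∀ τ : K ≃ₐ[ℚ] K, τ ∈ Subgroup.zpowers σ)
    (χ : Torus K → ℂ) (hχcont : Continuous χ)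
    (hχmul : ∀ s t : Torus K, χ (s + t) = χ s * χ t)
    (hχabs : ∀ t : Torus K, ‖χ t‖ = 1)
    (hχnontriv : ∃ t : Torus K, χ t ≠ 1) (d : ℕ) (hd : 0 < d) :
    ∃ γ : 𝓞 K, γ ≠ 0 ∧ χ (tcl σ (γ : K)) ^ d ≠ 1 := by
  set χ0 : (InfinitePlace K → ℝ) → ℂ := fun y => χ (QuotientAddGroup.mk (dmap σ y)) with hχ0
  have hc0 : Continuous χ0 := hχcont.comp (continuous_quot_mk.comp (continuous_dmap σ))
  have hm0 : ∀ y z, χ0 (y + z) = χ0 y * χ0 z := fun y z => by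
    simp only [hχ0, dmap_add, QuotientAddGroup.mk_add, hχmul]
  have h00 : χ0 0 = 1 := by
    have h := hm0 0 0
    rw [add_zero] at h
    have hne : χ0 0 ≠ 0 := fun h => by
      have h' := hχabs (QuotientAddGroup.mk (dmap σ 0))
      change ‖χ0 0‖ = 1 at h'
      simp [h] at h'
    exact (mul_left_cancel₀ hne (by rw [mul_one]; exact h)).symm
  have hn0 : ∀ (n : ℕ) y, χ0 (n • y) = χ0 y ^ n := fun n y => by
    induction n with
    | zero => simp [h00]
    | succ n ih => rw [succ_nsmul, hm0, ih, pow_succ]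
  obtain ⟨y1, hy1⟩ : ∃ y, χ0 y ^ d ≠ 1 := by
    obtain ⟨t, ht⟩ := hχnontriv
    obtain ⟨x, rfl⟩ := QuotientAddGroup.mk_surjective t
    obtain ⟨y, rfl⟩ := dmap_surjective hσ x
    refine ⟨(d : ℝ)⁻¹ • y, ?_⟩
    rw [← hn0]
    have : d • (d : ℝ)⁻¹ • y = y := by
      rw [← Nat.cast_smul_eq_nsmul ℝ, smul_smul, mul_inv_cancel₀ (by positivity), one_smul]
    rw [this]; exact ht
  -- rational approximations
  obtain ⟨q, hq0, hq⟩ : ∃ q : InfinitePlace K → ℚ, (∀ w, (0 : ℚ) < q w) ∧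
      χ0 (fun w => Real.log ((q w : ℝ) ^ w.mult)) ^ d ≠ 1 := by
    let U : Set (InfinitePlace K → ℝ) := {x | ∀ w, 0 < x w}
    have hU : IsOpen U := by
      have : U = ⋂ w, {x | 0 < x w} := by ext; simp [U]
      rw [this]
      exact isOpen_iInter_of_finite fun w => isOpen_lt continuous_const (continuous_apply w)
    have hcont : ContinuousOn (fun x : InfinitePlace K → ℝ =>
        χ0 (fun w => Real.log ((x w) ^ w.mult)) ^ d) U := by
      refine (hc0.comp_continuousOn ?_).pow d
      refine continuousOn_pi.mpr fun w => ?_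
      refine ContinuousOn.log (by fun_prop) fun x hx => pow_ne_zero _ (hx w).ne'
    have hV : IsOpen (U ∩ (fun x : InfinitePlace K → ℝ =>
        χ0 (fun w => Real.log ((x w) ^ w.mult)) ^ d) ⁻¹' {1}ᶜ) :=
      hcont.isOpen_inter_preimage hU isOpen_compl_singleton
    have hdense : DenseRange (fun (q : InfinitePlace K → ℚ) w => (q w : ℝ)) :=
      DenseRange.piMap (fun _ => Rat.denseRange_cast)
    obtain ⟨x, ⟨hx1, hx2⟩, q, rfl⟩ := hdense.inter_open_nonempty _ hV
      ⟨fun w => Real.exp (y1 w / w.mult), fun w => Real.exp_pos _, by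
        simp only [Set.mem_preimage, Set.mem_compl_iff, Set.mem_singleton_iff]
        convert! hy1 using 4
        funext w
        rw [← Real.exp_nat_mul, Real.log_exp, mul_div_cancel₀]
        exact_mod_cast (mult_pos (w := w)).ne'⟩
    exact ⟨q, fun w => by have := hx1 w; simp only [Rat.cast_pos] at this; exact this, hx2⟩
  obtain ⟨a, ha0, ha⟩ : ∃ a : K, a ≠ 0 ∧ χ0 (logMap K a) ^ d ≠ 1 := by
    let U : Set ((v : InfinitePlace K) → WithAbs v.1) := {x | ∀ w, x w ≠ 0}
    have hU : IsOpen U := by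
      have : U = ⋂ w, {x | x w ≠ 0} := by ext; simp [U]
      rw [this]
      exact isOpen_iInter_of_finite fun w => isOpen_ne_fun (continuous_apply w) continuous_const
    have hcont : ContinuousOn (fun x : ((v : InfinitePlace K) → WithAbs v.1) =>
        χ0 (fun w => Real.log (‖x w‖ ^ w.mult)) ^ d) U := by
      refine (hc0.comp_continuousOn ?_).pow d
      refine continuousOn_pi.mpr fun w => ?_
      refine ContinuousOn.log (by fun_prop) fun x hx => pow_ne_zero _ (norm_ne_zero_iff.mpr (hx w))
    have hV := hcont.isOpen_inter_preimage hU (isOpen_compl_singleton (x := 1))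
    obtain ⟨x, ⟨hx1, hx2⟩, a, rfl⟩ := (denseRange_algebraMap_pi (K := K)).inter_open_nonempty _ hV
      ⟨fun w => WithAbs.toAbs _ ((q w : ℚ) : K), fun w => by
          simpa using (hq0 w).ne', by
        simp only [Set.mem_preimage, Set.mem_compl_iff, Set.mem_singleton_iff]
        convert! hq using 7 with w
        change w.1 ((q w : ℚ) : K) = _
        have := InfinitePlace.norm_embedding_eq w ((q w : ℚ) : K)
        rw [map_ratCast] at this
        change w ((q w : ℚ) : K) = _
        rw [← this]
        simp [(hq0 w).le]⟩
    refine ⟨a, fun h => ?_, hx2⟩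
    exact hx1 (Classical.arbitrary _) (by simp [h])
  obtain ⟨m, b, hm, hb, hba⟩ := exists_int_mul_integral a ha0
  refine ⟨b, hb, ?_⟩
  rw [hba, tcl_natCast_mul σ hm ha0]
  exact ha
end dens
end WS

namespace WS
open NumberField InfinitePlace MeasureTheory Filter Topology Module
open scoped nonZeroDivisors Classical Pointwise

section conv
variable {K : Type*} [Field K] [NumberField K]
open mixedEmbedding fundamentalCone

/-- principal ideals divisible by `J` of bounded norm -/
noncomputable def PB (J : Ideal (𝓞 K)) (N : ℕ) : Finset (Ideal (𝓞 K)) :=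
  (BB K N).filter fun I => J ∣ I ∧ I.IsPrincipal

lemma mem_scaled {n : ℕ} (hn : 0 < n) (J : (Ideal (𝓞 K))⁰) (x : mixedEmbedding.mixedSpace K) :
    x ∈ normLeOne K ∩ (n : ℝ)⁻¹ •
        (mixedEmbedding.idealLattice K (FractionalIdeal.mk0 K J) : Set (mixedEmbedding.mixedSpace K))
    ↔ ((n : ℝ) • x ∈ idealSet K J ∧ mixedEmbedding.norm ((n : ℝ) • x) ≤ (n : ℝ) ^ finrank ℚ K) := by
  have hn' : (n : ℝ) ≠ 0 := by exact_mod_cast hn.ne'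
  have hp : (0 : ℝ) < (n : ℝ) ^ finrank ℚ K := by positivity
  rw [Set.mem_inter_iff, Set.mem_inv_smul_set_iff₀ hn', mem_normLeOne, idealSet, Set.mem_inter_iff,
    fundamentalCone.smul_mem_iff_mem hn', mixedEmbedding.norm_smul, Nat.abs_cast,
    mul_le_iff_le_one_right hp]
  tauto

noncomputable def scaleEquiv {n : ℕ} (hn : 0 < n) (J : (Ideal (𝓞 K))⁰) :
    ↑(normLeOne K ∩ (n : ℝ)⁻¹ •
        (mixedEmbedding.idealLattice K (FractionalIdeal.mk0 K J) : Set (mixedEmbedding.mixedSpace K)))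
    ≃ {a : integerSet K // (J : Ideal (𝓞 K)) ∣ Ideal.span {(preimageOfMemIntegerSet a : 𝓞 K)} ∧
        Ideal.absNorm (Ideal.span {(preimageOfMemIntegerSet a : 𝓞 K)}) ≤ n ^ finrank ℚ K} where
  toFun x := ⟨idealSetEquiv K J ⟨(n : ℝ) • x.1, ((mem_scaled hn J x.1).mp x.2).1⟩, by
    refine ⟨?_, ?_⟩
    · rw [Ideal.dvd_span_singleton]
      exact (idealSetEquiv K J ⟨(n : ℝ) • x.1, ((mem_scaled hn J x.1).mp x.2).1⟩).2
    · rw [Ideal.absNorm_span_singleton]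
      have h1 := ((mem_scaled hn J x.1).mp x.2).2
      have h2 := intNorm_idealSetEquiv_apply (J := J) ⟨(n : ℝ) • x.1, ((mem_scaled hn J x.1).mp x.2).1⟩
      unfold intNorm at h2
      rw [← h2] at h1
      exact_mod_cast h1⟩
  invFun a := ⟨(n : ℝ)⁻¹ • (a.1 : mixedEmbedding.mixedSpace K), by
    have hn' : (n : ℝ) ≠ 0 := by exact_mod_cast hn.ne'
    rw [mem_scaled hn, smul_inv_smul₀ hn']
    refine ⟨mem_idealSet.mpr ⟨a.1.2.1, (preimageOfMemIntegerSet a.1 : 𝓞 K), ?_, 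
      mixedEmbedding_preimageOfMemIntegerSet a.1⟩, ?_⟩
    · exact (Ideal.dvd_span_singleton).mp a.2.1
    · rw [← intNorm_coe]
      have := a.2.2
      rw [Ideal.absNorm_span_singleton] at this
      exact_mod_cast this⟩
  left_inv x := by
    have hn' : (n : ℝ) ≠ 0 := by exact_mod_cast hn.ne'
    apply Subtype.ext
    simp only [idealSetEquiv_apply]
    exact inv_smul_smul₀ hn' _
  right_inv a := by
    have hn' : (n : ℝ) ≠ 0 := by exact_mod_cast hn.ne'
    apply Subtype.ext
    apply Subtype.ext
    simp only [idealSetEquiv_apply]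
    exact smul_inv_smul₀ hn' _

lemma scaleEquiv_spec {n : ℕ} (hn : 0 < n) (J : (Ideal (𝓞 K))⁰) (x) :
    (n : ℝ)⁻¹ • mixedEmbedding K ((preimageOfMemIntegerSet (scaleEquiv hn J x).1 : 𝓞 K) : K) = x.1 := by
  have hn' : (n : ℝ) ≠ 0 := by exact_mod_cast hn.ne'
  rw [mixedEmbedding_preimageOfMemIntegerSet]
  change (n : ℝ)⁻¹ • (n : ℝ) • x.1 = x.1
  exact inv_smul_smul₀ hn' _

noncomputable def idealEquiv (n : ℕ) (J : (Ideal (𝓞 K))⁰) :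
    {a : integerSet K // (J : Ideal (𝓞 K)) ∣ Ideal.span {(preimageOfMemIntegerSet a : 𝓞 K)} ∧
        Ideal.absNorm (Ideal.span {(preimageOfMemIntegerSet a : 𝓞 K)}) ≤ n}
    ≃ {I // I ∈ PB (J : Ideal (𝓞 K)) n} × Units.torsion K :=
  ((integerSetEquiv K).subtypeEquiv (q := fun p => (J : Ideal (𝓞 K)) ∣ p.1.1.1 ∧
      Ideal.absNorm p.1.1.1 ≤ n) (fun _ => Iff.rfl)).trans
  ((Equiv.prodSubtypeFstEquivSubtypeProd (p := fun I : {I : (Ideal (𝓞 K))⁰ // I.1.IsPrincipal} =>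
      (J : Ideal (𝓞 K)) ∣ I.1.1 ∧ Ideal.absNorm I.1.1 ≤ n)).trans
  (Equiv.prodCongrLeft fun _ =>
    { toFun := fun I => ⟨I.1.1.1, by
        rw [PB, Finset.mem_filter, mem_BB]
        exact ⟨⟨nonZeroDivisors.coe_ne_zero I.1.1, I.2.2⟩, I.2.1, I.1.2⟩⟩
      invFun := fun I => ⟨⟨⟨I.1, mem_nonZeroDivisors_of_ne_zero
        (mem_BB.mp (Finset.mem_filter.mp I.2).1).1⟩, (Finset.mem_filter.mp I.2).2.2⟩,
        (Finset.mem_filter.mp I.2).2.1, (mem_BB.mp (Finset.mem_filter.mp I.2).1).2⟩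
      left_inv := fun _ => rfl
      right_inv := fun _ => rfl }))

lemma idealEquiv_spec (n : ℕ) (J : (Ideal (𝓞 K))⁰) (a) :
    ((idealEquiv n J a).1 : Ideal (𝓞 K)) = Ideal.span {(preimageOfMemIntegerSet a.1 : 𝓞 K)} := rfl

lemma tsum_eq_ideal_sum {n : ℕ} (hn : 0 < n) (J : (Ideal (𝓞 K))⁰)
    {F : mixedEmbedding.mixedSpace K → ℝ} {G : Ideal (𝓞 K) → ℝ}
    (hFG : ∀ a : 𝓞 K, a ≠ 0 → F ((n : ℝ)⁻¹ • mixedEmbedding K (a : K)) = G (Ideal.span {a})) :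
    (∑' x : ↑(normLeOne K ∩ (n : ℝ)⁻¹ •
        (mixedEmbedding.idealLattice K (FractionalIdeal.mk0 K J) : Set (mixedEmbedding.mixedSpace K))), F x)
    = Units.torsionOrder K * ∑ I ∈ PB (J : Ideal (𝓞 K)) (n ^ finrank ℚ K), G I := by
  rw [← ((scaleEquiv hn J).trans (idealEquiv _ J)).symm.tsum_eq]
  have h : ∀ p, F (((scaleEquiv hn J).trans (idealEquiv _ J)).symm p) = G p.1.1 := by
    intro p
    obtain ⟨x, rfl⟩ := ((scaleEquiv hn J).trans (idealEquiv _ J)).surjective p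
    rw [Equiv.symm_apply_apply]
    conv_lhs => rw [← scaleEquiv_spec hn J x]
    rw [hFG _ (nonZeroDivisors.coe_ne_zero _), Equiv.trans_apply, idealEquiv_spec]
  simp_rw [h]
  haveI : Fintype (Units.torsion K) := Fintype.ofFinite _
  rw [tsum_fintype, Fintype.sum_prod_type_right]
  simp only [Finset.sum_const, Finset.card_univ, nsmul_eq_mul]
  rw [Finset.sum_coe_sort (PB (J : Ideal (𝓞 K)) (n ^ finrank ℚ K)) G]
  rw [Units.torsionOrder, Nat.card_eq_fintype_card]
end conv
end WS

namespace WS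
open NumberField InfinitePlace MeasureTheory Filter Topology Module
open scoped nonZeroDivisors Classical Pointwise

section weyl
variable {K : Type*} [Field K] [NumberField K]

/-- log coordinates on the mixed space -/
noncomputable def ylog (x : mixedEmbedding.mixedSpace K) : InfinitePlace K → ℝ :=
  fun w => Real.log (mixedEmbedding.normAtPlace w x ^ w.mult)

/-- the test function -/
noncomputable def Ftest (σ : K ≃ₐ[ℚ] K) (χ : Torus K → ℂ) (r : ℂ → ℝ) (δ : ℝ)
    (x : mixedEmbedding.mixedSpace K) : ℝ :=
  r (χ (QuotientAddGroup.mk (dmap σ (ylog x)))) * min 1 (mixedEmbedding.norm x / δ)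

lemma continuous_Ftest (σ : K ≃ₐ[ℚ] K) {χ : Torus K → ℂ} (hχcont : Continuous χ)
    (hχabs : ∀ t : Torus K, ‖χ t‖ = 1) {r : ℂ → ℝ} (hr : Continuous r) (hr' : ∀ z, |r z| ≤ ‖z‖)
    {δ : ℝ} (hδ : 0 < δ) : Continuous (Ftest σ χ r δ) := by
  have hnc := mixedEmbedding.continuous_norm K
  rw [continuous_iff_continuousAt]
  intro x
  by_cases hx : mixedEmbedding.norm x = 0
  · have h0 : Ftest σ χ r δ x = 0 := by simp [Ftest, hx]
    rw [ContinuousAt, h0]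
    have hb : ∀ y, ‖Ftest σ χ r δ y‖ ≤ mixedEmbedding.norm y / δ := by
      intro y
      have hn := mixedEmbedding.norm_nonneg y
      rw [Ftest, norm_mul, Real.norm_eq_abs, Real.norm_eq_abs]
      have h1 : |r (χ (QuotientAddGroup.mk (dmap σ (ylog y))))| ≤ 1 := by
        rw [← hχabs]; exact hr' _
      have h2 : |min 1 (mixedEmbedding.norm y / δ)| ≤ mixedEmbedding.norm y / δ := by
        rw [abs_of_nonneg (by positivity)]; exact min_le_right _ _
      calc _ ≤ 1 * (mixedEmbedding.norm y / δ) := mul_le_mul h1 h2 (abs_nonneg _) zero_le_one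
        _ = _ := one_mul _
    refine squeeze_zero_norm hb ?_
    have : Tendsto (fun y => mixedEmbedding.norm y / δ) (𝓝 x) (𝓝 (mixedEmbedding.norm x / δ)) :=
      (hnc.div_const δ).tendsto x
    rwa [hx, zero_div] at this
  · unfold Ftest
    refine ContinuousAt.mul ?_ (by fun_prop)
    refine hr.continuousAt.comp (hχcont.continuousAt.comp ?_)
    refine (continuous_quot_mk.continuousAt).comp ((continuous_dmap σ).continuousAt.comp ?_)
    refine continuousAt_pi.mpr fun w => ?_
    refine ContinuousAt.log ?_ ?_
    · exact ((mixedEmbedding.continuous_normAtPlace w).pow _).continuousAt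
    · rw [mixedEmbedding.norm_apply, Finset.prod_eq_zero_iff] at hx
      exact fun h => hx ⟨w, Finset.mem_univ _, h⟩

lemma Ftest_apply (σ : K ≃ₐ[ℚ] K) {χ : Torus K → ℂ} {r : ℂ → ℝ} {δ : ℝ} {n : ℕ}
    (hn : 0 < n) (a : 𝓞 K) (ha : a ≠ 0) :
    Ftest σ χ r δ ((n : ℝ)⁻¹ • mixedEmbedding K (a : K)) =
      r (χ (tI σ (Ideal.span {a}))) *
        min 1 ((Ideal.absNorm (Ideal.span {a}) : ℝ) / ((n : ℝ) ^ finrank ℚ K) / δ) := by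
  have hn' : (0 : ℝ) < n := by exact_mod_cast hn
  have ha' : (a : K) ≠ 0 := by simpa using ha
  unfold Ftest
  congr 3
  · rw [tI_span σ ha, tcl]
    congr 1
    apply Subtype.ext
    funext w
    rw [dmap_coe, dmap_coe]
    have h : ∀ w, ylog ((n : ℝ)⁻¹ • mixedEmbedding K (a : K)) w
        = logMap K (a : K) w - w.mult * Real.log n := by
      intro w
      rw [ylog, mixedEmbedding.normAtPlace_smul, mixedEmbedding.normAtPlace_apply, logMap,
        abs_of_pos (by positivity), mul_pow, Real.log_mul, Real.log_pow (n := w.mult) (x := (n : ℝ)⁻¹), Real.log_inv]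
      · ring
      · positivity
      · simp [ha]
    rw [h, h, mult_placeEquiv]; ring
  · rw [mixedEmbedding.norm_smul, mixedEmbedding.norm_eq_norm, abs_of_pos (by positivity),
      Ideal.absNorm_span_singleton, ← Algebra.coe_norm_int]
    rw [inv_pow, div_eq_inv_mul ((Int.natAbs (Algebra.norm ℤ a) : ℕ) : ℝ)]
    congr 1
    rw [Nat.cast_natAbs]
    push_cast
    rfl

/-- weighted sum -/
noncomputable def Tsum (σ : K ≃ₐ[ℚ] K) (χ : Torus K → ℂ) (δ : ℝ) (J : Ideal (𝓞 K)) (n : ℕ) : ℂ :=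
  ∑ I ∈ PB J (n ^ finrank ℚ K), χ (tI σ I) *
    ((min 1 ((Ideal.absNorm I : ℝ) / ((n : ℝ) ^ finrank ℚ K) / δ) : ℝ) : ℂ)

lemma tendsto_Tsum_real (σ : K ≃ₐ[ℚ] K) {χ : Torus K → ℂ} (hχcont : Continuous χ)
    (hχabs : ∀ t : Torus K, ‖χ t‖ = 1) {r : ℂ → ℝ} (hr : Continuous r) (hr' : ∀ z, |r z| ≤ ‖z‖)
    {δ : ℝ} (hδ : 0 < δ) : ∃ c : ℝ, ∀ J : Ideal (𝓞 K), J ≠ ⊥ →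
    Tendsto (fun n : ℕ => (∑ I ∈ PB J (n ^ finrank ℚ K), r (χ (tI σ I)) *
      min 1 ((Ideal.absNorm I : ℝ) / ((n : ℝ) ^ finrank ℚ K) / δ)) / (n : ℝ) ^ finrank ℚ K)
      atTop (𝓝 (c / Ideal.absNorm J)) := by
  refine ⟨(∫ x in mixedEmbedding.fundamentalCone.normLeOne K, Ftest σ χ r δ x) /
        (ZLattice.covolume (mixedEmbedding.idealLattice K (FractionalIdeal.mk0 K 1)))
        / Units.torsionOrder K, fun J hJ => ?_⟩
  have ht : (Units.torsionOrder K : ℝ) ≠ 0 := by exact_mod_cast (Units.torsionOrder_pos K).ne'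
  have h := (tendsto_ideal_sum K ⟨J, mem_nonZeroDivisors_of_ne_zero hJ⟩
    (continuous_Ftest σ hχcont hχabs hr hr' hδ)).div_const (Units.torsionOrder K : ℝ)
  have e : ∀ a b c d : ℝ, a / b / c / d = a / (b * d) / c := fun a b c d => by
    field_simp
  rw [e]
  refine h.congr' ?_
  filter_upwards [eventually_gt_atTop 0] with n hn
  rw [tsum_eq_ideal_sum hn ⟨J, mem_nonZeroDivisors_of_ne_zero hJ⟩
    (G := fun I => r (χ (tI σ I)) * min 1 ((Ideal.absNorm I : ℝ) / ((n : ℝ) ^ finrank ℚ K) / δ))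
    (fun a ha => Ftest_apply σ hn a ha)]
  rw [div_right_comm, mul_div_cancel_left₀ _ ht]

lemma tendsto_Tsum (σ : K ≃ₐ[ℚ] K) {χ : Torus K → ℂ} (hχcont : Continuous χ)
    (hχabs : ∀ t : Torus K, ‖χ t‖ = 1)
    {δ : ℝ} (hδ : 0 < δ) : ∃ c : ℂ, ∀ J : Ideal (𝓞 K), J ≠ ⊥ →
    Tendsto (fun n : ℕ => Tsum σ χ δ J n / (n : ℂ) ^ finrank ℚ K)
      atTop (𝓝 (c / Ideal.absNorm J)) := by
  obtain ⟨c1, h1⟩ := tendsto_Tsum_real σ hχcont hχabs Complex.continuous_re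
    (fun z => Complex.abs_re_le_norm z) hδ
  obtain ⟨c2, h2⟩ := tendsto_Tsum_real σ hχcont hχabs Complex.continuous_im
    (fun z => Complex.abs_im_le_norm z) hδ
  refine ⟨c1 + c2 * Complex.I, fun J hJ => ?_⟩
  have h1' := (Complex.continuous_ofReal.tendsto _).comp (h1 J hJ)
  have h2' := ((Complex.continuous_ofReal.tendsto _).comp (h2 J hJ)).mul_const Complex.I
  have h := h1'.add h2'
  convert! h using 2
  · rename_i n
    simp only [Function.comp_apply, Tsum]
    push_cast
    rw [div_mul_eq_mul_div, ← add_div, Finset.sum_mul, ← Finset.sum_add_distrib]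
    congr 1
    refine Finset.sum_congr rfl fun I _ => ?_
    conv_lhs => rw [← Complex.re_add_im (χ (tI σ I))]
    ring
  · push_cast; ring

lemma isPrincipal_span_mul {γ : 𝓞 K} (hγ : γ ≠ 0) (I : Ideal (𝓞 K)) :
    (Ideal.span {γ} * I).IsPrincipal ↔ I.IsPrincipal := by
  constructor
  · rintro ⟨⟨b, hb⟩⟩
    rw [Ideal.submodule_span_eq] at hb
    have hb' : γ ∣ b := by
      rw [← Ideal.span_singleton_le_span_singleton, ← hb]; exact Ideal.mul_le_left
    obtain ⟨c, rfl⟩ := hb'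
    rw [← Ideal.span_singleton_mul_span_singleton] at hb
    have : I = Ideal.span {c} := mul_left_cancel₀ (by simpa using hγ : Ideal.span {γ} ≠ (0 : Ideal (𝓞 K))) hb
    exact ⟨⟨c, this⟩⟩
  · rintro ⟨⟨c, rfl⟩⟩
    exact ⟨⟨γ * c, by simp [Ideal.span_singleton_mul_span_singleton]⟩⟩

lemma tI_span_mul (σ : K ≃ₐ[ℚ] K) {γ : 𝓞 K} (hγ : γ ≠ 0) {I : Ideal (𝓞 K)} (hI : I ≠ ⊥)
    (hP : I.IsPrincipal) : tI σ (Ideal.span {γ} * I) = tcl σ (γ : K) + tI σ I := by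
  obtain ⟨⟨c, rfl⟩⟩ := hP
  rw [Ideal.submodule_span_eq] at *
  have hc : c ≠ 0 := fun h => hI (by simp [h])
  rw [Ideal.span_singleton_mul_span_singleton, tI_span σ (mul_ne_zero hγ hc), tI_span σ hc,
    coe_mul', tcl_mul σ (by simpa using hγ) (by simpa using hc)]

lemma PB_span_mul {γ : 𝓞 K} (hγ : γ ≠ 0) (J : Ideal (𝓞 K)) (N : ℕ) :
    PB (Ideal.span {γ} * J) (Ideal.absNorm (Ideal.span {γ}) * N)
      = (PB J N).image (Ideal.span {γ} * ·) := by
  have h0 : Ideal.span {γ} ≠ (0 : Ideal (𝓞 K)) := by simpa using hγ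
  ext I
  simp only [PB, Finset.mem_filter, mem_BB, Finset.mem_image]
  constructor
  · rintro ⟨⟨h1, h2⟩, ⟨I', rfl⟩, h4⟩
    rw [mul_assoc] at *
    rw [map_mul] at h2
    refine ⟨J * I', ⟨⟨fun h => h1 (by rw [h]; exact mul_zero _), ?_⟩, dvd_mul_right _ _, ?_⟩, rfl⟩
    · exact Nat.le_of_mul_le_mul_left h2 (absNorm_pos' h0)
    · exact (isPrincipal_span_mul hγ _).mp h4
  · rintro ⟨I', ⟨⟨h1, h2⟩, h3, h4⟩, rfl⟩
    refine ⟨⟨mul_ne_zero h0 h1, ?_⟩, mul_dvd_mul_left _ h3, (isPrincipal_span_mul hγ _).mpr h4⟩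
    rw [map_mul]
    exact Nat.mul_le_mul_left _ h2

lemma Tsum_symm (σ : K ≃ₐ[ℚ] K) {χ : Torus K → ℂ} (hχmul : ∀ s t : Torus K, χ (s + t) = χ s * χ t)
    (δ : ℝ) {γ : 𝓞 K} (hγ : γ ≠ 0) {g : ℕ} (hg : Ideal.absNorm (Ideal.span {γ}) = g ^ finrank ℚ K)
    (J : Ideal (𝓞 K)) (n : ℕ) :
    Tsum σ χ δ (Ideal.span {γ} * J) (g * n) = χ (tcl σ (γ : K)) * Tsum σ χ δ J n := by
  have h0 : Ideal.span {γ} ≠ (0 : Ideal (𝓞 K)) := by simpa using hγ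
  have hg0 : ((g : ℝ) ^ finrank ℚ K) ≠ 0 := by
    have := absNorm_pos' h0
    rw [hg] at this
    exact_mod_cast this.ne'
  rw [Tsum, Tsum, mul_pow, ← hg, PB_span_mul hγ, Finset.sum_image, Finset.mul_sum]
  · refine Finset.sum_congr rfl fun I hI => ?_
    simp only [PB, Finset.mem_filter, mem_BB] at hI
    rw [tI_span_mul σ hγ hI.1.1 hI.2.2, hχmul, mul_assoc, map_mul, hg]
    push_cast
    rw [mul_pow, mul_div_mul_left _ _ hg0]
  · intro a _ b _ h
    exact mul_left_cancel₀ h0 h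

lemma tendsto_Tsum_zero [IsGalois ℚ K] {σ : K ≃ₐ[ℚ] K}
    (hσ : ∀ τ : K ≃ₐ[ℚ] K, τ ∈ Subgroup.zpowers σ)
    {χ : Torus K → ℂ} (hχcont : Continuous χ)
    (hχmul : ∀ s t : Torus K, χ (s + t) = χ s * χ t)
    (hχabs : ∀ t : Torus K, ‖χ t‖ = 1)
    (hχnontriv : ∃ t : Torus K, χ t ≠ 1)
    {δ : ℝ} (hδ : 0 < δ) {J : Ideal (𝓞 K)} (hJ : J ≠ ⊥) :
    Tendsto (fun n : ℕ => Tsum σ χ δ J n / (n : ℂ) ^ finrank ℚ K) atTop (𝓝 0) := by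
  obtain ⟨c, hc⟩ := tendsto_Tsum σ hχcont hχabs hδ
  have hd : 0 < finrank ℚ K := finrank_pos
  obtain ⟨γ0, h0, h1⟩ := exists_char_ne_one hσ χ hχcont hχmul hχabs hχnontriv (finrank ℚ K) hd
  have hγ : γ0 ^ finrank ℚ K ≠ 0 := pow_ne_zero _ h0
  have hs0 : Ideal.span {γ0 ^ finrank ℚ K} ≠ (0 : Ideal (𝓞 K)) := by simpa using hγ
  set g := Ideal.absNorm (Ideal.span {γ0}) with hgdef
  have hg : Ideal.absNorm (Ideal.span {γ0 ^ finrank ℚ K}) = g ^ finrank ℚ K := by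
    rw [← Ideal.span_singleton_pow, map_pow]
  have hg0 : 0 < g := absNorm_pos' (by simpa using h0)
  have hχγ : χ (tcl σ ((γ0 ^ finrank ℚ K : 𝓞 K) : K)) = χ (tcl σ (γ0 : K)) ^ finrank ℚ K := by
    have : ∀ n : ℕ, 0 < n → χ (tcl σ ((γ0 ^ n : 𝓞 K) : K)) = χ (tcl σ (γ0 : K)) ^ n := by
      intro n hn
      induction n, hn using Nat.le_induction with
      | base => simp
      | succ n hn ih =>
        rw [pow_succ, coe_mul', tcl_mul σ (by simp [h0]) (by simpa using h0), hχmul, ih, pow_succ]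
    exact this _ hd
  have hG : ((g : ℂ) ^ finrank ℚ K) ≠ 0 := by
    exact_mod_cast (pow_pos hg0 _).ne'
  have hA := (hc (Ideal.span {γ0 ^ finrank ℚ K} * ⊤) (by
    rw [Ideal.mul_top]; exact hs0)).comp (tendsto_id.const_mul_atTop' hg0)
  have hB := ((hc ⊤ top_ne_bot).const_mul (χ (tcl σ ((γ0 ^ finrank ℚ K : 𝓞 K) : K)))).div_const
    ((g : ℂ) ^ finrank ℚ K)
  have hAB := tendsto_nhds_unique (hA.congr fun n => by
    simp only [Function.comp_apply, id]
    rw [Tsum_symm σ hχmul δ hγ hg]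
    push_cast
    rw [mul_pow, mul_div_assoc, mul_comm ((g : ℂ) ^ _), ← div_div, ← mul_div_assoc]) hB
  rw [Ideal.mul_top, hg, Ideal.absNorm_top, hχγ] at hAB
  have hc0 : c = 0 := by
    by_contra hne
    apply h1
    push_cast at hAB
    rw [div_one, div_left_inj' hG] at hAB
    exact (mul_right_cancel₀ hne (by rw [one_mul]; exact hAB)).symm
  have := hc J hJ
  rwa [hc0, zero_div] at this

end weyl
end WS

namespace WS
open NumberField InfinitePlace MeasureTheory Filter Topology Module
open scoped nonZeroDivisors Classical Pointwise

section weyl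
variable {K : Type*} [Field K] [NumberField K]

/-- Weyl sum over principal ideals divisible by `J` -/
noncomputable def Wsum (σ : K ≃ₐ[ℚ] K) (χ : Torus K → ℂ) (J : Ideal (𝓞 K)) (N : ℕ) : ℂ :=
  ∑ I ∈ PB J N, χ (tI σ I)

lemma Wsum_sub_Tsum (σ : K ≃ₐ[ℚ] K) {χ : Torus K → ℂ}
    (hχabs : ∀ t : Torus K, ‖χ t‖ = 1) {C : ℝ}
    (hC : ∀ N : ℕ, ((BB K N).card : ℝ) ≤ C * N) (hC0 : 0 < C)
    {δ : ℝ} (hδ : 0 < δ) (J : Ideal (𝓞 K)) {n : ℕ} (hn : 0 < n) :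
    ‖Wsum σ χ J (n ^ finrank ℚ K) - Tsum σ χ δ J n‖ ≤ C * δ * (n : ℝ) ^ finrank ℚ K := by
  have hp : (0 : ℝ) < (n : ℝ) ^ finrank ℚ K := by positivity
  rw [Wsum, Tsum, ← Finset.sum_sub_distrib]
  set M := ⌊δ * (n : ℝ) ^ finrank ℚ K⌋₊ with hM
  have hMle : (M : ℝ) ≤ δ * (n : ℝ) ^ finrank ℚ K := Nat.floor_le (by positivity)
  calc _ ≤ ∑ I ∈ PB J (n ^ finrank ℚ K), (if I ∈ BB K M then (1 : ℝ) else 0) := by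
        refine (norm_sum_le _ _).trans (Finset.sum_le_sum fun I hI => ?_)
        set q : ℝ := (Ideal.absNorm I : ℝ) / (n : ℝ) ^ finrank ℚ K / δ with hq
        have hq0 : 0 ≤ q := by positivity
        have e : χ (tI σ I) - χ (tI σ I) * ((min 1 q : ℝ) : ℂ)
            = χ (tI σ I) * ((1 - min 1 q : ℝ) : ℂ) := by push_cast; ring
        rw [e, norm_mul, hχabs, one_mul, Complex.norm_real, Real.norm_eq_abs,
          abs_of_nonneg (by linarith [min_le_left 1 q])]
        split_ifs with h
        · have : 0 ≤ min 1 q := le_min zero_le_one hq0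
          linarith
        · have h1 : 1 ≤ q := by
            by_contra hlt
            push Not at hlt
            apply h
            rw [PB, Finset.mem_filter, mem_BB] at hI
            rw [mem_BB]
            refine ⟨hI.1.1, Nat.le_floor ?_⟩
            rw [hq, div_lt_one hδ, div_lt_iff₀ hp] at hlt
            exact hlt.le
          simp [min_eq_left h1]
    _ ≤ ((BB K M).card : ℝ) := by
        rw [Finset.sum_ite_mem, Finset.sum_const, nsmul_eq_mul, mul_one]
        exact_mod_cast Finset.card_le_card Finset.inter_subset_right
    _ ≤ C * M := hC M
    _ ≤ C * (δ * (n : ℝ) ^ finrank ℚ K) := mul_le_mul_of_nonneg_left hMle hC0.le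
    _ = _ := by ring

variable [IsGalois ℚ K] {σ : K ≃ₐ[ℚ] K}
    (hσ : ∀ τ : K ≃ₐ[ℚ] K, τ ∈ Subgroup.zpowers σ)
    {χ : Torus K → ℂ} (hχcont : Continuous χ)
    (hχmul : ∀ s t : Torus K, χ (s + t) = χ s * χ t)
    (hχabs : ∀ t : Torus K, ‖χ t‖ = 1)
    (hχnontriv : ∃ t : Torus K, χ t ≠ 1)

include hσ hχcont hχmul hχabs hχnontriv
lemma tendsto_Wsum_pow {J : Ideal (𝓞 K)} (hJ : J ≠ ⊥) :
    Tendsto (fun n : ℕ => ‖Wsum σ χ J (n ^ finrank ℚ K)‖ / (n : ℝ) ^ finrank ℚ K)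
      atTop (𝓝 0) := by
  obtain ⟨C, hC0, hC⟩ := exists_card_BB_le K
  rw [Metric.tendsto_atTop]
  intro ε hε
  have hδ : 0 < ε / (2 * C) := by positivity
  have h := tendsto_Tsum_zero hσ hχcont hχmul hχabs hχnontriv hδ hJ
  obtain ⟨N, hN⟩ := (Metric.tendsto_atTop.mp h) (ε / 2) (by positivity)
  refine ⟨max N 1, fun n hn => ?_⟩
  have hn0 : 0 < n := by omega
  have hp : (0 : ℝ) < (n : ℝ) ^ finrank ℚ K := by positivity
  have h1 := hN n (by omega)
  rw [dist_zero_right, norm_div, norm_pow, Complex.norm_natCast, div_lt_iff₀ hp] at h1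
  rw [dist_zero_right, Real.norm_eq_abs, abs_of_nonneg (by positivity), div_lt_iff₀ hp]
  have h2 := Wsum_sub_Tsum σ hχabs hC hC0 hδ J hn0
  have h3 : C * (ε / (2 * C)) = ε / 2 := by field_simp
  rw [h3] at h2
  calc _ = ‖(Wsum σ χ J (n ^ finrank ℚ K) - Tsum σ χ (ε / (2 * C)) J n)
          + Tsum σ χ (ε / (2 * C)) J n‖ := by rw [sub_add_cancel]
    _ ≤ _ := norm_add_le _ _
    _ < ε / 2 * (n : ℝ) ^ finrank ℚ K + ε / 2 * (n : ℝ) ^ finrank ℚ K := by linarith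
    _ = _ := by ring

lemma tendsto_Wsum {J : Ideal (𝓞 K)} (hJ : J ≠ ⊥) :
    Tendsto (fun N : ℕ => Wsum σ χ J N / (N : ℂ)) atTop (𝓝 0) := by
  set d := finrank ℚ K with hd
  have hd0 : d ≠ 0 := (finrank_pos (R := ℚ) (M := K)).ne'
  let m : ℕ → ℕ := fun N => Nat.findGreatest (fun n => n ^ d ≤ N) N
  have hm1 : ∀ N, (m N) ^ d ≤ N := fun N =>
    Nat.findGreatest_spec (P := fun n => n ^ d ≤ N) (m := 0) (Nat.zero_le _) (by simp [hd0])
  have hm2 : ∀ N, N < (m N + 1) ^ d := fun N => by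
    by_contra h
    push Not at h
    have h1 : m N + 1 ≤ N := (Nat.le_self_pow hd0 _).trans h
    have := Nat.le_findGreatest (P := fun n => n ^ d ≤ N) h1 h
    change m N + 1 ≤ m N at this
    omega
  have hmt : Tendsto m atTop atTop := by
    rw [tendsto_atTop]
    intro b
    filter_upwards [eventually_ge_atTop (b ^ d)] with N hN
    have := hm2 N
    have h2 : b ^ d < (m N + 1) ^ d := by omega
    have := lt_of_pow_lt_pow_left₀ d (by omega) h2
    omega
  have hm0 : ∀ᶠ N in atTop, 0 < m N := hmt.eventually (eventually_gt_atTop 0)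
  have hratio : Tendsto (fun N : ℕ => ((m N : ℝ) ^ d) / N) atTop (𝓝 1) := by
    have hl : Tendsto (fun N : ℕ => ((m N : ℝ) / ((m N : ℝ) + 1)) ^ d) atTop (𝓝 1) := by
      have := ((tendsto_natCast_div_add_atTop (1 : ℝ)).comp hmt).pow d
      simpa using this
    refine tendsto_of_tendsto_of_tendsto_of_le_of_le' hl tendsto_const_nhds ?_ ?_
    · filter_upwards [eventually_gt_atTop 0] with N hN
      rw [div_pow]
      have h1 : (N : ℝ) ≤ ((m N : ℝ) + 1) ^ d := by exact_mod_cast (hm2 N).le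
      have h2 : (0 : ℝ) < N := by exact_mod_cast hN
      gcongr
    · filter_upwards [eventually_gt_atTop 0] with N hN
      have h2 : (0 : ℝ) < N := by exact_mod_cast hN
      rw [div_le_one h2]
      exact_mod_cast hm1 N
  have hmd : Tendsto (fun N => (m N) ^ d) atTop atTop :=
    (tendsto_pow_atTop hd0).comp hmt
  have hA : Tendsto (fun N : ℕ => ‖Wsum σ χ J (m N ^ d)‖ / (m N : ℝ) ^ d * (((m N : ℝ) ^ d) / N)
      + (((BB K N).card : ℝ) / N - ((BB K (m N ^ d)).card : ℝ) / ((m N ^ d : ℕ) : ℝ) *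
        (((m N : ℝ) ^ d) / N))) atTop (𝓝 (0 * 1 + (dedekindZeta_residue K -
          dedekindZeta_residue K * 1))) :=
    (((tendsto_Wsum_pow hσ hχcont hχmul hχabs hχnontriv hJ).comp hmt).mul hratio).add
      ((tendsto_card_BB K).sub (((tendsto_card_BB K).comp hmd).mul hratio))
  rw [zero_mul, mul_one, sub_self, add_zero] at hA
  refine squeeze_zero_norm' ?_ hA
  filter_upwards [hm0, eventually_gt_atTop 0] with N hmN hN
  have hN' : (0 : ℝ) < N := by exact_mod_cast hN
  have hp : (0 : ℝ) < (m N : ℝ) ^ d := by positivity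
  have hp' : (0 : ℝ) < ((m N ^ d : ℕ) : ℝ) := by push_cast; exact hp
  rw [norm_div, Complex.norm_natCast, div_mul_div_cancel₀ hp.ne']
  push_cast at hp' ⊢
  rw [div_mul_div_cancel₀ hp.ne', ← sub_div, ← add_div]
  gcongr
  have hsub : PB J (m N ^ d) ⊆ PB J N := Finset.filter_subset_filter _ (BB_mono (hm1 N))
  have hdec : Wsum σ χ J N = Wsum σ χ J (m N ^ d) +
      ∑ I ∈ PB J N \ PB J (m N ^ d), χ (tI σ I) := by
    rw [Wsum, Wsum, add_comm, Finset.sum_sdiff hsub]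
  rw [hdec]
  refine (norm_add_le _ _).trans (add_le_add_right ?_ _)
  calc _ ≤ ∑ I ∈ PB J N \ PB J (m N ^ d), (1 : ℝ) := by
        refine (norm_sum_le _ _).trans (Finset.sum_le_sum fun I _ => (hχabs _).le)
    _ = ((PB J N \ PB J (m N ^ d)).card : ℝ) := by simp
    _ ≤ ((BB K N \ BB K (m N ^ d)).card : ℝ) := by
        have : PB J N \ PB J (m N ^ d) ⊆ BB K N \ BB K (m N ^ d) := by
          intro I
          simp only [PB, Finset.mem_sdiff, Finset.mem_filter]
          tauto
        exact_mod_cast Finset.card_le_card this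
    _ = _ := by
        rw [Finset.card_sdiff_of_subset (BB_mono (hm1 N)),
          Nat.cast_sub (Finset.card_le_card (BB_mono (hm1 N)))]

/-- sieved Weyl sums are small -/
lemma tendsto_Wsieve (F : Finset (Ideal (𝓞 K))) : (∀ I ∈ F, I ≠ ⊥) → ∀ {J : Ideal (𝓞 K)}, J ≠ ⊥ →
    Tendsto (fun N : ℕ => (∑ I ∈ (PB J N).filter (fun I => ∀ D ∈ F, ¬ D ∣ I), χ (tI σ I)) / (N : ℂ))
      atTop (𝓝 0) := by
  induction F using Finset.induction_on with
  | empty =>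
    intro _ J hJ
    simpa [Wsum] using tendsto_Wsum hσ hχcont hχmul hχabs hχnontriv hJ
  | insert D F hD ih =>
    intro hF J hJ
    have hF' : ∀ I ∈ F, I ≠ ⊥ := fun I hI => hF I (Finset.mem_insert_of_mem hI)
    have hD0 : D ≠ ⊥ := hF D (Finset.mem_insert_self _ _)
    have hJD : J ⊓ D ≠ ⊥ := by
      intro h
      have : J * D ≤ ⊥ := h ▸ Ideal.mul_le_inf
      exact mul_ne_zero hJ hD0 (le_bot_iff.mp this)
    have h := (ih hF' hJ).sub (ih hF' hJD)
    rw [sub_zero] at h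
    refine h.congr fun N => ?_
    rw [← sub_div]
    congr 1
    rw [sub_eq_iff_eq_add]
    have e1 : (PB J N).filter (fun I => ∀ D' ∈ insert D F, ¬ D' ∣ I) =
        ((PB J N).filter (fun I => ∀ D' ∈ F, ¬ D' ∣ I)).filter (fun I => ¬ D ∣ I) := by
      ext I; simp only [Finset.mem_filter, Finset.forall_mem_insert]; tauto
    have e2 : (PB (J ⊓ D) N).filter (fun I => ∀ D' ∈ F, ¬ D' ∣ I) =
        ((PB J N).filter (fun I => ∀ D' ∈ F, ¬ D' ∣ I)).filter (fun I => D ∣ I) := by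
      ext I
      simp only [PB, Finset.mem_filter, Ideal.dvd_iff_le, le_inf_iff]; tauto
    rw [e1, e2, add_comm, Finset.sum_filter_add_sum_filter_not]

end weyl
end WS

namespace WS
open NumberField InfinitePlace MeasureTheory Filter Topology Module
open scoped nonZeroDivisors Classical Pointwise

section red
variable {K : Type*} [Field K] [NumberField K]

lemma mem_PB_top {N : ℕ} {I : Ideal (𝓞 K)} : I ∈ PB (⊤ : Ideal (𝓞 K)) N ↔
    ∃ a : 𝓞 K, a ≠ 0 ∧ I = Ideal.span {a} ∧ Ideal.absNorm I ≤ N := by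
  rw [PB, Finset.mem_filter, mem_BB]
  constructor
  · rintro ⟨⟨h1, h2⟩, -, ⟨⟨a, rfl⟩⟩⟩
    refine ⟨a, fun h => h1 (by simp [h]), rfl, h2⟩
  · rintro ⟨a, h1, rfl, h2⟩
    exact ⟨⟨by simpa using h1, h2⟩, by rw [Ideal.dvd_iff_le]; exact le_top, ⟨⟨a, rfl⟩⟩⟩

lemma hilbert90 [IsGalois ℚ K] {σ : K ≃ₐ[ℚ] K}
    (hσ : ∀ τ : K ≃ₐ[ℚ] K, τ ∈ Subgroup.zpowers σ) {β : K} (hβ : Algebra.norm ℚ β = 1) :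
    ∃ y : K, y ≠ 0 ∧ y / σ y = β := by
  let φ : K →ₐ[ℚ] ℂ := (IsAlgClosed.lift : K →ₐ[ℚ] ℂ)
  let e : K ≃ₐ[ℚ] φ.fieldRange := AlgEquiv.ofInjectiveField φ
  haveI : FiniteDimensional ℚ φ.fieldRange := e.toLinearEquiv.finiteDimensional
  haveI : IsGalois ℚ φ.fieldRange := IsGalois.of_algEquiv e
  let g : φ.fieldRange ≃ₐ[ℚ] φ.fieldRange := (e.symm.trans σ).trans e
  have hg : ∀ τ : φ.fieldRange ≃ₐ[ℚ] φ.fieldRange, τ ∈ Subgroup.zpowers g := by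
    intro τ
    obtain ⟨n, hn⟩ := hσ (e.autCongr.symm τ)
    refine ⟨n, ?_⟩
    have h1 : g = e.autCongr σ := rfl
    simp only at hn ⊢
    rw [h1, ← map_zpow, hn, MulEquiv.apply_symm_apply]
  haveI : IsCyclic (φ.fieldRange ≃ₐ[ℚ] φ.fieldRange) := ⟨g, hg⟩
  have hx : Algebra.norm ℚ (e β) = 1 := by
    rw [Algebra.norm_eq_of_algEquiv e, hβ]
  obtain ⟨y, hy⟩ := groupCohomology.exists_div_of_norm_eq_one hg hx
  refine ⟨e.symm y, by simp, ?_⟩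
  apply e.injective
  rw [← hy, map_div₀]
  simp [g]

/-- classes of height at most `N` -/
noncomputable def tset (σ : K ≃ₐ[ℚ] K) (N : ℕ) : Finset (Torus K) :=
  (PB (⊤ : Ideal (𝓞 K)) N).image (tI σ)

lemma mem_tset {σ : K ≃ₐ[ℚ] K} {N : ℕ} {t : Torus K} : t ∈ tset σ N ↔
    ∃ a : 𝓞 K, a ≠ 0 ∧ (Algebra.norm ℤ a).natAbs ≤ N ∧ tcl σ (a : K) = t := by
  rw [tset, Finset.mem_image]
  constructor
  · rintro ⟨I, hI, rfl⟩
    obtain ⟨a, h1, rfl, h2⟩ := mem_PB_top.mp hI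
    rw [Ideal.absNorm_span_singleton] at h2
    exact ⟨a, h1, h2, (tI_span σ h1).symm⟩
  · rintro ⟨a, h1, h2, rfl⟩
    exact ⟨Ideal.span {a}, mem_PB_top.mpr ⟨a, h1, rfl, by rwa [Ideal.absNorm_span_singleton]⟩,
      tI_span σ h1⟩

lemma height_set_eq [IsGalois ℚ K] {σ : K ≃ₐ[ℚ] K}
    (hσ : ∀ τ : K ≃ₐ[ℚ] K, τ ∈ Subgroup.zpowers σ) (N : ℕ) :
    {t : Torus K | t ∈ Ntilde K ∧ hclass K σ t ≤ N} = (tset σ N : Set (Torus K)) := by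
  ext t
  rw [Finset.mem_coe, mem_tset]
  constructor
  · rintro ⟨⟨β, hβ, hb, rfl⟩, hN⟩
    have hne : {m : ℕ | ∃ γ : 𝓞 K, γ ≠ 0 ∧ m = (Algebra.norm ℤ γ).natAbs ∧
      ∃ hg : logMap K ((γ : K) / σ (γ : K)) ∈ sumKer K,
      QuotientAddGroup.mk (⟨logMap K ((γ : K) / σ (γ : K)), hg⟩ : sumKer K) = 
      (QuotientAddGroup.mk (⟨logMap K β, hb⟩ : sumKer K) : Torus K)}.Nonempty := by
      obtain ⟨y, hy0, hy⟩ := hilbert90 hσ hβ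
      obtain ⟨m, b, hm, hb0, hby⟩ := exists_int_mul_integral y hy0
      have hb0' : (b : K) ≠ 0 := by simpa using hb0
      have e : (b : K) / σ (b : K) = β := by
        rw [hby, map_mul, map_intCast, mul_div_mul_left _ _ (by exact_mod_cast hm), hy]
      refine ⟨_, b, hb0, rfl, logMap_div_mem σ hb0', ?_⟩
      simp only [e]
    obtain ⟨γ, h1, h2, hg, h3⟩ := Nat.sInf_mem hne
    refine ⟨γ, h1, ?_, ?_⟩
    · rw [← h2]; exact hN
    · rw [← h3, tcl_eq_mk σ (by simpa using h1)]
  · rintro ⟨a, h1, h2, rfl⟩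
    have h1' : (a : K) ≠ 0 := by simpa using h1
    refine ⟨⟨(a : K) / σ (a : K), ?_, logMap_div_mem σ h1', (tcl_eq_mk σ h1' _).symm⟩, ?_⟩
    · rw [div_eq_mul_inv, map_mul, Algebra.norm_inv]
      have : Algebra.norm ℚ (σ (a : K)) = Algebra.norm ℚ (a : K) :=
        Algebra.norm_eq_of_algEquiv σ (a : K)
      rw [this, mul_inv_cancel₀]
      exact Algebra.norm_ne_zero_iff.mpr h1'
    · refine le_trans (Nat.sInf_le ?_) h2
      exact ⟨a, h1, rfl, logMap_div_mem σ h1', tcl_eq_mk σ h1' _⟩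

lemma tset_zero (σ : K ≃ₐ[ℚ] K) : tset σ 0 = ∅ := by
  ext t
  rw [mem_tset]
  simp only [Nat.le_zero, Int.natAbs_eq_zero, Finset.notMem_empty, iff_false]
  rintro ⟨a, h, h', -⟩
  exact h (Algebra.norm_eq_zero_iff.mp h')

lemma final_reduction [IsGalois ℚ K] {σ : K ≃ₐ[ℚ] K}
    (hσ : ∀ τ : K ≃ₐ[ℚ] K, τ ∈ Subgroup.zpowers σ) (χ : Torus K → ℂ)
    (h : Tendsto (fun N : ℕ => (∑ t ∈ tset σ N, χ t) / (N : ℂ)) atTop (𝓝 0)) :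
    Tendsto (fun r : ℝ =>
        (∑ᶠ t ∈ {t : Torus K | t ∈ Ntilde K ∧ (hclass K σ t : ℝ) < r}, χ t) / (r : ℂ))
      atTop (𝓝 0) := by
  have hceil : Tendsto (fun r : ℝ => ⌈r⌉₊ - 1) atTop atTop :=
    (tendsto_sub_atTop_nat 1).comp tendsto_nat_ceil_atTop
  refine squeeze_zero_norm' ?_ (tendsto_norm_zero.comp (h.comp hceil))
  filter_upwards [eventually_gt_atTop 0] with r hr
  have hc : 0 < ⌈r⌉₊ := Nat.ceil_pos.mpr hr
  have hset : {t : Torus K | t ∈ Ntilde K ∧ (hclass K σ t : ℝ) < r}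
      = (tset σ (⌈r⌉₊ - 1) : Set (Torus K)) := by
    rw [← height_set_eq hσ]
    ext t
    refine and_congr Iff.rfl ?_
    rw [← Nat.lt_ceil]; omega
  change ‖(∑ᶠ t ∈ {t : Torus K | t ∈ Ntilde K ∧ (hclass K σ t : ℝ) < r}, χ t) / (r : ℂ)‖ ≤ _
  rw [hset, finsum_mem_coe_finset]
  simp only [Function.comp_apply, norm_div, Complex.norm_natCast, Complex.norm_real]
  rw [Real.norm_eq_abs, abs_of_pos hr]
  rcases Nat.eq_zero_or_pos (⌈r⌉₊ - 1) with h0 | h0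
  · rw [h0, tset_zero]; simp
  · have h0' : (0 : ℝ) < ((⌈r⌉₊ - 1 : ℕ) : ℝ) := by exact_mod_cast h0
    have : ((⌈r⌉₊ - 1 : ℕ) : ℝ) ≤ r := by
      have := (Nat.lt_ceil (a := r) (n := ⌈r⌉₊ - 1)).mp (by omega)
      exact this.le
    gcongr

/-- if the number of classes is `o(N)` we are done -/
lemma of_card_tset {σ : K ≃ₐ[ℚ] K} {χ : Torus K → ℂ} (hχabs : ∀ t : Torus K, ‖χ t‖ = 1)
    (h : Tendsto (fun N : ℕ => ((tset σ N).card : ℝ) / N) atTop (𝓝 0)) :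
    Tendsto (fun N : ℕ => (∑ t ∈ tset σ N, χ t) / (N : ℂ)) atTop (𝓝 0) := by
  refine squeeze_zero_norm (fun N => ?_) h
  rw [norm_div, Complex.norm_natCast]
  gcongr
  refine (norm_sum_le _ _).trans ?_
  simp [hχabs]
end red
end WS

namespace WS
open NumberField InfinitePlace MeasureTheory Filter Topology Module
open scoped nonZeroDivisors Classical Pointwise

section galact
variable {K : Type*} [Field K] [NumberField K]

lemma smul_span' (τ : K ≃ₐ[ℚ] K) (a : 𝓞 K) :
    τ • (Ideal.span {a} : Ideal (𝓞 K)) = Ideal.span {τ • a} := by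
  rw [Ideal.pointwise_smul_def, Ideal.map_span, Set.image_singleton]; rfl

lemma coe_smul' (τ : K ≃ₐ[ℚ] K) (a : 𝓞 K) : ((τ • a : 𝓞 K) : K) = τ (a : K) := rfl

lemma smul_ne_bot (τ : K ≃ₐ[ℚ] K) {I : Ideal (𝓞 K)} (h : I ≠ ⊥) : τ • I ≠ ⊥ := by
  intro h'
  apply h
  have h2 : τ⁻¹ • τ • I = τ⁻¹ • (⊥ : Ideal (𝓞 K)) := by rw [h']
  rw [inv_smul_smul] at h2
  rw [h2]
  exact smul_zero (A := Ideal (𝓞 K)) _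

lemma absNorm_smul (τ : K ≃ₐ[ℚ] K) (I : Ideal (𝓞 K)) :
    Ideal.absNorm (τ • I) = Ideal.absNorm I := by
  have h := Ideal.relNorm_smul (R := ℤ) τ I
  rw [← Ideal.absNorm_relNorm ℤ, h, Ideal.absNorm_relNorm]

lemma ideal_pow_inj {I J : Ideal (𝓞 K)} {n : ℕ} (hn : n ≠ 0) (h : I ^ n = J ^ n) : I = J :=
  pow_left_injective hn h

lemma exists_pow_principal (I : Ideal (𝓞 K)) (hI : I ≠ ⊥) :
    ∃ n : ℕ, n ≠ 0 ∧ ∃ a : 𝓞 K, a ≠ 0 ∧ I ^ n = Ideal.span {a} := by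
  refine ⟨Fintype.card (ClassGroup (𝓞 K)), Fintype.card_ne_zero, ?_⟩
  have hI' : I ^ Fintype.card (ClassGroup (𝓞 K)) ∈ nonZeroDivisors (Ideal (𝓞 K)) :=
    mem_nonZeroDivisors_of_ne_zero (pow_ne_zero _ hI)
  have h : ClassGroup.mk0 ⟨_, hI'⟩ = 1 := by
    have : (⟨_, hI'⟩ : (Ideal (𝓞 K))⁰) =
      (⟨I, mem_nonZeroDivisors_of_ne_zero hI⟩ : (Ideal (𝓞 K))⁰) ^
        Fintype.card (ClassGroup (𝓞 K)) := rfl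
    rw [this, map_pow, pow_card_eq_one]
  rw [ClassGroup.mk0_eq_one_iff] at h
  obtain ⟨⟨a, ha⟩⟩ := h
  refine ⟨a, ?_, ha⟩
  rintro rfl
  exact pow_ne_zero (Fintype.card (ClassGroup (𝓞 K))) hI (by rw [ha]; simp)

lemma prod_smul_span [IsGalois ℚ K] (a : 𝓞 K) :
    ∏ τ : K ≃ₐ[ℚ] K, τ • (Ideal.span {a} : Ideal (𝓞 K))
      = Ideal.span {((Ideal.absNorm (Ideal.span {a}) : ℕ) : 𝓞 K)} := by
  simp_rw [smul_span']
  rw [Ideal.prod_span_singleton, Ideal.absNorm_span_singleton]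
  have h : ∏ τ : K ≃ₐ[ℚ] K, τ • a = ((Algebra.norm ℤ a : ℤ) : 𝓞 K) := by
    apply RingOfIntegers.ext
    have h1 := Algebra.norm_eq_prod_automorphisms ℚ (a : K)
    have h2 : ((∏ τ : K ≃ₐ[ℚ] K, τ • a : 𝓞 K) : K) = ∏ τ : K ≃ₐ[ℚ] K, τ (a : K) :=
      map_prod (algebraMap (𝓞 K) K) _ _
    rw [h2, ← h1, ← Algebra.coe_norm_int]
    simp
  rw [h, Ideal.span_singleton_eq_span_singleton]
  rcases Int.natAbs_eq (Algebra.norm ℤ a) with h | h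
  · conv_lhs => rw [h]
    simp
  · conv_lhs => rw [h]
    simp

lemma prod_smul_eq [IsGalois ℚ K] (I : Ideal (𝓞 K)) (hI : I ≠ ⊥) :
    ∏ τ : K ≃ₐ[ℚ] K, τ • I = Ideal.span {((Ideal.absNorm I : ℕ) : 𝓞 K)} := by
  obtain ⟨n, hn, a, ha, h⟩ := exists_pow_principal I hI
  apply ideal_pow_inj hn
  rw [← Finset.prod_pow]
  simp_rw [← smul_pow']
  rw [h, prod_smul_span, ← h, map_pow, Ideal.span_singleton_pow]
  simp

lemma inv_all {σ : K ≃ₐ[ℚ] K} (hσ : ∀ τ : K ≃ₐ[ℚ] K, τ ∈ Subgroup.zpowers σ)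
    {I : Ideal (𝓞 K)} (h : σ • I = I) (τ : K ≃ₐ[ℚ] K) : τ • I = I := by
  have h1 : Subgroup.zpowers σ ≤ MulAction.stabilizer (K ≃ₐ[ℚ] K) I := by
    rw [Subgroup.zpowers_le]; exact h
  exact h1 (hσ τ)

lemma inv_pow_eq [IsGalois ℚ K] {σ : K ≃ₐ[ℚ] K} (hσ : ∀ τ : K ≃ₐ[ℚ] K, τ ∈ Subgroup.zpowers σ)
    {I : Ideal (𝓞 K)} (hI : I ≠ ⊥) (h : σ • I = I) :
    I ^ finrank ℚ K = Ideal.span {((Ideal.absNorm I : ℕ) : 𝓞 K)} := by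
  rw [← prod_smul_eq I hI, Finset.prod_congr rfl (fun τ _ => inv_all hσ h τ), Finset.prod_const,
    Finset.card_univ, ← Nat.card_eq_fintype_card, IsGalois.card_aut_eq_finrank]

lemma inv_eq_of_norm [IsGalois ℚ K] {σ : K ≃ₐ[ℚ] K}
    (hσ : ∀ τ : K ≃ₐ[ℚ] K, τ ∈ Subgroup.zpowers σ)
    {I J : Ideal (𝓞 K)} (hI : I ≠ ⊥) (hJ : J ≠ ⊥) (h : σ • I = I) (h' : σ • J = J)
    (hn : Ideal.absNorm I = Ideal.absNorm J) : I = J := by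
  apply ideal_pow_inj (n := finrank ℚ K) finrank_pos.ne'
  rw [inv_pow_eq hσ hI h, inv_pow_eq hσ hJ h', hn]

/-- square divisor of a rational prime divides the different -/
lemma sq_dvd_prime {p : ℕ} (hp : p.Prime) {P : Ideal (𝓞 K)}
    (h : P ^ 2 ∣ Ideal.span {(p : 𝓞 K)}) : P ∣ differentIdeal ℤ (𝓞 K) := by
  have hm : (Ideal.span {(p : ℤ)}).IsMaximal := by
    refine PrincipalIdealRing.isMaximal_of_irreducible ?_
    exact (Nat.prime_iff_prime_int.mp hp).irreducible
  have := pow_sub_one_dvd_differentIdeal ℤ (p := Ideal.span {(p : ℤ)}) P 2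
    (by simpa using hp.ne_zero) (by rw [Ideal.map_span, Set.image_singleton]; simpa using h)
  simpa using this

end galact
end WS

namespace WS
open NumberField InfinitePlace MeasureTheory Filter Topology Module
open scoped nonZeroDivisors Classical Pointwise

section invsum
variable {K : Type*} [Field K] [NumberField K]

lemma span_nat_ne_bot {n : ℕ} (hn : n ≠ 0) : (Ideal.span {(n : 𝓞 K)} : Ideal (𝓞 K)) ≠ ⊥ := by
  simpa using hn

lemma absNorm_span_nat (n : ℕ) :
    Ideal.absNorm (Ideal.span {(n : 𝓞 K)}) = n ^ finrank ℚ K := by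
  rw [Ideal.absNorm_span_singleton]
  have : ((n : ℕ) : 𝓞 K) = algebraMap ℤ (𝓞 K) n := by simp
  rw [this, Algebra.norm_algebraMap, Int.natAbs_pow, Int.natAbs_natCast,
    RingOfIntegers.rank]

lemma dvd_of_prime_dvd_span {n : ℕ} {p : ℕ} (hp : p.Prime) {P : Ideal (𝓞 K)} (hP : Prime P)
    (h : P ∣ Ideal.span {(p : 𝓞 K)}) : p ∣ Ideal.absNorm P := by
  have h1 : Ideal.absNorm P ∣ p ^ finrank ℚ K := by
    rw [← absNorm_span_nat (K := K)]; exact Ideal.absNorm_dvd_absNorm_of_le (Ideal.le_of_dvd h)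
  have h2 : Ideal.absNorm P ≠ 1 := by
    rw [Ne, Ideal.absNorm_eq_one_iff, ← Ideal.isUnit_iff]; exact hP.not_unit
  obtain ⟨k, -, hk⟩ := (Nat.dvd_prime_pow hp).mp h1
  rw [hk] at h2 ⊢
  exact dvd_pow_self _ (by rintro rfl; simp at h2)

lemma exists_prime_dvd_span (K : Type*) [Field K] [NumberField K] {p : ℕ} (hp : p.Prime) :
    ∃ P : Ideal (𝓞 K), Prime P ∧ P ∣ Ideal.span {(p : 𝓞 K)} := by
  obtain ⟨P, h1, h2⟩ := WfDvdMonoid.exists_irreducible_factor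
    (a := (Ideal.span {(p : 𝓞 K)} : Ideal (𝓞 K))) (by
      rw [Ideal.isUnit_iff, ← Ideal.absNorm_eq_one_iff, absNorm_span_nat]
      exact fun h => hp.one_lt.ne' ((Nat.pow_eq_one.mp h).resolve_right finrank_pos.ne'))
    (span_nat_ne_bot hp.ne_zero)
  exact ⟨P, h1.prime, h2⟩

lemma emultiplicity_one_of_not_dvd {p : ℕ} (hp : p.Prime)
    (hpD : ¬ p ∣ Ideal.absNorm (differentIdeal ℤ (𝓞 K))) {P : Ideal (𝓞 K)} (hP : Prime P)
    (h : P ∣ Ideal.span {(p : 𝓞 K)}) : emultiplicity P (Ideal.span {(p : 𝓞 K)}) = 1 := by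
  have : ((1 : ℕ) : ℕ∞) = 1 := rfl
  rw [← this, emultiplicity_eq_coe]
  refine ⟨by simpa using h, fun h2 => hpD ?_⟩
  exact (dvd_of_prime_dvd_span (n := 0) hp hP h).trans
    (Ideal.absNorm_dvd_absNorm_of_le (Ideal.le_of_dvd (sq_dvd_prime hp h2)))

lemma finrank_dvd_factorization [IsGalois ℚ K] {σ : K ≃ₐ[ℚ] K}
    (hσ : ∀ τ : K ≃ₐ[ℚ] K, τ ∈ Subgroup.zpowers σ)
    {I : Ideal (𝓞 K)} (hI : I ≠ ⊥) (h : σ • I = I) {p : ℕ} (hp : p.Prime)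
    (hpD : ¬ p ∣ Ideal.absNorm (differentIdeal ℤ (𝓞 K))) :
    finrank ℚ K ∣ (Ideal.absNorm I).factorization p := by
  set n := Ideal.absNorm I with hn
  have hn0 : n ≠ 0 := (absNorm_pos' hI).ne'
  obtain ⟨P, hP, hPp⟩ := exists_prime_dvd_span K hp
  have h1 := inv_pow_eq hσ hI h
  rw [← hn, ← Nat.ordProj_mul_ordCompl_eq_self n p, Nat.cast_mul, Nat.cast_pow,
    ← Ideal.span_singleton_mul_span_singleton, ← Ideal.span_singleton_pow] at h1
  have h2 := congrArg (emultiplicity P) h1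
  have h3 : emultiplicity P (Ideal.span {((n / p ^ n.factorization p : ℕ) : 𝓞 K)}) = 0 := by
    rw [emultiplicity_eq_zero]
    intro h4
    have h5 := (dvd_of_prime_dvd_span (n := 0) hp hP hPp).trans
      (Ideal.absNorm_dvd_absNorm_of_le (Ideal.le_of_dvd h4))
    rw [absNorm_span_nat] at h5
    exact Nat.not_dvd_ordCompl hp hn0 (hp.dvd_of_dvd_pow h5)
  rw [emultiplicity_mul hP, emultiplicity_pow hP, emultiplicity_pow hP, h3,
    emultiplicity_one_of_not_dvd hp hpD hP hPp, mul_one, add_zero] at h2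
  have hfin : FiniteMultiplicity P I := FiniteMultiplicity.of_prime_left hP hI
  rw [hfin.emultiplicity_eq_multiplicity] at h2
  exact ⟨_, by exact_mod_cast h2.symm⟩

lemma exists_pow_mul_dvd {d n D : ℕ} (hd : d ≠ 0) (hn : n ≠ 0) (hD : D ≠ 0)
    (h : ∀ p : ℕ, p.Prime → ¬ p ∣ D → d ∣ n.factorization p) :
    ∃ k m : ℕ, n = k ^ d * m ∧ m ∣ D ^ d := by
  have hfin : {k : ℕ | k ^ d ∣ n}.Finite := by
    refine (Set.finite_Iic n).subset fun k hk => ?_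
    exact (Nat.le_self_pow hd k).trans (Nat.le_of_dvd (Nat.pos_of_ne_zero hn) hk)
  obtain ⟨k, hk, hmax⟩ := hfin.exists_maximal ⟨1, by simp⟩
  obtain ⟨m, rfl⟩ := hk
  refine ⟨k, m, rfl, ?_⟩
  have hk0 : k ≠ 0 := by rintro rfl; simp [hd] at hn
  have hm0 : m ≠ 0 := by rintro rfl; simp at hn
  have hlt : ∀ p : ℕ, p.Prime → m.factorization p < d := by
    intro p hp
    by_contra hcon
    push Not at hcon
    have h1 : p ^ d ∣ m := (hp.pow_dvd_iff_le_factorization hm0).mpr hcon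
    have h2 : (k * p) ∈ {a : ℕ | a ^ d ∣ k ^ d * m} := by
      rw [Set.mem_setOf_eq, mul_pow]; exact mul_dvd_mul_left _ h1
    have h3 := hmax h2 (Nat.le_mul_of_pos_right _ hp.pos)
    have := hp.two_le
    have : k * 2 ≤ k * p := Nat.mul_le_mul_left _ this
    omega
  rw [← Nat.factorization_prime_le_iff_dvd hm0 (pow_ne_zero _ hD)]
  intro p hp
  rw [Nat.factorization_pow]
  simp only [Finsupp.smul_apply, smul_eq_mul]
  by_cases hpD : p ∣ D
  · have : 1 ≤ D.factorization p := (hp.dvd_iff_one_le_factorization hD).mp hpD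
    exact (hlt p hp).le.trans (Nat.le_mul_of_pos_right _ this)
  · have h1 := h p hp hpD
    rw [Nat.factorization_mul (pow_ne_zero _ hk0) hm0, Nat.factorization_pow] at h1
    simp only [Finsupp.add_apply, Finsupp.smul_apply, smul_eq_mul] at h1
    rw [Nat.dvd_add_right (dvd_mul_right _ _)] at h1
    rw [Nat.eq_zero_of_dvd_of_lt h1 (hlt p hp)]
    exact Nat.zero_le _

lemma summable_aux (d : ℕ) (hd : 1 < d) (S : Finset ℕ) :
    Summable (fun x : ℕ × {m // m ∈ S} => (1 / (x.1 : ℝ) ^ d) * (1 / (x.2.1 : ℝ))) :=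
  Summable.mul_of_nonneg (f := fun k : ℕ => 1 / (k : ℝ) ^ d)
    (g := fun m : {m // m ∈ S} => 1 / (m.1 : ℝ))
    (Real.summable_one_div_nat_pow.mpr hd) (Summable.of_finite)
    (fun k => by simp only [Pi.zero_apply]; positivity)
    (fun k => by simp only [Pi.zero_apply]; positivity)

lemma summable_inv [IsGalois ℚ K] {σ : K ≃ₐ[ℚ] K}
    (hσ : ∀ τ : K ≃ₐ[ℚ] K, τ ∈ Subgroup.zpowers σ) (hd : 1 < finrank ℚ K) :
    Summable (fun I : {I : Ideal (𝓞 K) // I ≠ ⊥ ∧ σ • I = I} =>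
      1 / (Ideal.absNorm I.1 : ℝ)) := by
  set D := Ideal.absNorm (differentIdeal ℤ (𝓞 K)) with hDdef
  have hD : D ≠ 0 := (absNorm_pos' differentIdeal_ne_bot).ne'
  have key : ∀ I : {I : Ideal (𝓞 K) // I ≠ ⊥ ∧ σ • I = I}, ∃ k : ℕ, ∃ m : {m // m ∈ (D ^ finrank ℚ K).divisors},
      Ideal.absNorm I.1 = k ^ finrank ℚ K * m.1 := by
    intro I
    obtain ⟨k, m, h1, h2⟩ := exists_pow_mul_dvd (d := finrank ℚ K) (by omega) (absNorm_pos' I.2.1).ne' hD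
      (fun p hp hpD => finrank_dvd_factorization hσ I.2.1 I.2.2 hp hpD)
    exact ⟨k, ⟨m, by simp [h2, hD]⟩, h1⟩
  choose f g hfg using key
  have hinj : Function.Injective (fun I => (f I, g I)) := by
    intro I J hIJ
    simp only [Prod.mk.injEq] at hIJ
    apply Subtype.ext
    refine inv_eq_of_norm hσ I.2.1 J.2.1 I.2.2 J.2.2 ?_
    rw [hfg, hfg, hIJ.1, hIJ.2]
  have hs := summable_aux (finrank ℚ K) hd (D ^ finrank ℚ K).divisors
  refine (hs.comp_injective hinj).congr fun I => ?_
  simp only [Function.comp_apply]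
  rw [hfg I]; push_cast
  rw [one_div_mul_one_div]

end invsum
end WS

namespace WS
open NumberField InfinitePlace MeasureTheory Filter Topology Module
open scoped nonZeroDivisors Classical Pointwise

section realcase
variable {K : Type*} [Field K] [NumberField K]

lemma eq_of_logMap_eq {a b : K} (ha : a ≠ 0) (hb : b ≠ 0) (h : logMap K a = logMap K b)
    (w : InfinitePlace K) : w a = w b := by
  have h1 := congrFun h w
  simp only [logMap] at h1
  have ha' : 0 < w a := InfinitePlace.pos_iff.mpr ha
  have hb' : 0 < w b := InfinitePlace.pos_iff.mpr hb
  have h2 := Real.log_injOn_pos (Set.mem_Ioi.mpr (pow_pos ha' _)) (Set.mem_Ioi.mpr (pow_pos hb' _)) h1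
  exact (pow_left_inj₀ ha'.le hb'.le (InfinitePlace.mult_pos (w := w)).ne').mp h2

lemma eq_or_neg_of_real {w : InfinitePlace K} (hw : w.IsReal) {a b : K} (h : w a = w b) :
    a = b ∨ a = -b := by
  rw [← InfinitePlace.norm_embedding_of_isReal hw, ← InfinitePlace.norm_embedding_of_isReal hw,
    Real.norm_eq_abs, Real.norm_eq_abs, abs_eq_abs] at h
  rcases h with h | h
  · left; exact (embedding_of_isReal hw).injective h
  · right; apply (embedding_of_isReal hw).injective; rw [h, map_neg]

lemma tcl_eq_real {σ : K ≃ₐ[ℚ] K} {w : InfinitePlace K} (hw : w.IsReal) {a b : 𝓞 K} (ha : a ≠ 0)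
    (hb : b ≠ 0) (h : tcl σ (a : K) = tcl σ (b : K)) :
    σ • (Ideal.span {a} : Ideal (𝓞 K)) * Ideal.span {b}
      = σ • (Ideal.span {b} : Ideal (𝓞 K)) * Ideal.span {a} := by
  have ha' : (a : K) ≠ 0 := by simpa using ha
  have hb' : (b : K) ≠ 0 := by simpa using hb
  have hsa : σ (a : K) ≠ 0 := by simpa using ha
  have hsb : σ (b : K) ≠ 0 := by simpa using hb
  unfold tcl at h
  rw [QuotientAddGroup.eq, mem_logUnits_iff] at h
  obtain ⟨u, hu⟩ := h
  have hu0 : ((u : 𝓞 K) : K) ≠ 0 := by simp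
  rw [AddSubgroup.coe_add, AddSubgroup.coe_neg, dmap_logMap σ ha', dmap_logMap σ hb',
    logMap_div ha' hsa, logMap_div hb' hsb] at hu
  have h1 : logMap K (σ (a : K) * (b : K)) = logMap K ((u : 𝓞 K) * (σ (b : K) * (a : K))) := by
    rw [logMap_mul hsa hb', logMap_mul hu0 (mul_ne_zero hsb ha'), logMap_mul hsb ha', ← hu]
    abel
  have h2 := eq_of_logMap_eq (mul_ne_zero hsa hb') (mul_ne_zero hu0 (mul_ne_zero hsb ha')) h1 w
  rw [smul_span', smul_span', Ideal.span_singleton_mul_span_singleton,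
    Ideal.span_singleton_mul_span_singleton, Ideal.span_singleton_eq_span_singleton]
  rcases eq_or_neg_of_real hw h2 with h3 | h3
  · have : σ • a * b = (u : 𝓞 K) * (σ • b * a) := RingOfIntegers.ext h3
    rw [this]
    exact associated_unit_mul_left _ _ u.isUnit
  · have : σ • a * b = (u : 𝓞 K) * -(σ • b * a) := by
      apply RingOfIntegers.ext
      rw [mul_neg]; exact h3
    rw [this]
    exact (associated_unit_mul_left _ _ u.isUnit).trans (Associated.neg_left (Associated.refl _))

lemma ideal_gcd_decomp (I J : Ideal (𝓞 K)) (hI : I ≠ ⊥) :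
    ∃ g d b : Ideal (𝓞 K), g ≠ ⊥ ∧ I = g * d ∧ J = g * b ∧ IsCoprime d b := by
  obtain ⟨d, hd⟩ := Ideal.dvd_iff_le.mpr (le_sup_left : I ≤ I ⊔ J)
  obtain ⟨b, hb⟩ := Ideal.dvd_iff_le.mpr (le_sup_right : J ≤ I ⊔ J)
  have hg : I ⊔ J ≠ ⊥ := fun h => hI (by rw [eq_bot_iff, ← h]; exact le_sup_left)
  refine ⟨I ⊔ J, d, b, hg, hd, hb, ?_⟩
  rw [Ideal.isCoprime_iff_sup_eq]
  have : (I ⊔ J) * (d ⊔ b) = (I ⊔ J) * ⊤ := by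
    rw [Ideal.mul_sup, ← hd, ← hb, Ideal.mul_top]
  exact mul_left_cancel₀ hg this

lemma inv_of_coprime {σ : K ≃ₐ[ℚ] K} {d b : Ideal (𝓞 K)} (hc : IsCoprime d b)
    (h : σ • d * b = σ • b * d) : σ • d = d := by
  have hc' : IsCoprime (σ • d) (σ • b) := by
    obtain ⟨x, y, hxy⟩ := hc
    refine ⟨σ • x, σ • y, ?_⟩
    rw [← smul_mul', ← smul_mul', ← smul_add, hxy, smul_one]
  have h1 : d ∣ σ • d := hc.dvd_of_dvd_mul_right (by rw [h]; exact dvd_mul_left _ _)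
  have h2 : σ • d ∣ d := hc'.dvd_of_dvd_mul_left (by rw [← h]; exact dvd_mul_right _ _)
  exact dvd_antisymm h2 h1

/-- structure of two principal ideals in the same fibre -/
lemma fibre_real {σ : K ≃ₐ[ℚ] K} {w : InfinitePlace K} (hw : w.IsReal) {a b : 𝓞 K} (ha : a ≠ 0)
    (hb : b ≠ 0) (h : tcl σ (a : K) = tcl σ (b : K)) :
    ∃ g d e : Ideal (𝓞 K), g ≠ ⊥ ∧ d ≠ ⊥ ∧ e ≠ ⊥ ∧ Ideal.span {a} = g * d ∧
      Ideal.span {b} = g * e ∧ σ • d = d ∧ σ • e = e := by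
  have ha0 : (Ideal.span {a} : Ideal (𝓞 K)) ≠ ⊥ := by simpa using ha
  have hb0 : (Ideal.span {b} : Ideal (𝓞 K)) ≠ ⊥ := by simpa using hb
  obtain ⟨g, d, e, hg, h1, h2, hc⟩ := ideal_gcd_decomp (Ideal.span {a}) (Ideal.span {b}) ha0
  have hd0 : d ≠ ⊥ := by rintro rfl; exact ha0 (by rw [h1]; simp)
  have he0 : e ≠ ⊥ := by rintro rfl; exact hb0 (by rw [h2]; simp)
  have h3 := tcl_eq_real hw ha hb h
  rw [h1, h2, smul_mul', smul_mul'] at h3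
  have h4 : σ • d * e = σ • e * d := by
    have hgg : σ • g * g ≠ ⊥ := mul_ne_zero (smul_ne_bot σ hg) hg
    refine mul_left_cancel₀ (a := σ • g * g) hgg ?_
    calc σ • g * g * (σ • d * e) = σ • g * σ • d * (g * e) := by ring
      _ = _ := by rw [h3]; ring
  exact ⟨g, d, e, hg, hd0, he0, h1, h2, inv_of_coprime hc h4, inv_of_coprime hc.symm h4.symm⟩

/-- the removable divisors -/
def DD (σ : K ≃ₐ[ℚ] K) : Set (Ideal (𝓞 K)) :=
  {d | d ≠ ⊥ ∧ σ • d = d ∧ ∃ e : Ideal (𝓞 K), e ≠ ⊥ ∧ Ideal.absNorm e < Ideal.absNorm d ∧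
    ∃ β δ : 𝓞 K, β ≠ 0 ∧ δ ≠ 0 ∧ tcl σ (β : K) = tcl σ (δ : K) ∧
      Ideal.span {β} * d = Ideal.span {δ} * e}

lemma exists_smaller {σ : K ≃ₐ[ℚ] K} {a : 𝓞 K} (ha : a ≠ 0) {d : Ideal (𝓞 K)} (hd : d ∈ DD σ)
    (h : d ∣ Ideal.span {a}) : ∃ c : 𝓞 K, c ≠ 0 ∧ tcl σ (c : K) = tcl σ (a : K) ∧
      Ideal.absNorm (Ideal.span {c}) < Ideal.absNorm (Ideal.span {a}) := by
  obtain ⟨hd0, -, e, he0, hlt, β, δ, hβ, hδ, ht, hβδ⟩ := hd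
  obtain ⟨J, hJ⟩ := h
  have ha0 : (Ideal.span {a} : Ideal (𝓞 K)) ≠ ⊥ := by simpa using ha
  have hJ0 : J ≠ ⊥ := by rintro rfl; exact ha0 (by rw [hJ]; simp)
  have h1 : Ideal.span {β * a} = Ideal.span {δ} * (e * J) := by
    rw [← Ideal.span_singleton_mul_span_singleton, hJ, ← mul_assoc, hβδ, mul_assoc]
  have h2 : δ ∣ β * a := by
    rw [← Ideal.span_singleton_le_span_singleton, h1]; exact Ideal.mul_le_left
  obtain ⟨c, hc⟩ := h2
  have hc0 : c ≠ 0 := by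
    rintro rfl; rw [mul_zero] at hc; exact mul_ne_zero hβ ha hc
  have h3 : Ideal.span {c} = e * J := by
    rw [hc, ← Ideal.span_singleton_mul_span_singleton] at h1
    exact mul_left_cancel₀ (a := Ideal.span {δ}) (by simpa using hδ) h1
  refine ⟨c, hc0, ?_, ?_⟩
  · have h4 : tcl σ ((β * a : 𝓞 K) : K) = tcl σ ((δ * c : 𝓞 K) : K) := by rw [hc]
    rw [coe_mul', coe_mul', tcl_mul σ (by simpa using hβ) (by simpa using ha),
      tcl_mul σ (by simpa using hδ) (by simpa using hc0), ht] at h4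
    exact (add_left_cancel h4).symm
  · rw [h3, hJ, map_mul, map_mul]
    exact Nat.mul_lt_mul_of_pos_right hlt (absNorm_pos' hJ0)

lemma exists_DD {σ : K ≃ₐ[ℚ] K} {w : InfinitePlace K} (hw : w.IsReal) {a b : 𝓞 K} (ha : a ≠ 0)
    (hb : b ≠ 0) (h : tcl σ (b : K) = tcl σ (a : K))
    (hlt : Ideal.absNorm (Ideal.span {b}) < Ideal.absNorm (Ideal.span {a})) :
    ∃ d ∈ DD σ, d ∣ Ideal.span {a} := by
  obtain ⟨g, d, e, hg, hd, he, h1, h2, h3, h4⟩ := fibre_real hw ha hb h.symm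
  refine ⟨d, ⟨hd, h3, e, he, ?_, b, a, hb, ha, h, ?_⟩, by rw [h1]; exact dvd_mul_left _ _⟩
  · rw [h1, h2, map_mul, map_mul] at hlt
    exact lt_of_mul_lt_mul_left hlt (Nat.zero_le _)
  · rw [h1, h2]; ring

lemma fibre_norm_eq [IsGalois ℚ K] {σ : K ≃ₐ[ℚ] K}
    (hσ : ∀ τ : K ≃ₐ[ℚ] K, τ ∈ Subgroup.zpowers σ) {w : InfinitePlace K} (hw : w.IsReal)
    {a b : 𝓞 K} (ha : a ≠ 0) (hb : b ≠ 0) (h : tcl σ (b : K) = tcl σ (a : K))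
    (hlt : Ideal.absNorm (Ideal.span {b}) = Ideal.absNorm (Ideal.span {a})) :
    (Ideal.span {a} : Ideal (𝓞 K)) = Ideal.span {b} := by
  obtain ⟨g, d, e, hg, hd, he, h1, h2, h3, h4⟩ := fibre_real hw ha hb h.symm
  rw [h1, h2, map_mul, map_mul] at hlt
  have := Nat.eq_of_mul_eq_mul_left (absNorm_pos' hg) hlt
  rw [h1, h2, inv_eq_of_norm hσ hd he h3 h4 this.symm]

/-- the minimal principal ideals -/
noncomputable def MM (σ : K ≃ₐ[ℚ] K) (N : ℕ) : Finset (Ideal (𝓞 K)) :=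
  (PB (⊤ : Ideal (𝓞 K)) N).filter (fun I => ∀ d ∈ DD σ, ¬ d ∣ I)

lemma sum_tset_real [IsGalois ℚ K] {σ : K ≃ₐ[ℚ] K}
    (hσ : ∀ τ : K ≃ₐ[ℚ] K, τ ∈ Subgroup.zpowers σ) {w : InfinitePlace K} (hw : w.IsReal)
    (χ : Torus K → ℂ) (N : ℕ) :
    ∑ t ∈ tset σ N, χ t = ∑ I ∈ MM σ N, χ (tI σ I) := by
  symm
  refine Finset.sum_bij (fun I _ => tI σ I) ?_ ?_ ?_ (fun _ _ => rfl)
  · intro I hI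
    exact Finset.mem_image_of_mem _ (Finset.mem_filter.mp hI).1
  · intro I hI J hJ hIJ
    obtain ⟨hI1, hI2⟩ := Finset.mem_filter.mp hI
    obtain ⟨hJ1, hJ2⟩ := Finset.mem_filter.mp hJ
    obtain ⟨a, ha, rfl, -⟩ := mem_PB_top.mp hI1
    obtain ⟨b, hb, rfl, -⟩ := mem_PB_top.mp hJ1
    simp only [tI_span σ ha, tI_span σ hb] at hIJ
    rcases lt_trichotomy (Ideal.absNorm (Ideal.span {b})) (Ideal.absNorm (Ideal.span {a})) with h | h | h
    · obtain ⟨d, hd, hd'⟩ := exists_DD hw ha hb hIJ.symm h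
      exact absurd hd' (hI2 d hd)
    · exact fibre_norm_eq hσ hw ha hb hIJ.symm h
    · obtain ⟨d, hd, hd'⟩ := exists_DD hw hb ha hIJ h
      exact absurd hd' (hJ2 d hd)
  · intro t ht
    have hex : ∃ n : ℕ, ∃ a : 𝓞 K, a ≠ 0 ∧ Ideal.absNorm (Ideal.span {a}) = n ∧
        tcl σ (a : K) = t := by
      obtain ⟨a, ha, -, h⟩ := mem_tset.mp ht
      exact ⟨_, a, ha, rfl, h⟩
    obtain ⟨a, ha, han, hat⟩ := Nat.find_spec hex
    have hmin : ∀ b : 𝓞 K, b ≠ 0 → tcl σ (b : K) = t →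
        Ideal.absNorm (Ideal.span {a}) ≤ Ideal.absNorm (Ideal.span {b}) := by
      intro b hb hbt
      rw [han]
      exact Nat.find_min' hex ⟨b, hb, rfl, hbt⟩
    refine ⟨Ideal.span {a}, ?_, by rw [tI_span σ ha, hat]⟩
    rw [MM, Finset.mem_filter]
    constructor
    · refine mem_PB_top.mpr ⟨a, ha, rfl, ?_⟩
      obtain ⟨b, hb, hbn, hbt⟩ := mem_tset.mp ht
      refine (hmin b hb hbt).trans ?_
      rwa [Ideal.absNorm_span_singleton]
    · intro d hd hda
      obtain ⟨c, hc, hct, hlt⟩ := exists_smaller ha hd hda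
      have := hmin c hc (hct.trans hat)
      omega

end realcase
end WS

namespace WS
open NumberField InfinitePlace MeasureTheory Filter Topology Module
open scoped nonZeroDivisors Classical Pointwise

section realcase2
variable {K : Type*} [Field K] [NumberField K]

lemma real_diff_le {σ : K ≃ₐ[ℚ] K} {χ : Torus K → ℂ} (hχabs : ∀ t : Torus K, ‖χ t‖ = 1)
    {C ε : ℝ} (hC0 : 0 < C) (hC : ∀ N : ℕ, ((BB K N).card : ℝ) ≤ C * N)
    (s : Finset {I : Ideal (𝓞 K) // I ≠ ⊥ ∧ σ • I = I})
    (hs : ∀ t, Disjoint t s → ‖∑ I ∈ t, 1 / (Ideal.absNorm I.1 : ℝ)‖ < ε) (N : ℕ) :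
    ‖∑ I ∈ MM σ N, χ (tI σ I) - ∑ I ∈ (PB (⊤ : Ideal (𝓞 K)) N).filter
      (fun I => ∀ D ∈ (s.image Subtype.val).filter (· ∈ DD σ), ¬ D ∣ I), χ (tI σ I)‖
      ≤ C * N * ε := by
  set F := (s.image Subtype.val).filter (· ∈ DD σ) with hF
  set S := (PB (⊤ : Ideal (𝓞 K)) N).filter (fun I => ∀ D ∈ F, ¬ D ∣ I) with hS
  have hsub : MM σ N ⊆ S := by
    intro I hI
    obtain ⟨h1, h2⟩ := Finset.mem_filter.mp hI
    exact Finset.mem_filter.mpr ⟨h1, fun D hD => h2 D (Finset.mem_filter.mp hD).2⟩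
  have e1 := Finset.sum_sdiff (f := fun I => χ (tI σ I)) hsub
  rw [← e1, sub_add_cancel_right, norm_neg]
  refine (norm_sum_le _ _).trans ?_
  simp only [hχabs, Finset.sum_const, nsmul_eq_mul, mul_one]
  set E := (BB K N).filter (fun d => d ∈ DD σ ∧ d ∉ F) with hE
  have hcov : S \ MM σ N ⊆ E.biUnion (fun d => (BB K N).filter (d ∣ ·)) := by
    intro I hI
    obtain ⟨h1, h2⟩ := Finset.mem_sdiff.mp hI
    obtain ⟨h3, h4⟩ := Finset.mem_filter.mp h1
    rw [MM, Finset.mem_filter, not_and] at h2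
    have h5 := h2 h3
    push Not at h5
    obtain ⟨d, hd, hdI⟩ := h5
    have hIB : I ∈ BB K N := (Finset.mem_filter.mp h3).1
    have hIB' := mem_BB.mp hIB
    refine Finset.mem_biUnion.mpr ⟨d, Finset.mem_filter.mpr ⟨mem_BB.mpr ⟨hd.1, ?_⟩, hd,
      fun h => h4 d h hdI⟩, Finset.mem_filter.mpr ⟨hIB, hdI⟩⟩
    exact (Nat.le_of_dvd (absNorm_pos' hIB'.1)
      (Ideal.absNorm_dvd_absNorm_of_le (Ideal.le_of_dvd hdI))).trans hIB'.2
  have hmem : ∀ d ∈ E, d ≠ ⊥ ∧ σ • d = d := fun d hd =>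
    ⟨(Finset.mem_filter.mp hd).2.1.1, (Finset.mem_filter.mp hd).2.1.2.1⟩
  calc ((S \ MM σ N).card : ℝ)
      ≤ ((E.biUnion (fun d => (BB K N).filter (d ∣ ·))).card : ℝ) := by
        exact_mod_cast Finset.card_le_card hcov
    _ ≤ ∑ d ∈ E, (((BB K N).filter (d ∣ ·)).card : ℝ) := by
        exact_mod_cast Finset.card_biUnion_le
    _ ≤ ∑ d ∈ E, C * N * (1 / Ideal.absNorm d) := by
        refine Finset.sum_le_sum fun d hd => card_dvd_BB_le hC0 hC (hmem d hd).1 N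
    _ = C * N * ∑ d ∈ E, (1 / (Ideal.absNorm d : ℝ)) := by rw [Finset.mul_sum]
    _ ≤ C * N * ε := by
        gcongr
        rw [← Finset.sum_subtype_of_mem (fun d : Ideal (𝓞 K) => 1 / (Ideal.absNorm d : ℝ)) hmem]
        refine (le_abs_self _).trans (hs _ ?_).le
        rw [Finset.disjoint_left]
        intro d hd hds
        rw [Finset.mem_subtype] at hd
        have := (Finset.mem_filter.mp hd).2
        exact this.2 (Finset.mem_filter.mpr ⟨Finset.mem_image_of_mem _ hds, this.1⟩)

lemma real_case [IsGalois ℚ K]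
    {σ : K ≃ₐ[ℚ] K} (hσ : ∀ τ : K ≃ₐ[ℚ] K, τ ∈ Subgroup.zpowers σ)
    {χ : Torus K → ℂ} (hχcont : Continuous χ)
    (hχmul : ∀ s t : Torus K, χ (s + t) = χ s * χ t)
    (hχabs : ∀ t : Torus K, ‖χ t‖ = 1)
    (hχnontriv : ∃ t : Torus K, χ t ≠ 1)
    (hd : 1 < finrank ℚ K) {w : InfinitePlace K} (hw : w.IsReal) :
    Tendsto (fun N : ℕ => (∑ t ∈ tset σ N, χ t) / (N : ℂ)) atTop (𝓝 0) := by
  obtain ⟨C, hC0, hC⟩ := exists_card_BB_le K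
  rw [Metric.tendsto_atTop]
  intro ε hε
  obtain ⟨s, hs⟩ := summable_iff_vanishing_norm.mp (summable_inv hσ hd) (ε / (2 * C)) (by positivity)
  have h1 := tendsto_Wsieve hσ hχcont hχmul hχabs hχnontriv
    ((s.image Subtype.val).filter (· ∈ DD σ)) (fun I hI => (Finset.mem_filter.mp hI).2.1)
    (J := (⊤ : Ideal (𝓞 K))) top_ne_bot
  rw [Metric.tendsto_atTop] at h1
  obtain ⟨N0, hN0⟩ := h1 (ε / 2) (by positivity)
  refine ⟨max N0 1, fun N hN => ?_⟩
  have hN1 : (0 : ℝ) < N := by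
    have : 1 ≤ N := (le_max_right _ _).trans hN
    exact_mod_cast this
  have h2 := hN0 N ((le_max_left _ _).trans hN)
  have h3 := real_diff_le hχabs hC0 hC s hs N
  rw [dist_zero_right] at h2 ⊢
  rw [sum_tset_real hσ hw]
  rw [norm_div, Complex.norm_natCast, div_lt_iff₀ hN1] at h2 ⊢
  have h4 : C * N * (ε / (2 * C)) = ε / 2 * N := by field_simp
  rw [h4] at h3
  have h5 := norm_le_norm_sub_add (∑ I ∈ MM σ N, χ (tI σ I)) (∑ I ∈ (PB (⊤ : Ideal (𝓞 K)) N).filter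
      (fun I => ∀ D ∈ (s.image Subtype.val).filter (· ∈ DD σ), ¬ D ∣ I), χ (tI σ I))
  linarith

/-- degree one: the torus is trivial -/
lemma finrank_gt_one {χ : Torus K → ℂ}
    (hχmul : ∀ s t : Torus K, χ (s + t) = χ s * χ t)
    (hχabs : ∀ t : Torus K, ‖χ t‖ = 1)
    (hχnontriv : ∃ t : Torus K, χ t ≠ 1) : 1 < finrank ℚ K := by
  by_contra hcon
  have hcard : Fintype.card (InfinitePlace K) ≤ 1 := by
    have h1 := InfinitePlace.card_eq_nrRealPlaces_add_nrComplexPlaces K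
    have h2 := InfinitePlace.card_add_two_mul_card_eq_rank K
    omega
  obtain ⟨t, ht⟩ := hχnontriv
  apply ht
  have hsub : Subsingleton (InfinitePlace K) := Fintype.card_le_one_iff_subsingleton.mp hcard
  have ht0 : t = 0 := by
    obtain ⟨x, rfl⟩ := QuotientAddGroup.mk_surjective t
    have : x = 0 := by
      apply Subtype.ext
      funext w
      have h := x.2
      change ∑ w, (x : InfinitePlace K → ℝ) w = 0 at h
      have hu : (Finset.univ : Finset (InfinitePlace K)) = {w} := by
        ext v; simp [Subsingleton.elim v w]
      rw [hu, Finset.sum_singleton] at h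
      simpa using h
    rw [this]; rfl
  have h0 := hχmul 0 0
  rw [add_zero] at h0
  have hne : χ 0 ≠ 0 := fun h => by have := hχabs 0; rw [h] at this; simp at this
  rw [ht0]
  exact (mul_eq_left₀ hne).mp h0.symm

end realcase2
end WS

namespace WS
open NumberField InfinitePlace MeasureTheory Filter Topology Module
open scoped nonZeroDivisors Classical Pointwise

section sieve
variable {K : Type*} [Field K] [NumberField K]

lemma tendsto_natdiv {m : ℕ} (hm : 0 < m) :
    Tendsto (fun N : ℕ => ((N / m : ℕ) : ℝ) / N) atTop (𝓝 (1 / m)) := by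
  have h := (tendsto_nat_floor_mul_div_atTop (R := ℝ) (a := 1 / m) (by positivity)).comp
    (tendsto_natCast_atTop_atTop (R := ℝ))
  refine h.congr fun N => ?_
  simp only [Function.comp_apply]
  rw [one_div_mul_eq_div, Nat.floor_div_natCast, Nat.floor_natCast]

lemma tendsto_comp_natdiv {u : ℕ → ℝ} {L : ℝ} (hu : Tendsto (fun N : ℕ => u N / N) atTop (𝓝 L))
    {m : ℕ} (hm : 0 < m) : Tendsto (fun N : ℕ => u (N / m) / N) atTop (𝓝 (L * (1 / m))) := by
  have hdiv : Tendsto (fun N : ℕ => N / m) atTop atTop := Nat.tendsto_div_const_atTop hm.ne'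
  refine ((hu.comp hdiv).mul (tendsto_natdiv hm)).congr' ?_
  filter_upwards [eventually_ge_atTop m] with N hN
  simp only [Function.comp_apply]
  have h1 : ((N / m : ℕ) : ℝ) ≠ 0 := by
    have := Nat.div_pos hN hm
    exact_mod_cast this.ne'
  field_simp

/-- ideals of norm at most `N` avoiding `Q` -/
noncomputable def SV (Q : Finset (Ideal (𝓞 K))) (N : ℕ) : Finset (Ideal (𝓞 K)) :=
  (BB K N).filter (fun I => ∀ P ∈ Q, ¬ P ∣ I)

lemma prime_dvd_prime {P Q : Ideal (𝓞 K)} (hP : Prime P) (hQ : Prime Q) (h : P ∣ Q) : P = Q :=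
  associated_iff_eq.mp ((hP.dvd_prime_iff_associated hQ).mp h)

lemma card_SV_insert {Q : Finset (Ideal (𝓞 K))} (hQ : ∀ P ∈ Q, Prime P) {P : Ideal (𝓞 K)}
    (hP : Prime P) (hPQ : P ∉ Q) (N : ℕ) :
    ((SV (insert P Q) N).card : ℝ) = (SV Q N).card - (SV Q (N / Ideal.absNorm P)).card := by
  have h0 : P ≠ ⊥ := hP.ne_zero
  have h1 : SV (insert P Q) N = (SV Q N).filter (fun I => ¬ P ∣ I) := by
    ext I
    simp only [SV, Finset.mem_filter, Finset.forall_mem_insert]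
    tauto
  have h2 : ((SV Q N).filter (fun I => P ∣ I)).card = (SV Q (N / Ideal.absNorm P)).card := by
    have e1 : (SV Q N).filter (fun I => P ∣ I) =
        ((BB K N).filter (P ∣ ·)).filter (fun I => ∀ P ∈ Q, ¬ P ∣ I) := by
      ext I; simp only [SV, Finset.mem_filter]; tauto
    rw [e1, Finset.card_filter, sum_dvd_BB h0, SV, Finset.card_filter]
    refine Finset.sum_congr rfl fun I _ => ?_
    congr 1
    refine propext (forall₂_congr fun R hR => not_congr ?_)
    constructor
    · intro h
      rcases (hQ R hR).dvd_or_dvd h with h | h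
      · exact absurd (prime_dvd_prime (hQ R hR) hP h ▸ hR) hPQ
      · exact h
    · exact fun h => h.mul_left _
  have h3 := Finset.card_filter_add_card_filter_not (s := SV Q N) (fun I => P ∣ I)
  rw [h1, ← h2, ← h3]
  push_cast; ring

lemma tendsto_SV (Q : Finset (Ideal (𝓞 K))) : (∀ P ∈ Q, Prime P) →
    Tendsto (fun N : ℕ => ((SV Q N).card : ℝ) / N) atTop
      (𝓝 (dedekindZeta_residue K * ∏ P ∈ Q, (1 - 1 / (Ideal.absNorm P : ℝ)))) := by
  induction Q using Finset.induction_on with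
  | empty =>
    intro _
    simpa [SV] using tendsto_card_BB K
  | insert P Q hPQ ih =>
    intro hQ
    have hP : Prime P := hQ P (Finset.mem_insert_self _ _)
    have hQ' : ∀ P ∈ Q, Prime P := fun R hR => hQ R (Finset.mem_insert_of_mem hR)
    have h1 := ih hQ'
    have h2 := h1.sub (tendsto_comp_natdiv (u := fun N => ((SV Q N).card : ℝ)) h1
      (absNorm_pos' (I := P) hP.ne_zero))
    rw [Finset.prod_insert hPQ]
    have e : dedekindZeta_residue K * ∏ P ∈ Q, (1 - 1 / (Ideal.absNorm P : ℝ)) -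
      dedekindZeta_residue K * (∏ P ∈ Q, (1 - 1 / (Ideal.absNorm P : ℝ))) * (1 / (Ideal.absNorm P : ℝ))
      = dedekindZeta_residue K * ((1 - 1 / (Ideal.absNorm P : ℝ)) * ∏ P ∈ Q, (1 - 1 / (Ideal.absNorm P : ℝ))) := by
      ring
    rw [← e]
    refine h2.congr fun N => ?_
    rw [card_SV_insert hQ' hP hPQ]; ring

lemma two_le_absNorm {P : Ideal (𝓞 K)} (hP : Prime P) : 2 ≤ Ideal.absNorm P := by
  have h1 : 0 < Ideal.absNorm P := absNorm_pos' hP.ne_zero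
  have h2 : Ideal.absNorm P ≠ 1 := by
    rw [Ne, Ideal.absNorm_eq_one_iff, ← Ideal.isUnit_iff]; exact hP.not_isUnit
  omega

lemma half_ge {P : Ideal (𝓞 K)} (hP : Prime P) : 1 / (Ideal.absNorm P : ℝ) ≤ 1 / 2 := by
  have : (2 : ℝ) ≤ Ideal.absNorm P := by exact_mod_cast two_le_absNorm hP
  exact one_div_le_one_div_of_le (by norm_num) this

lemma prod_ge (Q : Finset (Ideal (𝓞 K))) : (∀ P ∈ Q, Prime P) →
    1 - ∑ P ∈ Q, 1 / (Ideal.absNorm P : ℝ) ≤ ∏ P ∈ Q, (1 - 1 / (Ideal.absNorm P : ℝ)) ∧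
    0 < ∏ P ∈ Q, (1 - 1 / (Ideal.absNorm P : ℝ)) ∧
    ∏ P ∈ Q, (1 - 1 / (Ideal.absNorm P : ℝ)) ≤ 1 := by
  induction Q using Finset.induction_on with
  | empty => simp
  | insert P Q hPQ ih =>
    intro hQ
    have hP : Prime P := hQ P (Finset.mem_insert_self _ _)
    obtain ⟨h1, h2, h3⟩ := ih (fun R hR => hQ R (Finset.mem_insert_of_mem hR))
    rw [Finset.prod_insert hPQ, Finset.sum_insert hPQ]
    have h4 := half_ge hP
    have h5 : 0 ≤ 1 / (Ideal.absNorm P : ℝ) := by positivity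
    refine ⟨by nlinarith, mul_pos (by linarith) h2, ?_⟩
    nlinarith

/-- reciprocal norm on prime ideals of a set -/
noncomputable def xx (S : Set (Ideal (𝓞 K))) (I : Ideal (𝓞 K)) : ℝ :=
  S.indicator (fun I => 1 / (Ideal.absNorm I : ℝ)) I

lemma xx_nonneg (S : Set (Ideal (𝓞 K))) (I : Ideal (𝓞 K)) : 0 ≤ xx S I := by
  unfold xx; exact Set.indicator_nonneg (fun _ _ => by positivity) _

lemma SV_card_le {C : ℝ} (hC0 : 0 < C) (hC : ∀ N : ℕ, ((BB K N).card : ℝ) ≤ C * N) {ε : ℝ}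
    (Q : Finset (Ideal (𝓞 K))) (hQ : ∀ P ∈ Q, Prime P)
    (hs : ∀ t, Disjoint t Q → ‖∑ I ∈ t, xx {P | Prime P} I‖ < ε) (N : ℕ) :
    ((SV Q N).card : ℝ) ≤ 1 + C * N * ε := by
  set E := (BB K N).filter (fun P => Prime P ∧ P ∉ Q) with hE
  have hcov : SV Q N ⊆ {⊤} ∪ E.biUnion (fun d => (BB K N).filter (d ∣ ·)) := by
    intro I hI
    obtain ⟨h1, h2⟩ := Finset.mem_filter.mp hI
    have h1' := mem_BB.mp h1
    rw [Finset.mem_union, Finset.mem_singleton]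
    by_cases hu : I = ⊤
    · exact Or.inl hu
    · right
      obtain ⟨P, hP1, hP2⟩ := WfDvdMonoid.exists_irreducible_factor (a := I)
        (by rwa [Ideal.isUnit_iff]) h1'.1
      refine Finset.mem_biUnion.mpr ⟨P, Finset.mem_filter.mpr ⟨mem_BB.mpr ⟨hP1.ne_zero, ?_⟩,
        hP1.prime, fun h => h2 P h hP2⟩, Finset.mem_filter.mpr ⟨h1, hP2⟩⟩
      exact (Nat.le_of_dvd (absNorm_pos' h1'.1)
        (Ideal.absNorm_dvd_absNorm_of_le (Ideal.le_of_dvd hP2))).trans h1'.2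
  have hsum : ∑ d ∈ E, (1 / (Ideal.absNorm d : ℝ)) ≤ ε := by
    refine le_trans (le_of_eq ?_) ((le_abs_self _).trans (hs E ?_).le)
    · refine Finset.sum_congr rfl fun d hd => ?_
      have := (Finset.mem_filter.mp hd).2.1
      rw [xx, Set.indicator_of_mem]
      exact this
    · rw [Finset.disjoint_left]
      exact fun d hd hdQ => (Finset.mem_filter.mp hd).2.2 hdQ
  calc ((SV Q N).card : ℝ)
      ≤ (({⊤} ∪ E.biUnion (fun d => (BB K N).filter (d ∣ ·)) : Finset (Ideal (𝓞 K))).card : ℝ) := by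
        exact_mod_cast Finset.card_le_card hcov
    _ ≤ 1 + ((E.biUnion (fun d => (BB K N).filter (d ∣ ·))).card : ℝ) := by
        exact_mod_cast Finset.card_union_le _ _
    _ ≤ 1 + ∑ d ∈ E, (((BB K N).filter (d ∣ ·)).card : ℝ) := by
        gcongr
        exact_mod_cast Finset.card_biUnion_le
    _ ≤ 1 + ∑ d ∈ E, C * N * (1 / Ideal.absNorm d) := by
        gcongr with d hd
        exact card_dvd_BB_le hC0 hC (Finset.mem_filter.mp hd).2.1.ne_zero N
    _ = 1 + C * N * ∑ d ∈ E, (1 / (Ideal.absNorm d : ℝ)) := by rw [Finset.mul_sum]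
    _ ≤ 1 + C * N * ε := by gcongr

lemma not_summable_primes : ¬ Summable (xx {P : Ideal (𝓞 K) | Prime P}) := by
  intro hs
  obtain ⟨C, hC0, hC⟩ := exists_card_BB_le K
  have hκ := dedekindZeta_residue_pos K
  obtain ⟨Q0', hQ0'⟩ := summable_iff_vanishing_norm.mp hs (1 / 2) (by norm_num)
  set Q0 := Q0'.filter Prime with hQ0
  have hp0 : ∀ P ∈ Q0, Prime P := fun P hP => (Finset.mem_filter.mp hP).2
  set c0 := ∏ P ∈ Q0, (1 - 1 / (Ideal.absNorm P : ℝ)) with hc0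
  have hc0pos : 0 < c0 := (prod_ge Q0 hp0).2.1
  set ε := dedekindZeta_residue K * c0 / (4 * C) with hε
  have hεpos : 0 < ε := by positivity
  obtain ⟨Q1', hQ1'⟩ := summable_iff_vanishing_norm.mp hs ε hεpos
  set Q := Q0 ∪ Q1'.filter Prime with hQ
  have hpQ : ∀ P ∈ Q, Prime P := by
    intro P hP
    rcases Finset.mem_union.mp hP with h | h
    · exact hp0 P h
    · exact (Finset.mem_filter.mp h).2
  have zero_of : ∀ (s t : Finset (Ideal (𝓞 K))), Disjoint t (s.filter Prime) →
      ∑ I ∈ t, xx {P : Ideal (𝓞 K) | Prime P} I = ∑ I ∈ t \ s, xx {P : Ideal (𝓞 K) | Prime P} I := by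
    intro s t hd
    symm
    refine Finset.sum_subset Finset.sdiff_subset fun I hI hI' => ?_
    rw [xx, Set.indicator_of_notMem]
    intro hPr
    have h1 : I ∈ s := by
      by_contra h; exact hI' (Finset.mem_sdiff.mpr ⟨hI, h⟩)
    exact Finset.disjoint_left.mp hd hI (Finset.mem_filter.mpr ⟨h1, hPr⟩)
  have hvan : ∀ t, Disjoint t Q → ‖∑ I ∈ t, xx {P | Prime P} I‖ < ε := by
    intro t ht
    rw [zero_of Q1' t (ht.mono_right Finset.subset_union_right)]
    exact hQ1' _ Finset.sdiff_disjoint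
  have hprod : c0 / 2 ≤ ∏ P ∈ Q, (1 - 1 / (Ideal.absNorm P : ℝ)) := by
    have e1 : Q = Q0 ∪ (Q \ Q0) := by
      rw [Finset.union_sdiff_of_subset]; exact Finset.subset_union_left
    rw [e1, Finset.prod_union Finset.disjoint_sdiff, ← hc0]
    have h1 := (prod_ge (Q \ Q0) (fun P hP => hpQ P (Finset.mem_sdiff.mp hP).1)).1
    have h2 : ∑ P ∈ Q \ Q0, 1 / (Ideal.absNorm P : ℝ) ≤ 1 / 2 := by
      have h3 : ∑ P ∈ Q \ Q0, 1 / (Ideal.absNorm P : ℝ) = ∑ P ∈ Q \ Q0, xx {P | Prime P} P := by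
        refine Finset.sum_congr rfl fun P hP => ?_
        rw [xx, Set.indicator_of_mem]
        exact hpQ P (Finset.mem_sdiff.mp hP).1
      rw [h3, zero_of Q0' _ Finset.sdiff_disjoint]
      exact (le_abs_self _).trans (hQ0' _ Finset.sdiff_disjoint).le
    nlinarith
  have hlim := tendsto_SV Q hpQ
  have hlim2 : Tendsto (fun N : ℕ => 1 / (N : ℝ) + C * ε) atTop (𝓝 (0 + C * ε)) :=
    tendsto_one_div_atTop_nhds_zero_nat.add_const _
  have hle := le_of_tendsto_of_tendsto hlim hlim2 (by
    filter_upwards [eventually_gt_atTop 0] with N hN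
    have hN' : (0 : ℝ) < N := by exact_mod_cast hN
    have := SV_card_le hC0 hC Q hpQ hvan N
    rw [div_le_iff₀ hN', add_mul, one_div_mul_cancel hN'.ne']
    linarith)
  have e : C * ε = dedekindZeta_residue K * c0 / 4 := by rw [hε]; field_simp
  rw [e] at hle
  have h1 : dedekindZeta_residue K * (c0 / 2) ≤
    dedekindZeta_residue K * ∏ P ∈ Q, (1 - 1 / (Ideal.absNorm P : ℝ)) := by gcongr
  have h2 : 0 < dedekindZeta_residue K * c0 := by positivity
  linarith

end sieve
end WS

namespace WS
open NumberField InfinitePlace MeasureTheory Filter Topology Module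
open scoped nonZeroDivisors Classical Pointwise

section conj
variable {K : Type*} [Field K] [NumberField K]

lemma exists_conj [IsGalois ℚ K] {σ : K ≃ₐ[ℚ] K}
    (hσ : ∀ τ : K ≃ₐ[ℚ] K, τ ∈ Subgroup.zpowers σ)
    (hw : ¬ ∃ w : InfinitePlace K, w.IsReal) :
    ∃ c : K ≃ₐ[ℚ] K, c ≠ 1 ∧ c * c = 1 ∧ ∀ a : K, tcl σ (c a) = tcl σ a := by
  obtain ⟨w⟩ : Nonempty (InfinitePlace K) := inferInstance
  obtain ⟨s, hs⟩ := NumberField.ComplexEmbedding.exists_comp_symm_eq_of_comp_eq (k := ℚ)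
    w.embedding (ComplexEmbedding.conjugate w.embedding) (Subsingleton.elim _ _)
  have hc : ∀ x, w.embedding (s.symm x) = (starRingEnd ℂ) (w.embedding x) :=
    fun x => RingHom.congr_fun hs x
  refine ⟨s.symm, ?_, ?_, ?_⟩
  · intro h1
    apply hw
    refine ⟨w, ?_⟩
    rw [InfinitePlace.isReal_iff, ComplexEmbedding.isReal_iff]
    ext x
    have := hc x
    rw [h1] at this
    exact this.symm
  · ext x
    apply w.embedding.injective
    change w.embedding (s.symm (s.symm x)) = w.embedding x
    rw [hc, hc, Complex.conj_conj]
  · intro a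
    have hcomm : ∀ τ : K ≃ₐ[ℚ] K, τ * s.symm = s.symm * τ := by
      intro τ
      obtain ⟨m, hm⟩ := Subgroup.mem_zpowers_iff.mp (hσ τ)
      obtain ⟨n, hn⟩ := Subgroup.mem_zpowers_iff.mp (hσ s.symm)
      rw [← hm, ← hn, ← zpow_add, ← zpow_add, add_comm]
    have hwx : ∀ x, w (s.symm x) = w x := by
      intro x
      rw [← InfinitePlace.norm_embedding_eq, ← InfinitePlace.norm_embedding_eq, hc, RCLike.norm_conj]
    have : logMap K (s.symm a) = logMap K a := by
      funext w'
      obtain ⟨τ, rfl⟩ := InfinitePlace.exists_smul_eq_of_comap_eq (k := ℚ) (w := w) (w' := w')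
        (Subsingleton.elim _ _)
      have : (τ • w) (s.symm a) = (τ • w) a := by
        rw [InfinitePlace.smul_apply, InfinitePlace.smul_apply]
        have := DFunLike.congr_fun (hcomm τ.symm) a
        change τ.symm (s.symm a) = s.symm (τ.symm a) at this
        rw [this, hwx]
      simp only [logMap, this]
    rw [tcl, this, tcl]

/-- every prime ideal lies over a rational prime -/
lemma exists_rat_prime {P : Ideal (𝓞 K)} (hP : Prime P) :
    ∃ p : ℕ, p.Prime ∧ P ∣ Ideal.span {(p : 𝓞 K)} ∧ p ∣ Ideal.absNorm P ∧
      ∃ k, Ideal.absNorm P = p ^ k := by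
  have hPp : P.IsPrime := Ideal.isPrime_of_prime hP
  have h1 : ((Ideal.absNorm P : ℕ) : 𝓞 K) ∈ P := Ideal.absNorm_mem P
  have h0 : Ideal.absNorm P ≠ 0 := (absNorm_pos' hP.ne_zero).ne'
  have h2 : ∃ p ∈ (Ideal.absNorm P).primeFactorsList, ((p : ℕ) : 𝓞 K) ∈ P := by
    rw [← Nat.prod_primeFactorsList h0] at h1
    generalize (Ideal.absNorm P).primeFactorsList = l at h1
    induction l with
    | nil => simp at h1; exact absurd h1 (by rw [← Ideal.eq_top_iff_one]; exact hPp.ne_top)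
    | cons a l ih =>
      rw [List.prod_cons, Nat.cast_mul] at h1
      rcases hPp.mem_or_mem h1 with h | h
      · exact ⟨a, by simp, h⟩
      · obtain ⟨p, hp, hp'⟩ := ih h
        exact ⟨p, by simp [hp], hp'⟩
  obtain ⟨p, hp, hp'⟩ := h2
  have hpp := Nat.prime_of_mem_primeFactorsList hp
  have hd : P ∣ Ideal.span {(p : 𝓞 K)} := Ideal.dvd_span_singleton.mpr hp'
  refine ⟨p, hpp, hd, dvd_of_prime_dvd_span (n := 0) hpp hP hd, ?_⟩
  have h3 : Ideal.absNorm P ∣ p ^ finrank ℚ K := by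
    rw [← absNorm_span_nat (K := K)]; exact Ideal.absNorm_dvd_absNorm_of_le (Ideal.le_of_dvd hd)
  obtain ⟨k, -, hk⟩ := (Nat.dvd_prime_pow hpp).mp h3
  exact ⟨k, hk⟩

lemma prime_smul (τ : K ≃ₐ[ℚ] K) {P : Ideal (𝓞 K)} (hP : Prime P) : Prime (τ • P) := by
  have h0 : τ • P ≠ ⊥ := smul_ne_bot τ hP.ne_zero
  have hPp : P.IsPrime := Ideal.isPrime_of_prime hP
  have : (τ • P).IsPrime := inferInstance
  exact Ideal.prime_of_isPrime h0 this

lemma prime_conj_of_dvd [IsGalois ℚ K] {p : ℕ} {P Q : Ideal (𝓞 K)}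
    (hp : p.Prime) (hP : Prime P) (hQ : Prime Q) (h : P ∣ Ideal.span {(p : 𝓞 K)})
    (h' : Q ∣ Ideal.span {(p : 𝓞 K)}) : ∃ τ : K ≃ₐ[ℚ] K, P = τ • Q := by
  have h1 : p ∣ Ideal.absNorm Q := dvd_of_prime_dvd_span (n := 0) hp hQ h'
  have h2 : P ∣ ∏ τ : K ≃ₐ[ℚ] K, τ • Q := by
    rw [prod_smul_eq Q hQ.ne_zero]
    refine h.trans ?_
    obtain ⟨m, hm⟩ := h1
    rw [hm, Nat.cast_mul, ← Ideal.span_singleton_mul_span_singleton]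
    exact dvd_mul_right _ _
  obtain ⟨τ, -, hτ⟩ := (hP.dvd_finsetProd_iff _).mp h2
  exact ⟨τ, prime_dvd_prime hP (prime_smul τ hQ) hτ⟩

lemma summable_big [IsGalois ℚ K] :
    Summable (xx {P : Ideal (𝓞 K) | Prime P ∧ ¬ (Ideal.absNorm P).Prime}) := by
  set S := {P : Ideal (𝓞 K) | Prime P ∧ ¬ (Ideal.absNorm P).Prime} with hS
  have hs : Summable (fun P : S => 1 / (Ideal.absNorm P.1 : ℝ)) := by
    have hpp : ∀ P : S, ∃ p : ℕ, ∃ τ : K ≃ₐ[ℚ] K, p.Prime ∧ p ^ 2 ≤ Ideal.absNorm P.1 ∧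
        ∀ hp : p.Prime, P.1 = τ • (exists_prime_dvd_span K hp).choose := by
      rintro ⟨P, hP, hn⟩
      obtain ⟨p, hp, hd, hpd, k, hk⟩ := exists_rat_prime hP
      have hc := (exists_prime_dvd_span K hp).choose_spec
      obtain ⟨τ, hτ⟩ := prime_conj_of_dvd hp hP hc.1 hd hc.2
      refine ⟨p, τ, hp, ?_, fun _ => hτ⟩
      have h2 := two_le_absNorm hP
      simp only
      rw [hk]
      apply Nat.pow_le_pow_right hp.pos
      rcases k with _ | _ | k
      · rw [pow_zero] at hk; omega
      · simp at hk; exact absurd (hk ▸ hp) hn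
      · omega
    choose f g h1 h2 h3 using hpp
    have hinj : Function.Injective (fun P : S => (f P, g P)) := by
      intro P Q h
      simp only [Prod.mk.injEq] at h
      apply Subtype.ext
      have e1 := h3 P (h1 P)
      have e2 := h3 Q (h1 Q)
      rw [e1, e2, h.2]
      simp only [h.1]
    have hsum : Summable (fun x : ℕ × (K ≃ₐ[ℚ] K) => (1 / (x.1 : ℝ) ^ 2) * (1 : ℝ)) :=
      Summable.mul_of_nonneg (f := fun k : ℕ => 1 / (k : ℝ) ^ 2)
        (g := fun m : (K ≃ₐ[ℚ] K) => (1 : ℝ))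
        (Real.summable_one_div_nat_pow.mpr one_lt_two) (Summable.of_finite)
        (fun k => by simp only [Pi.zero_apply]; positivity)
        (fun k => by simp only [Pi.zero_apply]; positivity)
    refine Summable.of_nonneg_of_le (fun _ => by positivity) (fun P => ?_)
      (hsum.comp_injective hinj)
    simp only [Function.comp_apply, mul_one]
    have : (0:ℝ) < f P := by exact_mod_cast (h1 P).pos
    apply one_div_le_one_div_of_le (by positivity)
    exact_mod_cast h2 P
  exact summable_subtype_iff_indicator.mp hs

lemma finite_dvd {I : Ideal (𝓞 K)} (hI : I ≠ ⊥) : {P : Ideal (𝓞 K) | P ∣ I}.Finite := by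
  refine (Finset.finite_toSet (BB K (Ideal.absNorm I))).subset fun P hP => ?_
  rw [Finset.mem_coe, mem_BB]
  refine ⟨fun h => hI ?_, ?_⟩
  · rw [Set.mem_setOf_eq, h] at hP; exact zero_dvd_iff.mp hP
  · exact Nat.le_of_dvd (absNorm_pos' hI) (Ideal.absNorm_dvd_absNorm_of_le (Ideal.le_of_dvd hP))

lemma summable_fix [IsGalois ℚ K] {c : K ≃ₐ[ℚ] K} (hc : c ≠ 1) :
    Summable (xx {P : Ideal (𝓞 K) | Prime P ∧ c • P = P}) := by
  obtain ⟨x, hx⟩ : ∃ x : 𝓞 K, c • x ≠ x := by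
    by_contra! h
    apply hc
    ext y
    obtain ⟨a, b, hb, rfl⟩ := IsFractionRing.div_surjective (A := 𝓞 K) y
    change c (algebraMap _ _ a / algebraMap _ _ b) = (algebraMap _ _ a / algebraMap _ _ b)
    rw [map_div₀]
    have ha := congrArg (algebraMap (𝓞 K) K) (h a)
    have hb := congrArg (algebraMap (𝓞 K) K) (h b)
    rw [show c (algebraMap (𝓞 K) K a) = algebraMap (𝓞 K) K a from ha,
      show c (algebraMap (𝓞 K) K b) = algebraMap (𝓞 K) K b from hb]
  have hI : (Ideal.span {c • x - x} : Ideal (𝓞 K)) ≠ ⊥ := by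
    rw [Ne, Ideal.span_singleton_eq_bot]; exact sub_ne_zero.mpr hx
  have hfin := finite_dvd hI
  have h1 : Summable (xx {P : Ideal (𝓞 K) | P ∣ Ideal.span {c • x - x}}) := by
    refine summable_of_finite_support (hfin.subset ?_)
    intro P hP
    by_contra h
    exact hP (Set.indicator_of_notMem h _)
  refine Summable.of_nonneg_of_le (xx_nonneg _) (fun P => ?_) (h1.add (summable_big (K := K)))
  by_cases hP : P ∈ {P : Ideal (𝓞 K) | Prime P ∧ c • P = P}
  swap
  · rw [xx, Set.indicator_of_notMem hP]
    exact add_nonneg (xx_nonneg _ _) (xx_nonneg _ _)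
  by_cases hn : (Ideal.absNorm P).Prime
  swap
  · have : P ∈ {P : Ideal (𝓞 K) | Prime P ∧ ¬ (Ideal.absNorm P).Prime} := ⟨hP.1, hn⟩
    rw [xx, Set.indicator_of_mem hP]
    nth_rewrite 2 [xx]
    rw [Set.indicator_of_mem this]
    linarith [xx_nonneg {P : Ideal (𝓞 K) | P ∣ Ideal.span {c • x - x}} P]
  · have : P ∈ {P : Ideal (𝓞 K) | P ∣ Ideal.span {c • x - x}} := by
      rw [Set.mem_setOf_eq, Ideal.dvd_span_singleton]
      have : ∃ n : ℤ, x - n ∈ P := by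
        have hcard : Nat.card (𝓞 K ⧸ P) = Ideal.absNorm P := rfl
        have : Fact (Ideal.absNorm P).Prime := ⟨hn⟩
        have hne : (1 : 𝓞 K ⧸ P) ≠ 0 := by
          have : Nontrivial (𝓞 K ⧸ P) :=
            Ideal.Quotient.nontrivial_iff.mpr (Ideal.isPrime_of_prime hP.1).ne_top
          exact one_ne_zero
        obtain ⟨n, hn'⟩ := AddSubgroup.mem_zmultiples_iff.mp
          (mem_zmultiples_of_prime_card hcard hne (g' := Ideal.Quotient.mk P x))
        refine ⟨n, ?_⟩
        rw [← Ideal.Quotient.eq, ← hn']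
        simp
      obtain ⟨n, hxn⟩ := this
      have h2 : c • (x - n) ∈ c • P := Ideal.smul_mem_pointwise_smul c _ _ hxn
      rw [hP.2, smul_sub] at h2
      have h3 : c • (n : 𝓞 K) = n := by
        apply RingOfIntegers.ext
        rw [coe_smul']; simp
      rw [h3] at h2
      have := P.sub_mem h2 hxn
      simpa using this
    rw [xx, Set.indicator_of_mem hP, xx, Set.indicator_of_mem this]
    linarith [xx_nonneg {P : Ideal (𝓞 K) | Prime P ∧ ¬ (Ideal.absNorm P).Prime} P]

end conj
end WS

namespace WS
open NumberField InfinitePlace MeasureTheory Filter Topology Module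
open scoped nonZeroDivisors Classical Pointwise

section diverge
variable {K : Type*} [Field K] [NumberField K]

lemma xx_of_mem {S : Set (Ideal (𝓞 K))} {P : Ideal (𝓞 K)} (h : P ∈ S) :
    xx S P = 1 / (Ideal.absNorm P : ℝ) := Set.indicator_of_mem h _

lemma xx_of_not_mem {S : Set (Ideal (𝓞 K))} {P : Ideal (𝓞 K)} (h : P ∉ S) :
    xx S P = 0 := Set.indicator_of_notMem h _

lemma xx_le {S : Set (Ideal (𝓞 K))} {P : Ideal (𝓞 K)} {y : ℝ} (hy : 0 ≤ y)
    (h : P ∈ S → 1 / (Ideal.absNorm P : ℝ) ≤ y) : xx S P ≤ y := by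
  by_cases hP : P ∈ S
  · rw [xx_of_mem hP]; exact h hP
  · rw [xx_of_not_mem hP]; exact hy

lemma not_summable_plus [IsGalois ℚ K] {c : K ≃ₐ[ℚ] K} (hc : c ≠ 1) (hcc : c * c = 1) :
    ¬ Summable (xx {P : Ideal (𝓞 K) | Prime P ∧ WellOrderingRel P (c • P)}) := by
  intro hs
  have hcP : ∀ P : Ideal (𝓞 K), c • c • P = P := fun P => by rw [smul_smul, hcc, one_smul]
  have h2 := hs.comp_injective (i := fun P : Ideal (𝓞 K) => c • P) (MulAction.injective c)
  apply not_summable_primes (K := K)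
  refine Summable.of_nonneg_of_le (xx_nonneg _) (fun P => ?_) ((hs.add h2).add (summable_fix hc))
  have n1 := xx_nonneg {P : Ideal (𝓞 K) | Prime P ∧ WellOrderingRel P (c • P)} P
  have n2 := xx_nonneg {P : Ideal (𝓞 K) | Prime P ∧ WellOrderingRel P (c • P)} (c • P)
  have n3 := xx_nonneg {P : Ideal (𝓞 K) | Prime P ∧ c • P = P} P
  simp only [Function.comp_apply]
  refine xx_le (by linarith) fun hP => ?_
  rcases trichotomous_of (WellOrderingRel (α := Ideal (𝓞 K))) P (c • P) with h | h | h
  · rw [xx_of_mem (S := {P : Ideal (𝓞 K) | Prime P ∧ WellOrderingRel P (c • P)}) ⟨hP, h⟩]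
    linarith
  · rw [xx_of_mem (S := {P : Ideal (𝓞 K) | Prime P ∧ c • P = P}) ⟨hP, h.symm⟩]
    linarith
  · rw [xx_of_mem (S := {P : Ideal (𝓞 K) | Prime P ∧ WellOrderingRel P (c • P)}) (P := c • P)
      ⟨prime_smul c hP, by rw [hcP]; exact h⟩, absNorm_smul]
    linarith

lemma exists_good_set [IsGalois ℚ K] {c : K ≃ₐ[ℚ] K} (hc : c ≠ 1) (hcc : c * c = 1) :
    ∃ S : Set (Ideal (𝓞 K)), (∀ P ∈ S, Prime P) ∧ (∀ P ∈ S, ∀ Q ∈ S, P ≠ c • Q) ∧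
      (∀ P ∈ S, ∀ Q ∈ S, ∃ α β : 𝓞 K, α ≠ 0 ∧ β ≠ 0 ∧
        Ideal.span {α} * P = Ideal.span {β} * Q) ∧ ¬ Summable (xx S) := by
  let Sk : ClassGroup (𝓞 K) → Set (Ideal (𝓞 K)) := fun k =>
    {P | (Prime P ∧ WellOrderingRel P (c • P)) ∧
      ∃ h : P ∈ nonZeroDivisors (Ideal (𝓞 K)), ClassGroup.mk0 ⟨P, h⟩ = k}
  obtain ⟨k, hk⟩ : ∃ k, ¬ Summable (xx (Sk k)) := by
    by_contra! h
    apply not_summable_plus hc hcc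
    have hs : Summable (fun P => ∑ k, xx (Sk k) P) := summable_sum fun k _ => h k
    refine Summable.of_nonneg_of_le (xx_nonneg _) (fun P => ?_) hs
    refine xx_le (Finset.sum_nonneg fun k _ => xx_nonneg _ _) fun hP => ?_
    have h0 : P ∈ nonZeroDivisors (Ideal (𝓞 K)) := mem_nonZeroDivisors_of_ne_zero hP.1.ne_zero
    have hm : P ∈ Sk (ClassGroup.mk0 ⟨P, h0⟩) := ⟨hP, h0, rfl⟩
    rw [← xx_of_mem hm]
    exact Finset.single_le_sum (f := fun k => xx (Sk k) P) (fun k _ => xx_nonneg _ _)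
      (Finset.mem_univ _)
  refine ⟨Sk k, fun P hP => hP.1.1, ?_, ?_, hk⟩
  · rintro P hP Q hQ rfl
    have h1 := hP.1.2
    rw [smul_smul, hcc, one_smul] at h1
    exact asymm_of (WellOrderingRel (α := Ideal (𝓞 K))) h1 hQ.1.2
  · rintro P ⟨-, h, hPk⟩ Q ⟨-, h', hQk⟩
    obtain ⟨x, y, hx, hy, e⟩ := ClassGroup.mk0_eq_mk0_iff.mp (hPk.trans hQk.symm)
    exact ⟨x, y, hx, hy, e⟩

lemma exists_small_prod {S : Set (Ideal (𝓞 K))} (hS : ∀ P ∈ S, Prime P)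
    (hsum : ¬ Summable (xx S)) (s : Finset (Ideal (𝓞 K))) {ε : ℝ} (hε : 0 < ε) :
    ∃ Q : Finset (Ideal (𝓞 K)), (∀ P ∈ Q, P ∈ S) ∧ (∀ P ∈ Q, P ∉ s) ∧
      ∏ P ∈ Q, (1 - 1 / (Ideal.absNorm P : ℝ)) < ε := by
  have h1 : ¬ Summable (xx (S \ s)) := by
    intro h
    apply hsum
    have h2 : Summable (xx (s : Set (Ideal (𝓞 K)))) := by
      apply summable_of_ne_finset_zero (s := s)
      intro P hP
      exact xx_of_not_mem (by simpa using hP)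
    refine Summable.of_nonneg_of_le (xx_nonneg _) (fun P => ?_) (h.add h2)
    have n1 := xx_nonneg (S \ s) P
    have n2 := xx_nonneg (s : Set (Ideal (𝓞 K))) P
    refine xx_le (by linarith) fun hP => ?_
    by_cases hs : P ∈ s
    · rw [xx_of_mem (S := (s : Set (Ideal (𝓞 K)))) (by simpa using hs)]; linarith
    · rw [xx_of_mem (S := S \ s) ⟨hP, by simpa using hs⟩]; linarith
  have h2 : ∃ u : Finset (Ideal (𝓞 K)), -Real.log ε < ∑ P ∈ u, xx (S \ s) P := by
    by_contra! h
    exact h1 (summable_of_sum_le (xx_nonneg _) h)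
  obtain ⟨u, hu⟩ := h2
  have hQ : ∀ P ∈ u.filter (· ∈ S \ (s : Set (Ideal (𝓞 K)))), P ∈ S \ (s : Set (Ideal (𝓞 K))) :=
    fun P hP => (Finset.mem_filter.mp hP).2
  refine ⟨u.filter (· ∈ S \ (s : Set (Ideal (𝓞 K)))), fun P hP => (hQ P hP).1,
    fun P hP => by simpa using (hQ P hP).2, ?_⟩
  have h3 : ∑ P ∈ u, xx (S \ s) P =
      ∑ P ∈ u.filter (· ∈ S \ (s : Set (Ideal (𝓞 K)))), 1 / (Ideal.absNorm P : ℝ) := by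
    rw [Finset.sum_filter]
    refine Finset.sum_congr rfl fun P _ => ?_
    split_ifs with h
    · exact xx_of_mem h
    · exact xx_of_not_mem h
  rw [h3] at hu
  calc _ ≤ ∏ P ∈ u.filter (· ∈ S \ (s : Set (Ideal (𝓞 K)))),
        Real.exp (-(1 / (Ideal.absNorm P : ℝ))) := by
        refine Finset.prod_le_prod (fun P hP => ?_) fun P hP => ?_
        · have := half_ge (hS P (hQ P hP).1)
          linarith
        · have := Real.add_one_le_exp (-(1 / (Ideal.absNorm P : ℝ)))
          linarith
    _ < ε := by
        rw [← Real.exp_sum, Finset.sum_neg_distrib]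
        rw [← Real.lt_log_iff_exp_lt hε]
        linarith

/-- number of prime factors in `Q` -/
noncomputable def wt (Q : Finset (Ideal (𝓞 K))) (I : Ideal (𝓞 K)) : ℕ :=
  Multiset.countP (· ∈ Q) (UniqueFactorizationMonoid.normalizedFactors I)

lemma wt_mul (Q : Finset (Ideal (𝓞 K))) {I J : Ideal (𝓞 K)} (hI : I ≠ ⊥) (hJ : J ≠ ⊥) :
    wt Q (I * J) = wt Q I + wt Q J := by
  rw [wt, UniqueFactorizationMonoid.normalizedFactors_mul hI hJ, Multiset.countP_add]; rfl

lemma wt_prime (Q : Finset (Ideal (𝓞 K))) {P : Ideal (𝓞 K)} (hP : Prime P) :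
    wt Q P = if P ∈ Q then 1 else 0 := by
  rw [wt, UniqueFactorizationMonoid.normalizedFactors_irreducible hP.irreducible, normalize_eq,
    ← Multiset.cons_zero, Multiset.countP_cons]
  simp

lemma exists_rep {σ c : K ≃ₐ[ℚ] K} (hcc : c * c = 1)
    (hct : ∀ a : K, tcl σ (c a) = tcl σ a) {S : Set (Ideal (𝓞 K))}
    (hS : ∀ P ∈ S, Prime P) (hS2 : ∀ P ∈ S, ∀ Q ∈ S, P ≠ c • Q)
    (hS3 : ∀ P ∈ S, ∀ Q ∈ S, ∃ α β : 𝓞 K, α ≠ 0 ∧ β ≠ 0 ∧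
        Ideal.span {α} * P = Ideal.span {β} * Q)
    {Q1 Q2 : Finset (Ideal (𝓞 K))} (hQ1 : ∀ P ∈ Q1, P ∈ S) (hQ2 : ∀ P ∈ Q2, P ∈ S)
    (hdisj : ∀ P ∈ Q2, P ∉ Q1) (n : ℕ) :
    ∀ a : 𝓞 K, a ≠ 0 → wt Q1 (Ideal.span {a}) = n → ∃ b : 𝓞 K, b ≠ 0 ∧
      tcl σ (b : K) = tcl σ (a : K) ∧
      Ideal.absNorm (Ideal.span {b}) = Ideal.absNorm (Ideal.span {a}) ∧
      ((∀ P ∈ Q1, ¬ P ∣ Ideal.span {b}) ∨ (∀ P ∈ Q2.image (c • ·), ¬ P ∣ Ideal.span {b})) := by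
  induction n using Nat.strong_induction_on with
  | _ n ih =>
  intro a ha hwt
  by_cases h1 : ∀ P ∈ Q1, ¬ P ∣ Ideal.span {a}
  · exact ⟨a, ha, rfl, rfl, Or.inl h1⟩
  by_cases h2 : ∀ P ∈ Q2.image (c • ·), ¬ P ∣ Ideal.span {a}
  · exact ⟨a, ha, rfl, rfl, Or.inr h2⟩
  push Not at h1 h2
  obtain ⟨P, hP1, hPa⟩ := h1
  obtain ⟨R, hR, hRa⟩ := h2
  obtain ⟨Q, hQ2', rfl⟩ := Finset.mem_image.mp hR
  have hPS := hQ1 P hP1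
  have hQS := hQ2 Q hQ2'
  have hP := hS P hPS
  have hQ := hS Q hQS
  have hcP := prime_smul c hP
  have hcQ := prime_smul c hQ
  have ha' : (Ideal.span {a} : Ideal (𝓞 K)) ≠ ⊥ := by
    rwa [Ne, Ideal.span_singleton_eq_bot]
  obtain ⟨J, hJ⟩ : ∃ J, Ideal.span {a} = P * (c • Q) * J := by
    obtain ⟨M, hM⟩ := hRa
    rw [hM] at hPa
    rcases hP.dvd_or_dvd hPa with h | ⟨J, rfl⟩
    · exact absurd (prime_dvd_prime hP hcQ h) (hS2 P hPS Q hQS)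
    · exact ⟨J, by rw [hM]; ring⟩
  have hJ0 : J ≠ ⊥ := by
    rintro rfl
    apply ha'
    rw [hJ, ← Ideal.zero_eq_bot, mul_zero]
  obtain ⟨α, β, hα, hβ, e⟩ := hS3 P hPS Q hQS
  have e2 : Ideal.span {c • α} * (c • P) = Ideal.span {c • β} * (c • Q) := by
    rw [← smul_span', ← smul_span', ← smul_mul', e, smul_mul']
  have hinj : ∀ x : 𝓞 K, x ≠ 0 → c • x ≠ 0 := by
    intro x hx h
    apply hx
    have := congrArg (c • ·) h
    simp only [smul_smul, hcc, one_smul, smul_zero] at this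
    exact this
  have hcα := hinj α hα
  have hcβ := hinj β hβ
  have key : Ideal.span {α * (c • β) * a} = Ideal.span {β * (c • α)} * ((c • P) * Q * J) := by
    rw [← Ideal.span_singleton_mul_span_singleton, ← Ideal.span_singleton_mul_span_singleton,
      ← Ideal.span_singleton_mul_span_singleton, hJ]
    calc _ = (Ideal.span {α} * P) * (Ideal.span {c • β} * (c • Q)) * J := by ring
      _ = (Ideal.span {β} * Q) * (Ideal.span {c • α} * (c • P)) * J := by rw [e, e2]
      _ = _ := by ring
  have hdvd : (β * (c • α)) ∣ α * (c • β) * a := by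
    rw [← Ideal.span_singleton_le_span_singleton, key]
    exact Ideal.le_of_dvd (dvd_mul_right _ _)
  obtain ⟨b, hb⟩ := hdvd
  have hb0 : b ≠ 0 := by
    rintro rfl
    rw [mul_zero] at hb
    exact mul_ne_zero (mul_ne_zero hα hcβ) ha hb
  have hbI : Ideal.span {b} = (c • P) * Q * J := by
    rw [hb, ← Ideal.span_singleton_mul_span_singleton] at key
    refine mul_left_cancel₀ ?_ key
    rw [Ne, Ideal.zero_eq_bot, Ideal.span_singleton_eq_bot]
    exact mul_ne_zero hβ hcα
  have htb : tcl σ (b : K) = tcl σ (a : K) := by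
    have h0 : ∀ x : 𝓞 K, x ≠ 0 → (x : K) ≠ 0 := fun x hx =>
      RingOfIntegers.coe_ne_zero_iff.mpr hx
    have h := congrArg (fun x : 𝓞 K => tcl σ (x : K)) hb
    simp only [coe_mul'] at h
    rw [tcl_mul σ (mul_ne_zero (h0 _ hα) (h0 _ hcβ)) (h0 _ ha), tcl_mul σ (h0 _ hα) (h0 _ hcβ),
      tcl_mul σ (mul_ne_zero (h0 _ hβ) (h0 _ hcα)) (h0 _ hb0), tcl_mul σ (h0 _ hβ) (h0 _ hcα),
      coe_smul', coe_smul', hct, hct, add_comm (tcl σ (α : K))] at h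
    exact (add_left_cancel h).symm
  have hnb : Ideal.absNorm (Ideal.span {b}) = Ideal.absNorm (Ideal.span {a}) := by
    rw [hbI, hJ]
    simp only [map_mul, absNorm_smul]
  have hw : wt Q1 (Ideal.span {b}) < n := by
    rw [← hwt, hbI, hJ, wt_mul _ (mul_ne_zero hcP.ne_zero hQ.ne_zero) hJ0,
      wt_mul _ (mul_ne_zero hP.ne_zero hcQ.ne_zero) hJ0, wt_mul _ hcP.ne_zero hQ.ne_zero,
      wt_mul _ hP.ne_zero hcQ.ne_zero, wt_prime _ hcP, wt_prime _ hQ, wt_prime _ hP, if_pos hP1,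
      if_neg (hdisj Q hQ2'), if_neg (fun h => hS2 _ (hQ1 _ h) P hPS rfl)]
    omega
  obtain ⟨d, hd0, hd1, hd2, hd3⟩ := ih _ hw b hb0 rfl
  exact ⟨d, hd0, hd1.trans htb, hd2.trans hnb, hd3⟩

lemma cm_case [IsGalois ℚ K] {σ : K ≃ₐ[ℚ] K}
    (hσ : ∀ τ : K ≃ₐ[ℚ] K, τ ∈ Subgroup.zpowers σ)
    (hw : ¬ ∃ w : InfinitePlace K, w.IsReal) :
    Tendsto (fun N : ℕ => ((tset σ N).card : ℝ) / N) atTop (𝓝 0) := by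
  obtain ⟨c, hc, hcc, hct⟩ := exists_conj hσ hw
  obtain ⟨S, hS, hS2, hS3, hsum⟩ := exists_good_set hc hcc
  have hρ : 0 < dedekindZeta_residue K := dedekindZeta_residue_pos K
  rw [Metric.tendsto_atTop]
  intro ε hε
  set δ := ε / (4 * dedekindZeta_residue K) with hδ
  have hδ0 : 0 < δ := by positivity
  obtain ⟨Q1, h1, -, h1p⟩ := exists_small_prod hS hsum ∅ hδ0
  obtain ⟨Q2, h2, h12, h2p⟩ := exists_small_prod hS hsum Q1 hδ0
  have hP1 : ∀ P ∈ Q1, Prime P := fun P hP => hS P (h1 P hP)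
  have hP2 : ∀ P ∈ Q2.image (c • ·), Prime P := by
    intro P hP
    obtain ⟨Q, hQ, rfl⟩ := Finset.mem_image.mp hP
    exact prime_smul c (hS Q (h2 Q hQ))
  have hp2 : ∏ P ∈ Q2.image (c • ·), (1 - 1 / (Ideal.absNorm P : ℝ)) < δ := by
    rw [Finset.prod_image (fun x _ y _ h => MulAction.injective c h)]
    simpa only [absNorm_smul] using h2p
  have hlim := (tendsto_SV Q1 hP1).add (tendsto_SV _ hP2)
  have hlt : dedekindZeta_residue K * ∏ P ∈ Q1, (1 - 1 / (Ideal.absNorm P : ℝ)) +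
      dedekindZeta_residue K * ∏ P ∈ Q2.image (c • ·), (1 - 1 / (Ideal.absNorm P : ℝ)) < ε := by
    have e1 := mul_lt_mul_of_pos_left h1p hρ
    have e2 := mul_lt_mul_of_pos_left hp2 hρ
    have e3 : dedekindZeta_residue K * δ = ε / 4 := by rw [hδ]; field_simp
    linarith
  obtain ⟨N0, hN0⟩ := eventually_atTop.mp (hlim.eventually (gt_mem_nhds hlt))
  refine ⟨N0, fun N hN => ?_⟩
  have hb := hN0 N hN
  have hsub : tset σ N ⊆ (SV Q1 N ∪ SV (Q2.image (c • ·)) N).image (tI σ) := by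
    intro t ht
    obtain ⟨a, ha, han, rfl⟩ := mem_tset.mp ht
    obtain ⟨b, hb0, hb1, hb2, hb3⟩ := exists_rep hcc hct hS hS2 hS3 h1 h2 h12 _ a ha rfl
    refine Finset.mem_image.mpr ⟨Ideal.span {b}, ?_, ?_⟩
    · have hB : Ideal.span {b} ∈ BB K N := by
        rw [mem_BB]
        refine ⟨by rwa [Ne, Ideal.span_singleton_eq_bot], ?_⟩
        rw [hb2, Ideal.absNorm_span_singleton]; exact han
      rw [Finset.mem_union]
      rcases hb3 with h | h
      · exact Or.inl (Finset.mem_filter.mpr ⟨hB, h⟩)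
      · exact Or.inr (Finset.mem_filter.mpr ⟨hB, h⟩)
    · rw [tI_span σ hb0, hb1]
  have hcard : (tset σ N).card ≤ (SV Q1 N).card + (SV (Q2.image (c • ·)) N).card :=
    (Finset.card_le_card hsub).trans (Finset.card_image_le.trans (Finset.card_union_le _ _))
  have hcard' : ((tset σ N).card : ℝ) ≤ (SV Q1 N).card + (SV (Q2.image (c • ·)) N).card := by
    exact_mod_cast hcard
  rw [Real.dist_eq, sub_zero, abs_of_nonneg (by positivity)]
  refine lt_of_le_of_lt ?_ hb
  rw [← add_div]
  gcongr

end diverge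
end WS

/-- For every nontrivial continuous character `χ : T → 𝕋` (realized as a
continuous multiplicative map into the unit circle of `ℂ`), the Weyl sums satisfy
`Σ_{β̃ ∈ Ñ(r)} χ(β̃) = o(r)` as `r → ∞`. -/
theorem weyl_sum_little_o
    (K : Type*) [Field K] [NumberField K] [IsGalois ℚ K]
    (σ : K ≃ₐ[ℚ] K) (hσ : ∀ τ : K ≃ₐ[ℚ] K, τ ∈ Subgroup.zpowers σ)
    (χ : Torus K → ℂ) (hχcont : Continuous χ)
    (hχmul : ∀ s t : Torus K, χ (s + t) = χ s * χ t)
    (hχabs : ∀ t : Torus K, ‖χ t‖ = 1)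
    (hχnontriv : ∃ t : Torus K, χ t ≠ 1) :
    Filter.Tendsto
      (fun r : ℝ =>
        (∑ᶠ t ∈ {t : Torus K | t ∈ Ntilde K ∧ (hclass K σ t : ℝ) < r}, χ t) / (r : ℂ))
      Filter.atTop (nhds 0) := by
  have hd := WS.finrank_gt_one hχmul hχabs hχnontriv
  apply WS.final_reduction hσ χ
  by_cases hw : ∃ w : InfinitePlace K, w.IsReal
  · obtain ⟨w, hw⟩ := hw
    exact WS.real_case hσ hχcont hχmul hχabs hχnontriv hd hw
  · exact WS.of_card_tset hχabs (WS.cm_case hσ hw)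
end
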